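/- arXiv:2308.04357 — 6 statements merged into one kernel-verified Lean document; each statement's English description precedes it below -/
import Mathlib

section
/- For all positive integers s, t and n, the ordered Ramsey number satisfies R_<(K_{s+1}, P_n^t) ≤ (24 s^3)^{s t} · n. -/
/-- `χ i j` is the color of the edge `{i, j}` for `i < j`: `true` = red, `false` = blue.
A red ordered copy of the complete ordered graph `K_s`. -/
def ContainsRedClique (N s : ℕ) (χ : Fin N → Fin N → Bool) : Prop :=
  ∃ f : Fin s → Fin N, StrictMono f ∧ ∀ i j : Fin s, i < j → χ (f i) (f j) = true

/-- A blue ordered copy of `P_n^t`, the `t`-th power of the monotone path: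
vertices `1, …, n` and edges `(i, j)` with `i < j ≤ i + t`. -/
def ContainsBluePathPow (N n t : ℕ) (χ : Fin N → Fin N → Bool) : Prop :=
  ∃ f : Fin n → Fin N, StrictMono f ∧
    ∀ i j : Fin n, i < j → (j : ℕ) ≤ (i : ℕ) + t → χ (f i) (f j) = false

/-- The ordered Ramsey number `R_<(K_s, P_n^t)`: the minimum `N` such that every
red/blue coloring of the edges of the complete graph on `{1, …, N}` contains a red
copy of `K_s` or a blue copy of `P_n^t` (order-preservingly). -/
noncomputable def ordRamseyCliquePathPow (s t n : ℕ) : ℕ :=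
  sInf {N | ∀ χ : Fin N → Fin N → Bool,
    ContainsRedClique N s χ ∨ ContainsBluePathPow N n t χ}

/-!
Cut the vertices into `s n + 1` blocks. Without a red `K_{s+1}`, Ramsey's theorem gives a blue
clique in each block, which we cut into `s + 1` segments of `m = (6 s ^ 2) ^ t` vertices. For each
segment, consider the longest blue path power ending in the part of the clique that precedes it.
If this length is always less than `n`, then by pigeonhole it does not increase along some `s + 1`
blocks, when the segments are taken from right to left. Pick one segment in each of these blocks.
A blue `K_{t,t}` between two of the picked segments would extend a longest path power by `2 t`
vertices and contradict this, so by the Kővári–Sós–Turán theorem the blue densities between the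
picked segments are below `1 / (2 s ^ 2)`. A random choice of one vertex in each of them then spans
a red `K_{s+1}` with positive probability.
-/

section KovariSosTuran

open Finset

variable {α β : Type*} {r : α → β → Prop} [∀ a, DecidablePred (r a)] {A : Finset α} {B : Finset β}

theorem sum_choose_card_bipartiteBelow (r : α → β → Prop) [∀ a, DecidablePred (r a)]
    (A : Finset α) (B : Finset β) (k : ℕ) :
    ∑ y ∈ B, (#(A.bipartiteBelow r y)).choose k =
      ∑ X ∈ A.powersetCard k, #{y ∈ B | ∀ x ∈ X, r x y} := by
  classical
  have hbelow (y : β) : (A.powersetCard k).bipartiteBelow (fun X y ↦ ∀ x ∈ X, r x y) y =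
      (A.bipartiteBelow r y).powersetCard k := by
    ext X
    simp only [mem_bipartiteBelow, mem_powersetCard, subset_iff]
    grind
  simp_rw [← card_powersetCard, ← hbelow]
  exact (sum_card_bipartiteAbove_eq_sum_card_bipartiteBelow _).symm

theorem sum_sub_pow_le_of_card_common_le {k u : ℕ}
    (h : ∀ X ⊆ A, #X = k + 1 → #{y ∈ B | ∀ x ∈ X, r x y} ≤ u) :
    ∑ y ∈ B, (#(A.bipartiteBelow r y) - k) ^ (k + 1) ≤ u * #A ^ (k + 1) := by
  calc ∑ y ∈ B, (#(A.bipartiteBelow r y) - k) ^ (k + 1)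
      ≤ ∑ y ∈ B, (#(A.bipartiteBelow r y)).descFactorial (k + 1) :=
        sum_le_sum fun y _ ↦ by
          simpa only [Nat.add_sub_add_right] using Nat.pow_sub_le_descFactorial _ (k + 1)
    _ = (k + 1).factorial * ∑ X ∈ A.powersetCard (k + 1), #{y ∈ B | ∀ x ∈ X, r x y} := by
        simp_rw [← sum_choose_card_bipartiteBelow, mul_sum,
          Nat.descFactorial_eq_factorial_mul_choose]
    _ ≤ (k + 1).factorial * ((#A).choose (k + 1) * u) := by
        gcongr
        rw [← card_powersetCard, ← smul_eq_mul]
        refine sum_le_card_nsmul _ _ _ fun X hX ↦ ?_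
        rw [mem_powersetCard] at hX
        exact h X hX.1 hX.2
    _ = u * (#A).descFactorial (k + 1) := by
        rw [Nat.descFactorial_eq_factorial_mul_choose]; ring
    _ ≤ u * #A ^ (k + 1) := by
        gcongr
        exact Nat.descFactorial_le_pow _ _

theorem exists_biclique_of_lt_pow {k u : ℕ}
    (h : #B ^ k * (u * #A ^ (k + 1)) < (#(Rel.interedges r A B) - k * #B) ^ (k + 1)) :
    ∃ X ⊆ A, ∃ Y ⊆ B, #X = k + 1 ∧ #Y = u + 1 ∧ ∀ x ∈ X, ∀ y ∈ Y, r x y := by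
  by_contra! hfree
  have hcommon (X) (hX : X ⊆ A) (hXk : #X = k + 1) : #{y ∈ B | ∀ x ∈ X, r x y} ≤ u := by
    by_contra! hu
    obtain ⟨Y, hY, hYu⟩ := exists_subset_card_eq hu
    obtain ⟨x, hx, y, hy, hxy⟩ := hfree X hX Y (hY.trans (filter_subset _ _)) hXk hYu
    exact hxy ((mem_filter.mp (hY hy)).2 x hx)
  have hedges : #(Rel.interedges r A B) = ∑ y ∈ B, #(A.bipartiteBelow r y) := by
    simp only [Rel.interedges, bipartiteBelow, card_filter, sum_product_right]
  have hdeg : #(Rel.interedges r A B) - k * #B ≤ ∑ y ∈ B, (#(A.bipartiteBelow r y) - k) := by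
    rw [hedges, mul_comm, ← smul_eq_mul, ← sum_const, Nat.sub_le_iff_le_add, ← sum_add_distrib]
    exact sum_le_sum fun y _ ↦ le_tsub_add
  refine h.not_ge ?_
  calc (#(Rel.interedges r A B) - k * #B) ^ (k + 1)
      ≤ (∑ y ∈ B, (#(A.bipartiteBelow r y) - k)) ^ (k + 1) := by gcongr
    _ ≤ #B ^ k * ∑ y ∈ B, (#(A.bipartiteBelow r y) - k) ^ (k + 1) := by
        simpa using pow_sum_le_card_mul_sum_pow (s := B) (fun _ _ ↦ Nat.zero_le _) k
    _ ≤ #B ^ k * (u * #A ^ (k + 1)) := by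
        gcongr
        exact sum_sub_pow_le_of_card_common_le hcommon

theorem exists_biclique_of_le_edgeDensity {q k : ℕ} (hq : 0 < q) (hA : #A = (3 * q) ^ (k + 1))
    (hB : #B = (3 * q) ^ (k + 1)) (h : 1 / q ≤ Rel.edgeDensity r A B) :
    ∃ X ⊆ A, ∃ Y ⊆ B, #X = k + 1 ∧ #Y = k + 1 ∧ ∀ x ∈ X, ∀ y ∈ Y, r x y := by
  apply exists_biclique_of_lt_pow
  set e := #(Rel.interedges r A B)
  obtain ⟨m, hm⟩ : ∃ m, m = (3 * q) ^ (k + 1) := ⟨_, rfl⟩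
  rw [hA, hB, ← hm]
  have hm0 : 0 < m := by rw [hm]; positivity
  have hedges : m ^ 2 ≤ q * e := by
    rw [Rel.edgeDensity, hA, hB, ← hm, div_le_div_iff₀ (by positivity) (by positivity)] at h
    rw [sq, mul_comm q]
    exact_mod_cast (one_mul ((m : ℚ) * m)) ▸ h
  have hkm : 3 * q * k ≤ m := by
    rw [hm, pow_succ']
    exact Nat.mul_le_mul_left _ (Nat.lt_pow_self (by lia)).le
  -- The factor `3` in `#A` and `#B` leaves room for the subtracted term `k * #B`.
  have hexcess : 2 * m ^ 2 ≤ 3 * q * (e - k * m) := by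
    rw [Nat.mul_sub]
    apply Nat.le_sub_of_add_le
    nlinarith [Nat.mul_le_mul_right m hkm]
  refine Nat.lt_of_mul_lt_mul_left (a := m) ?_
  calc m * (m ^ k * (k * m ^ (k + 1))) = k * (m ^ 2) ^ (k + 1) := by ring
    _ < 2 ^ (k + 1) * (m ^ 2) ^ (k + 1) := by
        gcongr
        exact Nat.lt_two_pow_self.trans (Nat.pow_lt_pow_succ one_lt_two)
    _ ≤ (3 * q * (e - k * m)) ^ (k + 1) := by rw [← mul_pow]; gcongr
    _ = m * (e - k * m) ^ (k + 1) := by rw [mul_pow, hm]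

end KovariSosTuran

section Transversal

open Finset

variable {ι : Type*} {α : ι → Type*}

theorem card_filter_piFinset_rel [Fintype ι] [DecidableEq ι] (A : ∀ i, Finset (α i)) {i j : ι}
    (hij : i ≠ j) (r : α i → α j → Prop) [∀ a, DecidablePred (r a)] :
    #{f ∈ Fintype.piFinset A | r (f i) (f j)} =
      #(Rel.interedges r (A i) (A j)) * ∏ l ∈ (univ.erase j).erase i, #(A l) := by
  classical
  have hfiber (p) (hp : p ∈ Rel.interedges r (A i) (A j)) :
      #{f ∈ {f ∈ Fintype.piFinset A | r (f i) (f j)} | (f i, f j) = p} =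
        ∏ l ∈ (univ.erase j).erase i, #(A l) := by
    obtain ⟨a, b⟩ := p
    obtain ⟨ha, hb, hab⟩ := Rel.mk_mem_interedges_iff.mp hp
    have hb' : b ∈ Function.update A i {a} j := by rwa [Function.update_of_ne hij.symm]
    have hfix : {f ∈ {f ∈ Fintype.piFinset A | r (f i) (f j)} | (f i, f j) = (a, b)} =
        Fintype.piFinset (Function.update (Function.update A i {a}) j {b}) := by
      rw [Fintype.piFinset_update_singleton_eq_filter_piFinset_eq _ j hb',
        Fintype.piFinset_update_singleton_eq_filter_piFinset_eq A i ha]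
      grind
    rw [hfix, Fintype.card_piFinset, ← mul_prod_erase univ _ (mem_univ j),
      ← mul_prod_erase (univ.erase j) _ (mem_erase.mpr ⟨hij, mem_univ i⟩)]
    simp only [Function.update_self, Function.update_of_ne hij, card_singleton, one_mul]
    refine prod_congr rfl fun l hl ↦ ?_
    obtain ⟨hli, hlj, -⟩ : l ≠ i ∧ l ≠ j ∧ l ∈ univ := by simpa only [mem_erase] using hl
    rw [Function.update_of_ne hlj, Function.update_of_ne hli]
  rw [card_eq_sum_card_fiberwise (f := fun f ↦ (f i, f j)) (t := Rel.interedges r (A i) (A j)),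
    sum_congr rfl hfiber, sum_const, smul_eq_mul]
  intro f hf
  obtain ⟨hfA, hr⟩ := mem_filter.mp hf
  rw [Fintype.mem_piFinset] at hfA
  exact Rel.mk_mem_interedges_iff.mpr ⟨hfA i, hfA j, hr⟩

theorem card_filter_piFinset_rel_eq_edgeDensity_mul [Fintype ι] [DecidableEq ι]
    {A : ∀ i, Finset (α i)} (hA : ∀ i, (A i).Nonempty) {i j : ι} (hij : i ≠ j)
    (r : α i → α j → Prop) [∀ a, DecidablePred (r a)] :
    (#{f ∈ Fintype.piFinset A | r (f i) (f j)} : ℚ) =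
      Rel.edgeDensity r (A i) (A j) * #(Fintype.piFinset A) := by
  have hi : (#(A i) : ℚ) ≠ 0 := mod_cast (hA i).card_ne_zero
  have hj : (#(A j) : ℚ) ≠ 0 := mod_cast (hA j).card_ne_zero
  rw [card_filter_piFinset_rel A hij, Fintype.card_piFinset, ← mul_prod_erase univ _ (mem_univ j),
    ← mul_prod_erase (univ.erase j) _ (mem_erase.mpr ⟨hij, mem_univ i⟩), Rel.edgeDensity]
  push_cast
  rw [div_mul_eq_mul_div, eq_div_iff (mul_ne_zero hi hj)]
  ring

theorem exists_transversal [Finite ι] {A : ∀ i, Finset (α i)} (hA : ∀ i, (A i).Nonempty)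
    (r : ∀ i j, α i → α j → Prop) [∀ i j a, DecidablePred (r i j a)] {P : Finset (ι × ι)}
    (hP : ∀ p ∈ P, p.1 ≠ p.2)
    (hsum : ∑ p ∈ P, Rel.edgeDensity (r p.1 p.2) (A p.1) (A p.2) < 1) :
    ∃ f : ∀ i, α i, (∀ i, f i ∈ A i) ∧ ∀ p ∈ P, ¬ r p.1 p.2 (f p.1) (f p.2) := by
  classical
  have := Fintype.ofFinite ι
  by_contra! hcon
  have hcover : Fintype.piFinset A ⊆
      P.biUnion fun p ↦ {f ∈ Fintype.piFinset A | r p.1 p.2 (f p.1) (f p.2)} := by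
    intro f hf
    obtain ⟨p, hp, hr⟩ := hcon f (Fintype.mem_piFinset.mp hf)
    exact mem_biUnion.mpr ⟨p, hp, mem_filter.mpr ⟨hf, hr⟩⟩
  have hpos : (0 : ℚ) < #(Fintype.piFinset A) :=
    mod_cast (Fintype.piFinset_nonempty.mpr hA).card_pos
  refine hsum.not_ge (le_of_mul_le_mul_right ?_ hpos)
  calc 1 * (#(Fintype.piFinset A) : ℚ) = #(Fintype.piFinset A) := one_mul _
    _ ≤ ∑ p ∈ P, (#{f ∈ Fintype.piFinset A | r p.1 p.2 (f p.1) (f p.2)} : ℚ) := by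
        exact_mod_cast (card_le_card hcover).trans card_biUnion_le
    _ = (∑ p ∈ P, Rel.edgeDensity (r p.1 p.2) (A p.1) (A p.2)) * #(Fintype.piFinset A) := by
        rw [sum_mul]
        exact sum_congr rfl fun p hp ↦ card_filter_piFinset_rel_eq_edgeDensity_mul hA (hP p hp) _

theorem exists_isNClique_compl_of_edgeDensity_lt {V : Type*} {G : SimpleGraph V}
    [DecidableRel G.Adj] [Fintype ι] {A : ι → Finset V} (hA : ∀ i, (A i).Nonempty)
    (hdisj : Pairwise fun i k ↦ Disjoint (A i) (A k))
    {q : ℕ} (hq : Fintype.card ι * (Fintype.card ι - 1) ≤ q)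
    (hdens : Pairwise fun i k ↦ G.edgeDensity (A i) (A k) < 1 / q) :
    ∃ T, Gᶜ.IsNClique (Fintype.card ι) T := by
  classical
  have hpair {p : ι × ι} (hp : p ∈ univ.offDiag) : p.1 ≠ p.2 := (mem_offDiag.mp hp).2.2
  have hsum : ∑ p ∈ univ.offDiag, G.edgeDensity (A p.1) (A p.2) < 1 := by
    obtain hempty | hne := (univ : Finset ι).offDiag.eq_empty_or_nonempty
    · rw [hempty, sum_empty]
      exact one_pos
    · have hcard : #(univ : Finset ι).offDiag ≤ q := by
        rwa [offDiag_card, card_univ, ← Nat.mul_sub_one]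
      have hq0 : (0 : ℚ) < q := mod_cast hne.card_pos.trans_le hcard
      calc ∑ p ∈ univ.offDiag, G.edgeDensity (A p.1) (A p.2)
          < #(univ : Finset ι).offDiag • (1 / q : ℚ) :=
            sum_const (1 / q : ℚ) ▸ sum_lt_sum_of_nonempty hne fun p hp ↦ hdens (hpair hp)
        _ ≤ q • (1 / q : ℚ) := by gcongr
        _ = 1 := by rw [nsmul_eq_mul, mul_one_div_cancel hq0.ne']
  obtain ⟨f, hfA, hf⟩ := exists_transversal hA (fun _ _ ↦ G.Adj) (fun _ ↦ hpair) hsum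
  have hne {i k : ι} (hik : i ≠ k) : f i ≠ f k := fun h ↦
    disjoint_left.mp (hdisj hik) (hfA i) (h ▸ hfA k)
  refine ⟨univ.image f, Gᶜ.isNClique_iff.mpr ⟨?_, ?_⟩⟩
  · simp only [coe_image, coe_univ, Set.image_univ]
    rintro _ ⟨i, rfl⟩ _ ⟨k, rfl⟩ hik
    have hik' : i ≠ k := fun h ↦ hik (congrArg f h)
    exact (G.compl_adj _ _).mpr ⟨hik, hf (i, k) (mem_offDiag.mpr ⟨mem_univ i, mem_univ k, hik'⟩)⟩
  · rw [card_image_of_injective _ fun i k h ↦ by_contra fun hik ↦ hne hik h, card_univ]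

end Transversal

section Ramsey

open Finset

variable {V : Type*}

theorem exists_isNClique_or_isNClique_compl (G : SimpleGraph V) {a b : ℕ} {S : Finset V}
    (hS : (a + b).choose a ≤ #S) :
    (∃ T ⊆ S, G.IsNClique (a + 1) T) ∨ ∃ T ⊆ S, Gᶜ.IsNClique (b + 1) T := by
  classical
  obtain ⟨v, hv⟩ : S.Nonempty :=
    card_pos.mp ((Nat.choose_pos (Nat.le_add_right a b)).trans_le hS)
  induction a generalizing b S v with
  | zero => exact .inl ⟨{v}, by simpa using hv, by simp⟩
  | succ a iha =>
    induction b generalizing S v with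
    | zero => exact .inr ⟨{v}, by simpa using hv, by simp⟩
    | succ b ihb =>
      have hpascal : (a + 1 + (b + 1)).choose (a + 1) =
          (a + (b + 1)).choose a + (a + 1 + b).choose (a + 1) := by
        rw [← add_assoc (a + 1), Nat.choose_succ_succ]
        congr 2
        lia
      have hsplit := card_filter_add_card_filter_not (s := S.erase v) (G.Adj v)
      have herase := card_erase_add_one hv
      by_cases hnbr : (a + (b + 1)).choose a ≤ #{x ∈ S.erase v | G.Adj v x}
      · obtain ⟨w, hw⟩ := card_pos.mp ((Nat.choose_pos (by lia)).trans_le hnbr)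
        obtain ⟨T, hTS, hT⟩ | ⟨T, hTS, hT⟩ := iha hnbr w hw
        · refine .inl ⟨insert v T, ?_, hT.insert fun x hx ↦ (mem_filter.mp (hTS hx)).2⟩
          grind
        · exact .inr ⟨T, by grind, hT⟩
      · have hnon : (a + 1 + b).choose (a + 1) ≤ #{x ∈ S.erase v | ¬ G.Adj v x} := by lia
        obtain ⟨w, hw⟩ := card_pos.mp ((Nat.choose_pos (by lia)).trans_le hnon)
        obtain ⟨T, hTS, hT⟩ | ⟨T, hTS, hT⟩ := ihb hnon w hw
        · exact .inl ⟨T, by grind, hT⟩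
        · refine .inr ⟨insert v T, ?_, hT.insert fun x hx ↦ ?_⟩
          · grind
          · obtain ⟨hx, hvx⟩ := mem_filter.mp (hTS hx)
            exact (SimpleGraph.compl_adj ..).mpr ⟨(ne_of_mem_erase hx).symm, hvx⟩

theorem choose_add_le_succ_pow (a b : ℕ) : (a + b).choose a ≤ (a + 1) ^ b := by
  rw [Nat.choose_symm_add]
  exact Nat.choose_add_le_add_one_pow a b

end Ramsey

section Records

open Finset

theorem le_cons_castSucc_of_le {ι β : Type*} [Preorder β] {r : ℕ} {F : Fin (r + 1) → ι → β}
    (hF : ∀ x, Antitone fun i ↦ F i x) {j : Fin (r + 1) → ι} {x : ι}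
    (hjF : ∀ i k : Fin r, i ≤ k → F k.succ (j k.succ) ≤ F i.succ (j i.castSucc))
    (hx : F 0 (j 0) ≤ F 0 x) {i k : Fin (r + 1)} (hik : i ≤ k) :
    F k (j k) ≤ F i ((Fin.cons x j : Fin (r + 2) → ι) i.castSucc) := by
  cases i using Fin.cases with
  | zero =>
    refine le_trans ?_ hx
    cases k using Fin.cases with
    | zero => exact le_rfl
    | succ k => exact (hjF ⟨0, k.pos⟩ k (Nat.zero_le k)).trans (hF _ (Fin.zero_le _))
  | succ i =>
    cases k using Fin.cases with
    | zero => exact absurd hik (Fin.succ_pos i).not_ge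
    | succ k => exact hjF i k (Fin.succ_le_succ_iff.mp hik)

variable {ι β : Type*} [LinearOrder ι] [LinearOrder β]

theorem card_filter_forall_lt_lt_le (f : ι → β) {S : Finset ι} {t : Finset β}
    (hf : ∀ x ∈ S, f x ∈ t) : #{y ∈ S | ∀ x ∈ S, x < y → f x < f y} ≤ #t := by
  apply card_le_card_of_injOn f fun x hx ↦ hf x (mem_filter.mp hx).1
  intro x hx y hy hxy
  rw [mem_coe, mem_filter] at hx hy
  rcases lt_trichotomy x y with h | h | h
  · exact absurd hxy (hy.2 x hx.1 h).ne
  · exact h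
  · exact absurd hxy (hx.2 y hy.1 h).ne'

theorem exists_strictMono_forall_le {r : ℕ} (F : Fin r → ι → β)
    (hF : ∀ x, Antitone fun i ↦ F i x) {S : Finset ι} {t : Finset β}
    (hFt : ∀ i, ∀ x ∈ S, F i x ∈ t) (hS : r * #t < #S) :
    ∃ j : Fin (r + 1) → ι, StrictMono j ∧ (∀ i, j i ∈ S) ∧
      ∀ i k : Fin r, i ≤ k → F k (j k.succ) ≤ F i (j i.castSucc) := by
  induction r generalizing S with
  | zero =>
    obtain ⟨x, hx⟩ : S.Nonempty := card_pos.mp (by lia)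
    exact ⟨fun _ ↦ x, Subsingleton.strictMono (α := Fin 1) _, fun _ ↦ hx, fun i ↦ i.elim0⟩
  | succ r ih =>
    -- Apart from at most `#t` records of `F 0`, every element of `S` is preceded by an element at
    -- which `F 0` is at least as large. Recurse on the elements that are not records.
    have hsplit := card_filter_add_card_filter_not (s := S) (fun y ↦ ∀ x ∈ S, x < y → F 0 x < F 0 y)
    have hrecords := card_filter_forall_lt_lt_le (F 0) (hFt 0)
    obtain ⟨j, hj, hjS, hjF⟩ := ih (fun i ↦ F i.succ)
      (fun x i k hik ↦ hF x (Fin.succ_le_succ_iff.mpr hik))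
      (S := {y ∈ S | ¬ ∀ x ∈ S, x < y → F 0 x < F 0 y})
      (fun i x hx ↦ hFt _ x (mem_filter.mp hx).1) (by lia)
    have hj0 := (mem_filter.mp (hjS 0)).2
    push Not at hj0
    obtain ⟨x, hxS, hxj, hxF⟩ := hj0
    refine ⟨Fin.cons x j, Fin.strictMono_cons.mpr ⟨fun i ↦ ?_, hj⟩, ?_, ?_⟩
    · exact hxj.trans_le (hj.monotone (Fin.zero_le i))
    · exact Fin.cases hxS fun i ↦ (mem_filter.mp (hjS i)).1
    · exact fun i k hik ↦ le_cons_castSucc_of_le hF hjF hxF hik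

end Records

section Segments

open Finset

variable {V : Type*} [Preorder V] {A B X Y : Finset V}

/-- Every element of `A` is smaller than every element of `B`. -/
def Precedes (A B : Finset V) : Prop := ∀ ⦃x⦄, x ∈ A → ∀ ⦃y⦄, y ∈ B → x < y

theorem Precedes.mono (h : Precedes A B) (hX : X ⊆ A) (hY : Y ⊆ B) : Precedes X Y :=
  fun _ hx _ hy ↦ h (hX hx) (hY hy)

theorem Precedes.disjoint (h : Precedes A B) : Disjoint A B :=
  disjoint_left.mpr fun _ hx hy ↦ (h hx hy).false

theorem Precedes.biUnion_left [DecidableEq V] {ι : Type*} {I : Finset ι} {E : ι → Finset V}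
    (h : ∀ i ∈ I, Precedes (E i) B) : Precedes (I.biUnion E) B := fun _ hx _ hy ↦
  have ⟨i, hi, hxi⟩ := mem_biUnion.mp hx
  h i hi hxi hy

theorem exists_segments {V : Type*} [LinearOrder V] {S : Finset V} {k m : ℕ} (h : k * m ≤ #S) :
    ∃ B : Fin k → Finset V, (∀ i, B i ⊆ S) ∧ (∀ i, #(B i) = m) ∧
      ∀ i j, i < j → Precedes (B i) (B j) := by
  let e := S.orderEmbOfCardLe h
  refine ⟨fun i ↦ univ.image fun a ↦ e (finProdFinEquiv (i, a)), fun i ↦ ?_, fun i ↦ ?_, ?_⟩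
  · exact image_subset_iff.mpr fun a _ ↦ S.orderEmbOfCardLe_mem h _
  · rw [card_image_of_injective, card_fin]
    intro a b hab
    simpa using hab
  · intro i j hij x hx y hy
    obtain ⟨a, -, rfl⟩ := mem_image.mp hx
    obtain ⟨b, -, rfl⟩ := mem_image.mp hy
    rw [e.lt_iff_lt, Fin.lt_def, finProdFinEquiv_apply_val, finProdFinEquiv_apply_val]
    have := a.isLt
    have : m * (i + 1) ≤ m * j := Nat.mul_le_mul_left _ hij
    lia

end Segments

section PathPower

open Finset

variable {V : Type*} [LinearOrder V] {G : SimpleGraph V} {t : ℕ} {S T A X Y : Finset V}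

/-- `IsPathPow G t S` says that the vertices of `S`, listed in increasing order, span a copy of the
`t`-th power `P_n^t` of the monotone path on `n = #S` vertices. The distance of `x < y` along the
path is the number of elements of `S` in `[x, y)`. -/
def IsPathPow (G : SimpleGraph V) (t : ℕ) (S : Finset V) : Prop :=
  ∀ ⦃x⦄, x ∈ S → ∀ ⦃y⦄, y ∈ S → x < y → #{z ∈ S | x ≤ z ∧ z < y} ≤ t → G.Adj x y

/-- The last `t` elements of `S`, or all of `S` if there are fewer. These are the vertices of a path
power on `S` that have to be joined to what follows when it is prolonged. -/
def topPart (t : ℕ) (S : Finset V) : Finset V := {x ∈ S | #{z ∈ S | x ≤ z} ≤ t}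

theorem isPathPow_of_isClique (h : G.IsClique S) : IsPathPow G t S :=
  fun _ hx _ hy hxy _ ↦ h hx hy hxy.ne

theorem isPathPow_empty : IsPathPow G t ∅ := fun _ hx ↦ absurd hx (notMem_empty _)

theorem IsPathPow.union (hS : IsPathPow G t S) (hT : IsPathPow G t T) (hST : Precedes S T)
    (hadj : ∀ x ∈ topPart t S, ∀ y ∈ T, G.Adj x y) : IsPathPow G t (S ∪ T) := by
  intro x hx y hy hxy hgap
  rcases mem_union.mp hx with hx | hx <;> rcases mem_union.mp hy with hy | hy
  · exact hS hx hy hxy ((card_le_card (filter_subset_filter _ subset_union_left)).trans hgap)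
  · have htop : {z ∈ S | x ≤ z} ⊆ {z ∈ S ∪ T | x ≤ z ∧ z < y} := fun z hz ↦ by
      obtain ⟨hzS, hxz⟩ := mem_filter.mp hz
      exact mem_filter.mpr ⟨mem_union_left T hzS, hxz, hST hzS hy⟩
    exact hadj x (mem_filter.mpr ⟨hx, (card_le_card htop).trans hgap⟩) y hy
  · exact absurd hxy (hST hy hx).not_gt
  · exact hT hx hy hxy ((card_le_card (filter_subset_filter _ subset_union_right)).trans hgap)

theorem topPart_union_subset (hST : Precedes S T) (hT : t ≤ #T) : topPart t (S ∪ T) ⊆ T := by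
  intro x hx
  obtain ⟨hxST, hcard⟩ := mem_filter.mp hx
  refine (mem_union.mp hxST).resolve_left fun hxS ↦ ?_
  have hxT : x ∉ T := disjoint_left.mp hST.disjoint hxS
  have hsub : insert x T ⊆ {z ∈ S ∪ T | x ≤ z} := by
    refine insert_subset (mem_filter.mpr ⟨hxST, le_rfl⟩) fun z hz ↦ ?_
    exact mem_filter.mpr ⟨mem_union_right S hz, (hST hxS hz).le⟩
  have := (card_insert_of_notMem hxT).ge.trans ((card_le_card hsub).trans hcard)
  lia

theorem Precedes.of_topPart_subset (ht : 1 ≤ t) (hSA : topPart t S ⊆ A) (hAX : Precedes A X) :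
    Precedes S X := by
  intro x hx y hy
  have hS : S.Nonempty := ⟨x, hx⟩
  have hmax : {z ∈ S | S.max' hS ≤ z} ⊆ {S.max' hS} := fun z hz ↦
    mem_singleton.mpr ((S.le_max' z (mem_filter.mp hz).1).antisymm (mem_filter.mp hz).2)
  have htop : S.max' hS ∈ topPart t S :=
    mem_filter.mpr ⟨S.max'_mem hS, (card_le_card hmax).trans ht⟩
  exact (S.le_max' x hx).trans_lt (hAX (hSA htop) hy)

variable [Fintype V]

open scoped Classical in
/-- The largest number of vertices of a `t`-th path power in `G` whose last `t` vertices all lie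
in `A`; the other vertices are not restricted to `A`. -/
noncomputable def maxPathPow (G : SimpleGraph V) (t : ℕ) (A : Finset V) : ℕ :=
  sup {S | IsPathPow G t S ∧ topPart t S ⊆ A} card

open scoped Classical in
theorem IsPathPow.card_le_maxPathPow (hS : IsPathPow G t S) (hSA : topPart t S ⊆ A) :
    #S ≤ maxPathPow G t A :=
  le_sup (f := card) ((mem_filter_univ _).mpr ⟨hS, hSA⟩)

open scoped Classical in
theorem exists_card_eq_maxPathPow (G : SimpleGraph V) (t : ℕ) (A : Finset V) :
    ∃ S, IsPathPow G t S ∧ topPart t S ⊆ A ∧ #S = maxPathPow G t A := by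
  have hempty : topPart t (∅ : Finset V) ⊆ A := (filter_subset _ _).trans (empty_subset A)
  have hne : ({S | IsPathPow G t S ∧ topPart t S ⊆ A} : Finset (Finset V)).Nonempty :=
    ⟨∅, (mem_filter_univ _).mpr ⟨isPathPow_empty, hempty⟩⟩
  obtain ⟨S, hS, hcard⟩ := exists_mem_eq_sup _ hne card
  obtain ⟨hpath, htop⟩ := (mem_filter_univ _).mp hS
  exact ⟨S, hpath, htop, hcard.symm⟩

theorem maxPathPow_mono (G : SimpleGraph V) (t : ℕ) : Monotone (maxPathPow G t) := by
  intro A B hAB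
  obtain ⟨S, hS, hSA, hcard⟩ := exists_card_eq_maxPathPow G t A
  exact hcard ▸ hS.card_le_maxPathPow (hSA.trans hAB)

theorem maxPathPow_add_card_le (ht : 1 ≤ t) (hAX : Precedes A X)
    (hadj : ∀ a ∈ A, ∀ x ∈ X, G.Adj a x) (hX : G.IsClique X) (htX : t ≤ #X) :
    maxPathPow G t A + #X ≤ maxPathPow G t X := by
  obtain ⟨S, hS, hSA, hcard⟩ := exists_card_eq_maxPathPow G t A
  have hSX : Precedes S X := hAX.of_topPart_subset ht hSA
  rw [← hcard, ← card_union_of_disjoint hSX.disjoint]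
  have hunion := hS.union (isPathPow_of_isClique hX) hSX fun x hx ↦ hadj x (hSA hx)
  exact hunion.card_le_maxPathPow (topPart_union_subset hSX htX)

theorem maxPathPow_lt_of_biclique (ht : 1 ≤ t) (hAX : Precedes A X) (hXY : Precedes X Y)
    (hclique : G.IsClique (A ∪ X)) (hadj : ∀ x ∈ X, ∀ y ∈ Y, G.Adj x y) (hY : G.IsClique Y)
    (htX : t ≤ #X) (htY : t ≤ #Y) : maxPathPow G t A < maxPathPow G t Y := by
  have hadjAX : ∀ a ∈ A, ∀ x ∈ X, G.Adj a x := fun a ha x hx ↦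
    hclique (.inl ha) (.inr hx) (hAX ha hx).ne
  have hAX' := maxPathPow_add_card_le ht hAX hadjAX (hclique.subset Set.subset_union_right) htX
  have hXY' := maxPathPow_add_card_le ht hXY hadj hY htY
  lia

theorem edgeDensity_lt_of_maxPathPow_le [DecidableRel G.Adj] {q k : ℕ} (hq : 0 < q)
    (hAX : Precedes A X) (hXY : Precedes X Y) (hclique : G.IsClique (A ∪ X)) (hY : G.IsClique Y)
    (hXcard : #X = (3 * q) ^ (k + 1)) (hYcard : #Y = (3 * q) ^ (k + 1))
    (hle : maxPathPow G (k + 1) Y ≤ maxPathPow G (k + 1) A) :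
    G.edgeDensity X Y < 1 / q := by
  by_contra! hdense
  obtain ⟨X', hX', Y', hY', hX'card, hY'card, hadj⟩ :=
    exists_biclique_of_le_edgeDensity hq hXcard hYcard hdense
  have hlt : maxPathPow G (k + 1) A < maxPathPow G (k + 1) Y' :=
    maxPathPow_lt_of_biclique (by lia) (hAX.mono subset_rfl hX') (hXY.mono hX' hY')
      (hclique.subset (Set.union_subset_union_right _ (coe_subset.mpr hX'))) hadj
      (hY.subset (coe_subset.mpr hY')) hX'card.ge hY'card.ge
  exact (hlt.trans_le ((maxPathPow_mono G _ hY').trans hle)).false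

end PathPower

section SegmentedCliques

open Finset

variable {V : Type*} [LinearOrder V] {G : SimpleGraph V} {s m : ℕ}

/-- A clique of `G` cut into `r` segments of `m` vertices each, numbered from right to left: the
segments following `E i` in the numbering come before it in the order of `V`. -/
structure IsSegmentedClique (G : SimpleGraph V) {r : ℕ} (m : ℕ) (E : Fin r → Finset V) : Prop where
  card_eq (i : Fin r) : #(E i) = m
  precedes ⦃i k : Fin r⦄ : i < k → Precedes (E k) (E i)
  isClique : G.IsClique ((univ : Finset (Fin r)).biUnion E)

theorem exists_isSegmentedClique_of_isClique {r : ℕ} {T : Finset V} (hT : G.IsClique T)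
    (hcard : r * m ≤ #T) : ∃ E : Fin r → Finset V, IsSegmentedClique G m E ∧ ∀ i, E i ⊆ T := by
  obtain ⟨B, hBT, hBcard, hB⟩ := exists_segments hcard
  refine ⟨fun i ↦ B i.rev, ⟨fun i ↦ hBcard _, fun i k hik ↦ hB _ _ (Fin.rev_lt_rev.mpr hik), ?_⟩,
    fun i ↦ hBT _⟩
  exact hT.subset (coe_subset.mpr (biUnion_subset.mpr fun i _ ↦ hBT _))

theorem exists_isSegmentedClique_of_pow_le {r : ℕ} {S : Finset V} (hrm : 0 < r * m)
    (hS : (r * m) ^ s ≤ #S) (hfree : Gᶜ.CliqueFree (s + 1)) :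
    ∃ E : Fin r → Finset V, IsSegmentedClique G m E ∧ ∀ i, E i ⊆ S := by
  obtain ⟨a, ha⟩ := Nat.exists_eq_add_one.mpr hrm
  rw [ha] at hS
  obtain ⟨T, hTS, hT⟩ | ⟨T, -, hT⟩ :=
    exists_isNClique_or_isNClique_compl G ((choose_add_le_succ_pow a s).trans hS)
  · obtain ⟨E, hE, hET⟩ :=
      exists_isSegmentedClique_of_isClique hT.isClique (ha.trans hT.card_eq.symm).le
    exact ⟨E, hE, fun i ↦ (hET i).trans hTS⟩
  · exact absurd hT (hfree T)

theorem IsSegmentedClique.edgeDensity_lt [Fintype V] [DecidableRel G.Adj] {r q k : ℕ} (hq : 0 < q)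
    {E E' : Fin r → Finset V} (hE : IsSegmentedClique G ((3 * q) ^ (k + 1)) E)
    (hE' : IsSegmentedClique G ((3 * q) ^ (k + 1)) E') {i i' : Fin r}
    (hEE' : Precedes (E i) (E' i'))
    (hle : maxPathPow G (k + 1) (E' i') ≤ maxPathPow G (k + 1) ((Ioi i).biUnion E)) :
    G.edgeDensity (E i) (E' i') < 1 / q := by
  refine edgeDensity_lt_of_maxPathPow_le hq ?_ hEE' ?_ ?_ (hE.card_eq i) (hE'.card_eq i') hle
  · exact .biUnion_left fun l hl ↦ hE.precedes (mem_Ioi.mp hl)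
  · rw [← coe_union]
    refine hE.isClique.subset (coe_subset.mpr (union_subset ?_ ?_))
    · exact biUnion_subset_biUnion_of_subset_left _ (subset_univ _)
    · exact subset_biUnion_of_mem E (mem_univ i)
  · exact hE'.isClique.subset (coe_subset.mpr (subset_biUnion_of_mem E' (mem_univ i')))

theorem exists_strictMono_edgeDensity_lt [Finite V] [DecidableRel G.Adj] {ι : Type*}
    [LinearOrder ι] [Fintype ι] {r n k q : ℕ} (hq : 0 < q) {E : ι → Fin (r + 1) → Finset V}
    (hE : ∀ j, IsSegmentedClique G ((3 * q) ^ (k + 1)) (E j))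
    (hEE : ∀ j j', j < j' → ∀ i i', Precedes (E j i) (E j' i'))
    (hfree : ∀ S, IsPathPow G (k + 1) S → #S < n) (hcard : r * n < Fintype.card ι) :
    ∃ j : Fin (r + 1) → ι, StrictMono j ∧
      ∀ i i', i < i' → G.edgeDensity (E (j i) i) (E (j i') i') < 1 / q := by
  have := Fintype.ofFinite V
  let tail (j : ι) (i : Fin (r + 1)) : Finset V := (Ioi i).biUnion (E j)
  have htail (j) : Antitone (tail j) := fun i i' hii' ↦
    biUnion_subset_biUnion_of_subset_left _ (Ioi_subset_Ioi hii')
  have hrange (i : Fin r) (j) : maxPathPow G (k + 1) (tail j i.castSucc) ∈ range n := by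
    obtain ⟨S, hS, -, hScard⟩ := exists_card_eq_maxPathPow G (k + 1) (tail j i.castSucc)
    exact mem_range.mpr (hScard ▸ hfree S hS)
  obtain ⟨j, hj, -, hle⟩ := exists_strictMono_forall_le (S := univ)
    (fun (i : Fin r) j ↦ maxPathPow G (k + 1) (tail j i.castSucc))
    (fun j i i' hii' ↦ maxPathPow_mono G _ (htail j (Fin.castSucc_le_castSucc_iff.mpr hii')))
    (fun i j _ ↦ hrange i j) (by rwa [card_range, card_univ])
  refine ⟨j, hj, fun i i' hii' ↦ (hE _).edgeDensity_lt hq (hE _) (hEE _ _ (hj hii') _ _) ?_⟩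
  obtain ⟨i, rfl⟩ := Fin.exists_castSucc_eq.mpr (Fin.ne_last_of_lt hii')
  obtain ⟨i', rfl⟩ := Fin.exists_succ_eq.mpr (Fin.ne_zero_of_lt hii')
  refine (maxPathPow_mono G _ ?_).trans (hle i i' (Fin.castSucc_lt_succ_iff.mp hii'))
  exact subset_biUnion_of_mem (E (j i'.succ)) (mem_Ioi.mpr (Fin.castSucc_lt_succ (i := i')))

theorem exists_isNClique_compl_of_isSegmentedClique [Finite V] {ι : Type*} [LinearOrder ι]
    [Fintype ι] {n k q : ℕ} (hq : 0 < q) (hsq : (s + 1) * s ≤ q) {E : ι → Fin (s + 1) → Finset V}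
    (hE : ∀ j, IsSegmentedClique G ((3 * q) ^ (k + 1)) (E j))
    (hEE : ∀ j j', j < j' → ∀ i i', Precedes (E j i) (E j' i'))
    (hfree : ∀ S, IsPathPow G (k + 1) S → #S < n) (hcard : s * n < Fintype.card ι) :
    ∃ T, Gᶜ.IsNClique (s + 1) T := by
  classical
  obtain ⟨j, hj, hdens⟩ := exists_strictMono_edgeDensity_lt hq hE hEE hfree hcard
  have hdisj {i i' : Fin (s + 1)} (hii' : i < i') : Disjoint (E (j i) i) (E (j i') i') :=
    (hEE _ _ (hj hii') _ _).disjoint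
  rw [← Fintype.card_fin (s + 1)]
  refine exists_isNClique_compl_of_edgeDensity_lt (q := q) (A := fun i ↦ E (j i) i)
    (fun i ↦ ?_) (fun i i' hii' ↦ ?_) (by simpa using hsq) fun i i' hii' ↦ ?_
  · rw [← card_pos, (hE _).card_eq]
    positivity
  · exact hii'.lt_or_gt.elim hdisj fun h ↦ (hdisj h).symm
  · exact hii'.lt_or_gt.elim (hdens i i') fun h ↦
      (G.edgeDensity_comm _ _).trans_lt (hdens i' i h)

theorem exists_isNClique_compl_or_isPathPow [Fintype V] (G : SimpleGraph V) {k n q : ℕ}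
    (hq : 0 < q) (hsq : (s + 1) * s ≤ q)
    (hV : (s * n + 1) * ((s + 1) * (3 * q) ^ (k + 1)) ^ s ≤ Fintype.card V) :
    (∃ T, Gᶜ.IsNClique (s + 1) T) ∨ ∃ S, IsPathPow G (k + 1) S ∧ n ≤ #S := by
  by_contra! hcon
  obtain ⟨hclique, hpath⟩ := hcon
  obtain ⟨B, -, hBcard, hB⟩ := exists_segments (S := univ) (card_univ (α := V) ▸ hV)
  choose E hE hEB using fun j ↦ exists_isSegmentedClique_of_pow_le (G := G) (r := s + 1)
    (m := (3 * q) ^ (k + 1)) (by positivity) (hBcard j).ge hclique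
  obtain ⟨T, hT⟩ := exists_isNClique_compl_of_isSegmentedClique hq hsq hE
    (fun j j' hjj' i i' ↦ (hB j j' hjj').mono (hEB j i) (hEB j' i')) hpath (by simp)
  exact hclique T hT

end SegmentedCliques

section BlueGraph

open Finset

variable {N : ℕ} {χ : Fin N → Fin N → Bool}

/-- The graph of the blue edges of a coloring; only the values `χ x y` with `x < y` matter. -/
def blueGraph (χ : Fin N → Fin N → Bool) : SimpleGraph (Fin N) :=
  SimpleGraph.fromRel fun x y ↦ x < y ∧ χ x y = false

theorem blueGraph_adj_of_lt {x y : Fin N} (h : x < y) :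
    (blueGraph χ).Adj x y ↔ χ x y = false := by
  simp [blueGraph, h, h.ne, h.not_gt]

theorem containsRedClique_of_isNClique_compl {s : ℕ} {T : Finset (Fin N)}
    (hT : (blueGraph χ)ᶜ.IsNClique s T) : ContainsRedClique N s χ := by
  let e := T.orderEmbOfFin hT.card_eq
  refine ⟨e, e.strictMono, fun i j hij ↦ ?_⟩
  have hlt : e i < e j := e.strictMono hij
  have hadj : (blueGraph χ)ᶜ.Adj (e i) (e j) :=
    hT.isClique (T.orderEmbOfFin_mem _ i) (T.orderEmbOfFin_mem _ j) hlt.ne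
  rw [SimpleGraph.compl_adj, blueGraph_adj_of_lt hlt, Bool.not_eq_false] at hadj
  exact hadj.2

theorem containsBluePathPow_of_isPathPow {n t : ℕ} {S : Finset (Fin N)}
    (hS : IsPathPow (blueGraph χ) t S) (hn : n ≤ #S) : ContainsBluePathPow N n t χ := by
  let e := S.orderEmbOfFin rfl
  let c : Fin n ↪o Fin #S := Fin.castLEOrderEmb hn
  refine ⟨e ∘ c, e.strictMono.comp c.strictMono, fun i j hij hji ↦ ?_⟩
  have hlt : e (c i) < e (c j) := e.strictMono (c.strictMono hij)
  refine (blueGraph_adj_of_lt hlt).mp ?_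
  refine hS (S.orderEmbOfFin_mem rfl _) (S.orderEmbOfFin_mem rfl _) hlt ?_
  have hgap : {z ∈ S | e (c i) ≤ z ∧ z < e (c j)} ⊆ (Ico (c i) (c j)).image e := by
    intro z hz
    obtain ⟨hzS, hiz, hzj⟩ := mem_filter.mp hz
    obtain ⟨l, rfl⟩ : z ∈ Set.range e := by rwa [S.range_orderEmbOfFin]
    exact mem_image_of_mem e (mem_Ico.mpr ⟨e.le_iff_le.mp hiz, e.lt_iff_lt.mp hzj⟩)
  calc #{z ∈ S | e (c i) ≤ z ∧ z < e (c j)} ≤ #((Ico (c i) (c j)).image e) := card_le_card hgap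
    _ ≤ #(Ico (c i) (c j)) := card_image_le
    _ = (j : ℕ) - i := Fin.card_Ico _ _
    _ ≤ t := Nat.sub_le_iff_le_add'.mpr hji

end BlueGraph

theorem blockCount_mul_blockSize_le {s t n : ℕ} (hs : 1 ≤ s) (ht : 1 ≤ t) (hn : 1 ≤ n) :
    (s * n + 1) * ((s + 1) * (3 * (2 * s ^ 2)) ^ t) ^ s ≤ (24 * s ^ 3) ^ (s * t) * n := by
  have hblocks : s * n + 1 ≤ 2 ^ (s * t) * n :=
    calc s * n + 1 ≤ 2 * s * n := by nlinarith [Nat.mul_le_mul hs hn]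
      _ ≤ 2 ^ s * n := by
          gcongr
          exact Nat.mul_le_pow (by lia) s
      _ ≤ 2 ^ (s * t) * n := by
          gcongr
          · exact one_le_two
          · exact Nat.le_mul_of_pos_right s ht
  have hsegments : s + 1 ≤ (2 * s) ^ t :=
    calc s + 1 ≤ 2 * s := by lia
      _ ≤ (2 * s) ^ t := Nat.le_self_pow (by lia) _
  calc (s * n + 1) * ((s + 1) * (3 * (2 * s ^ 2)) ^ t) ^ s
      ≤ 2 ^ (s * t) * n * ((2 * s) ^ t * (3 * (2 * s ^ 2)) ^ t) ^ s := by gcongr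
    _ = (2 * (2 * s * (3 * (2 * s ^ 2)))) ^ (s * t) * n := by
        rw [← mul_pow, ← pow_mul, mul_comm t s, mul_pow 2]
        ring
    _ = (24 * s ^ 3) ^ (s * t) * n := by ring_nf

/-- `R_<(K_{s+1}, P_n^t) ≤ (24 s^3)^(s t) · n`. -/
theorem stmt0 (s t n : ℕ) (hs : 1 ≤ s) (ht : 1 ≤ t) (hn : 1 ≤ n) :
    ordRamseyCliquePathPow (s + 1) t n ≤ (24 * s ^ 3) ^ (s * t) * n := by
  refine Nat.sInf_le fun χ ↦ ?_
  obtain ⟨k, rfl⟩ := Nat.exists_eq_add_one.mpr ht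
  have hq : (s + 1) * s ≤ 2 * s ^ 2 := by nlinarith
  obtain ⟨T, hT⟩ | ⟨S, hS, hnS⟩ :=
    exists_isNClique_compl_or_isPathPow (blueGraph χ) (by positivity) hq
      ((blockCount_mul_blockSize_le hs ht hn).trans_eq (Fintype.card_fin _).symm)
  · exact .inl (containsRedClique_of_isNClique_compl hT)
  · exact .inr (containsBluePathPow_of_isPathPow hS hnS)
end

section
/- For all positive integers t and n, the ordered Ramsey number satisfies R_<(P_n^t, P_n^t) ≤ (400 t^3)^{t^2} · n^{4t−2}. -/
/-- `χ i j` is the color of the edge `{i, j}` for `i < j`: `true` = red, `false` = blue.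
A red ordered copy of `P_n^t`, the `t`-th power of the monotone path:
vertices `1, …, n` and edges `(i, j)` with `i < j ≤ i + t`. -/
def ContainsRedPathPow (N n t : ℕ) (χ : Fin N → Fin N → Bool) : Prop :=
  ∃ f : Fin n → Fin N, StrictMono f ∧
    ∀ i j : Fin n, i < j → (j : ℕ) ≤ (i : ℕ) + t → χ (f i) (f j) = true

/-- The ordered Ramsey number `R_<(P_n^t, P_n^t)`. -/
noncomputable def ordRamseyPathPowSelf (n t : ℕ) : ℕ :=
  sInf {N | ∀ χ : Fin N → Fin N → Bool,
    ContainsRedPathPow N n t χ ∨ ContainsBluePathPow N n t χ}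

/-!
Write `s + 1` for the power and suppose that neither colour contains it on `n` vertices.

* Label a set `X` of vertices, for each colour, by the length of a longest path power whose last
  vertices lie below `X` and are completely joined to `X` in that colour. Among `n ^ 2 + 1`
  consecutive intervals it suffices to choose subsets with pairwise distinct labels: each label is
  less than `n`, so two pairs of labels coincide, as in the Erdős–Szekeres theorem.
* A later set `T` has a subset whose label exceeds that of `X` in some colour, at the cost of a
  factor `2 ^ (2 * s + 1)`: at least half of `X` prefers the same colour towards `T`, and if this
  half contains a clique of size `2 * s + 1` in that colour, then averaging gives `s + 1` of its
  vertices that are completely joined to a large part of `T` and prolong the path power. A binary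
  search over the labels makes do with about `log n` such steps, which is polynomial in `n`.
* The clique exists as soon as `X` is of size linear in `n`. Otherwise Ramsey's theorem turns
  consecutive intervals of `X` into large cliques of the opposite colour. Cut each into
  `2 * s + 1` pieces; the longest path powers ending in them grow with the piece, and pigeonholing
  their lengths gives pieces between which no two `(s + 1)`-sets are completely joined in the
  opposite colour. A greedy choice of one vertex from each of these pieces is the clique.
-/

namespace OrderedRamsey

open Finset

section Selection

variable {α β : Type*}

lemma le_choose_succ_add (d s : ℕ) : d ≤ d.choose (s + 1) + s := by
  induction d with
  | zero => exact Nat.zero_le _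
  | succ d ih =>
    rw [Nat.choose_succ_succ']
    obtain hsd | hds := le_or_gt s d
    · have : 0 < d.choose s := Nat.choose_pos hsd
      omega
    · omega

lemma sum_powersetCard_card_filter_forall (R : α → β → Prop) [∀ a b, Decidable (R a b)]
    (K : Finset α) (T : Finset β) (t : ℕ) :
    ∑ Q ∈ K.powersetCard t, #{w ∈ T | ∀ v ∈ Q, R v w} =
      ∑ w ∈ T, (#{v ∈ K | R v w}).choose t := by
  refine (sum_card_bipartiteAbove_eq_sum_card_bipartiteBelow
    (fun Q w ↦ ∀ v ∈ Q, R v w)).trans (sum_congr rfl fun w _ ↦ ?_)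
  rw [← card_powersetCard]
  congr 1
  ext Q
  simp only [bipartiteBelow, mem_filter, mem_powersetCard, subset_iff]
  grind

lemma exists_powersetCard_le_card_filter_forall (R : α → β → Prop) [∀ a b, Decidable (R a b)]
    {s : ℕ} {K : Finset α} {T : Finset β} (hK : #K = 2 * s + 1)
    (hR : ∀ v ∈ K, #T ≤ 2 * #{w ∈ T | R v w}) :
    ∃ Q ∈ K.powersetCard (s + 1), #T ≤ 2 ^ (2 * s + 1) * #{w ∈ T | ∀ v ∈ Q, R v w} := by
  have hdeg : (2 * s + 1) * #T ≤ 2 * ∑ w ∈ T, #{v ∈ K | R v w} := by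
    calc (2 * s + 1) * #T = ∑ _v ∈ K, #T := by rw [sum_const, hK, smul_eq_mul]
      _ ≤ ∑ v ∈ K, 2 * #{w ∈ T | R v w} := sum_le_sum hR
      _ = 2 * ∑ w ∈ T, #{v ∈ K | R v w} := by
        rw [← mul_sum]
        exact congrArg _ (sum_card_bipartiteAbove_eq_sum_card_bipartiteBelow R)
  have hsum : #T ≤ 2 * ∑ Q ∈ K.powersetCard (s + 1), #{w ∈ T | ∀ v ∈ Q, R v w} := by
    have hchoose : ∑ w ∈ T, #{v ∈ K | R v w} ≤
        ∑ w ∈ T, (#{v ∈ K | R v w}).choose (s + 1) + #T * s := by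
      rw [← smul_eq_mul, ← sum_const, ← sum_add_distrib]
      exact sum_le_sum fun w _ ↦ le_choose_succ_add _ s
    rw [sum_powersetCard_card_filter_forall]
    nlinarith
  have hcard : #(K.powersetCard (s + 1)) ≤ 4 ^ s := by
    rw [card_powersetCard, hK, Nat.choose_symm_half]
    exact Nat.choose_middle_le_pow s
  have hne : (K.powersetCard (s + 1)).Nonempty := powersetCard_nonempty.2 (by omega)
  by_contra! hcon
  refine (sum_lt_sum_of_nonempty hne hcon).not_ge ?_
  calc ∑ _Q ∈ K.powersetCard (s + 1), #T = #(K.powersetCard (s + 1)) * #T := by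
        rw [sum_const, smul_eq_mul]
    _ ≤ 4 ^ s * (2 * ∑ Q ∈ K.powersetCard (s + 1), #{w ∈ T | ∀ v ∈ Q, R v w}) :=
        Nat.mul_le_mul hcard hsum
    _ = _ := by rw [← mul_sum, pow_succ, pow_mul, mul_assoc]; norm_num

lemma exists_isNClique_or_isNClique_compl (G : SimpleGraph α) (a b : ℕ) {U : Finset α}
    (hU : b ^ a ≤ #U) :
    (∃ K ⊆ U, G.IsNClique (a + 1) K) ∨ ∃ K ⊆ U, Gᶜ.IsNClique b K := by
  classical
  induction a generalizing b U with
  | zero =>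
    obtain ⟨v, hv⟩ := card_pos.1 (hU.trans_lt' (by simp))
    exact .inl ⟨{v}, singleton_subset_iff.2 hv, by simp [SimpleGraph.isNClique_iff]⟩
  | succ a iha =>
    induction b generalizing U with
    | zero => exact .inr ⟨∅, empty_subset U, by simp [SimpleGraph.isNClique_iff]⟩
    | succ b ihb =>
      have hpow : b ^ (a + 1) + (b + 1) ^ a ≤ (b + 1) ^ (a + 1) := by
        have := Nat.pow_le_pow_left b.le_succ a
        rw [pow_succ, pow_succ]
        nlinarith
      obtain ⟨v, hv⟩ := card_pos.1 (hU.trans_lt' (by positivity))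
      have hsplit := card_filter_add_card_filter_not (s := U.erase v) (fun w ↦ G.Adj v w)
      rw [card_erase_of_mem hv] at hsplit
      obtain hnbr | hnon : (b + 1) ^ a ≤ #{w ∈ U.erase v | G.Adj v w} ∨
          b ^ (a + 1) ≤ #{w ∈ U.erase v | ¬ G.Adj v w} := by omega
      · obtain ⟨K, hKU, hK⟩ | ⟨K, hKU, hK⟩ := iha (b + 1) hnbr
        · exact .inl ⟨insert v K, by grind, hK.insert (by grind)⟩
        · exact .inr ⟨K, by grind, hK⟩
      · obtain ⟨K, hKU, hK⟩ | ⟨K, hKU, hK⟩ := ihb hnon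
        · exact .inl ⟨K, by grind, hK⟩
        · exact .inr ⟨insert v K, by grind,
            hK.insert fun w hw ↦ (SimpleGraph.compl_adj ..).2 (by grind)⟩

lemma card_filter_two_mul_card_filter_adj_lt (G : SimpleGraph α) [DecidableRel G.Adj] {s : ℕ}
    {V W : Finset α} (hW : (s + 1) * 2 ^ (2 * s + 1) ≤ #W)
    (hVW : ∀ X ⊆ V, ∀ Y ⊆ W, #X = s + 1 → #Y = s + 1 → ∃ x ∈ X, ∃ y ∈ Y, G.Adj x y) :
    #{v ∈ V | 2 * #{w ∈ W | G.Adj v w} < #W} ≤ 2 * s := by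
  by_contra! hcon
  obtain ⟨K, hKV, hK⟩ := exists_subset_card_eq (Nat.succ_le_of_lt hcon)
  have hdense : ∀ v ∈ K, #W ≤ 2 * #{w ∈ W | ¬ G.Adj v w} := fun v hv ↦ by
    have hsparse := (mem_filter.1 (hKV hv)).2
    have hsplit := card_filter_add_card_filter_not (s := W) (fun w ↦ G.Adj v w)
    omega
  obtain ⟨X, hX, hWX⟩ := exists_powersetCard_le_card_filter_forall (fun v w ↦ ¬ G.Adj v w) hK hdense
  obtain ⟨hXK, hXc⟩ := mem_powersetCard.1 hX
  have hcommon : s + 1 ≤ #{w ∈ W | ∀ v ∈ X, ¬ G.Adj v w} :=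
    Nat.le_of_mul_le_mul_left (by linarith) (show 0 < 2 ^ (2 * s + 1) by positivity)
  obtain ⟨Y, hYW, hYc⟩ := exists_subset_card_eq hcommon
  obtain ⟨x, hx, y, hy, hxy⟩ := hVW X ((hXK.trans hKV).trans (filter_subset _ _)) Y
    (hYW.trans (filter_subset _ _)) hXc hYc
  exact (mem_filter.1 (hYW hy)).2 x hx hxy

lemma exists_mem_forall_card_le_two_mul_card_filter_adj {ι : Type*} (G : SimpleGraph α)
    [DecidableRel G.Adj] {s : ℕ} {I : Finset ι} {V : Finset α} {W : ι → Finset α}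
    (hV : #I * (2 * s) < #V) (hcard : ∀ p ∈ I, (s + 1) * 2 ^ (2 * s + 1) ≤ #(W p))
    (hVW : ∀ p ∈ I, ∀ X ⊆ V, ∀ Y ⊆ W p, #X = s + 1 → #Y = s + 1 → ∃ x ∈ X, ∃ y ∈ Y, G.Adj x y) :
    ∃ v ∈ V, ∀ p ∈ I, #(W p) ≤ 2 * #{w ∈ W p | G.Adj v w} := by
  classical
  let bad (p : ι) : Finset α := {v ∈ V | 2 * #{w ∈ W p | G.Adj v w} < #(W p)}
  have hbad : #(I.biUnion bad) ≤ #I * (2 * s) := card_biUnion_le_card_mul I bad _ fun p hp ↦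
    card_filter_two_mul_card_filter_adj_lt G (hcard p hp) (hVW p hp)
  obtain ⟨v, hvV, hv⟩ := exists_mem_notMem_of_card_lt_card (hbad.trans_lt hV)
  exact ⟨v, hvV, fun p hp ↦ not_lt.1 fun hlt ↦
    hv (mem_biUnion.2 ⟨p, hp, mem_filter.2 ⟨hvV, hlt⟩⟩)⟩

lemma exists_isNClique_transversal {ι : Type*} (G : SimpleGraph α) {s : ℕ} (I : Finset ι)
    (W : ι → Finset α) (hcard : ∀ p ∈ I, (s + 1) * 2 ^ (2 * s + 1) * 2 ^ #I ≤ #(W p))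
    (hW : ∀ p ∈ I, ∀ q ∈ I, p ≠ q → ∀ X ⊆ W p, ∀ Y ⊆ W q, #X = s + 1 → #Y = s + 1 →
      ∃ x ∈ X, ∃ y ∈ Y, G.Adj x y) :
    ∃ K, G.IsNClique #I K ∧ ∀ u ∈ K, ∃ p ∈ I, u ∈ W p := by
  classical
  induction I using Finset.induction_on generalizing W with
  | empty => exact ⟨∅, by simp [SimpleGraph.isNClique_iff]⟩
  | insert i I hi ih =>
    rw [card_insert_of_notMem hi] at hcard ⊢
    have hlt : #I * (2 * s) < #(W i) := by
      calc #I * (2 * s) ≤ 2 ^ (#I + 1) * (2 * s) := by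
            gcongr
            exact (Nat.le_succ _).trans Nat.lt_two_pow_self.le
        _ < 2 ^ (#I + 1) * 2 ^ (2 * s + 1) := by
            gcongr
            exact (Nat.lt_succ_self _).trans Nat.lt_two_pow_self
        _ ≤ (s + 1) * 2 ^ (2 * s + 1) * 2 ^ (#I + 1) := by
            rw [mul_comm, mul_assoc]
            exact Nat.le_mul_of_pos_left _ s.succ_pos
        _ ≤ #(W i) := hcard i (mem_insert_self i I)
    obtain ⟨v, hvW, hv⟩ := exists_mem_forall_card_le_two_mul_card_filter_adj G hlt
      (fun p hp ↦ (Nat.le_mul_of_pos_right _ (by positivity)).trans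
        (hcard p (mem_insert_of_mem hp)))
      (fun p hp ↦ hW i (mem_insert_self i I) p (mem_insert_of_mem hp)
        (ne_of_mem_of_not_mem hp hi).symm)
    obtain ⟨K, hK, hKW⟩ := ih (fun p ↦ {w ∈ W p | G.Adj v w})
      (fun p hp ↦ by
        have hgood := hv p hp
        have hlarge := hcard p (mem_insert_of_mem hp)
        rw [pow_succ _ #I, ← mul_assoc] at hlarge
        omega)
      (fun p hp q hq hpq X hX Y hY ↦ hW p (mem_insert_of_mem hp) q (mem_insert_of_mem hq) hpq
        X (hX.trans (filter_subset _ _)) Y (hY.trans (filter_subset _ _)))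
    refine ⟨insert v K, hK.insert fun u hu ↦ ?_, fun u hu ↦ ?_⟩
    · obtain ⟨p, -, hup⟩ := hKW u hu
      exact (mem_filter.1 hup).2
    · obtain rfl | hu := mem_insert.1 hu
      · exact ⟨i, mem_insert_self i I, hvW⟩
      · obtain ⟨p, hp, hup⟩ := hKW u hu
        exact ⟨p, mem_insert_of_mem hp, (mem_filter.1 hup).1⟩

end Selection

section Chains

variable {ι : Type*} [LinearOrder ι]

lemma card_filter_records_le {f : ι → ℕ} {n : ℕ} {I : Finset ι} (hf : ∀ i ∈ I, f i < n) :
    #{j ∈ I | ∀ i ∈ I, i < j → f i < f j} ≤ n := by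
  have hmono : StrictMonoOn f ({j ∈ I | ∀ i ∈ I, i < j → f i < f j} : Finset ι) :=
    fun i hi j hj hij ↦ (mem_filter.1 (mem_coe.1 hj)).2 i (mem_filter.1 (mem_coe.1 hi)).1 hij
  rw [← card_range n]
  exact card_le_card_of_injOn f
    (fun j hj ↦ mem_coe.2 (mem_range.2 (hf j (mem_filter.1 (mem_coe.1 hj)).1))) hmono.injOn

lemma exists_decreasing_chain {f : ℕ → ι → ℕ} {n : ℕ} (k : ℕ) {I : Finset ι}
    (hf : ∀ p, ∀ i ∈ I, f p i < n) (hI : k * n < #I) :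
    ∃ e : ℕ → ι, (∀ p ≤ k, e p ∈ I) ∧
      ∀ p < k, e (p + 1) < e p ∧ f p (e p) ≤ f p (e (p + 1)) := by
  induction k generalizing I with
  | zero =>
    obtain ⟨i, hi⟩ := card_pos.1 (by omega : 0 < #I)
    exact ⟨fun _ ↦ i, fun _ _ ↦ hi, by simp⟩
  | succ k ih =>
    have hrec := card_filter_records_le (hf k)
    have hsplit := card_filter_add_card_filter_not (s := I)
      (fun j ↦ ∀ i ∈ I, i < j → f k i < f k j)
    obtain ⟨e, heI, he⟩ := ih (I := {j ∈ I | ¬ ∀ i ∈ I, i < j → f k i < f k j})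
      (fun p i hi ↦ hf p i (mem_filter.1 hi).1) (by linarith)
    obtain ⟨i, hiI, hie, hfi⟩ : ∃ i ∈ I, i < e k ∧ f k (e k) ≤ f k i := by
      have := (mem_filter.1 (heI k le_rfl)).2
      push Not at this
      exact this
    refine ⟨Function.update e (k + 1) i, fun p hp ↦ ?_, fun p hp ↦ ?_⟩
    · grind [Function.update_apply]
    · grind [Function.update_apply]

lemma exists_decreasing_chain_of_le_succ {f : ℕ → ι → ℕ} {n k : ℕ} {I : Finset ι}
    (hf : ∀ p, ∀ i ∈ I, f p i < n) (hmono : ∀ p < k, ∀ i ∈ I, f p i ≤ f (p + 1) i)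
    (hI : k * n < #I) :
    ∃ e : ℕ → ι, (∀ p ≤ k, e p ∈ I) ∧
      ∀ p q, p ≤ q → q < k → e (q + 1) < e p ∧ f p (e p) ≤ f q (e (q + 1)) := by
  obtain ⟨e, heI, he⟩ := exists_decreasing_chain k hf hI
  refine ⟨e, heI, fun p q hpq ↦ ?_⟩
  induction q, hpq using Nat.le_induction with
  | base => exact he p
  | succ q _ ih =>
    intro hq
    obtain ⟨hlt, hle⟩ := ih (by omega)
    obtain ⟨hlt', hle'⟩ := he (q + 1) hq
    exact ⟨hlt'.trans hlt, hle.trans ((hmono q (by omega) _ (heI (q + 1) hq.le)).trans hle')⟩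

end Chains

section Labels

variable {α : Type*}

-- Binary search: each link halves the window in which the first label of an undominated `X ∈ 𝒳` can
-- lie, so `w.size` links suffice where linking to the members of `𝒳` one by one would need `w`.
lemma exists_subset_forall_lt_or_lt {r b : Finset α → ℕ} (hr : Antitone r)
    (hb : Antitone b) {D M : ℕ} (hD : 0 < D) {𝒳 : Finset (Finset α)} {T : Finset α}
    (hlink : ∀ X ∈ 𝒳, ∀ S ⊆ T, ∃ S' ⊆ S, #S ≤ D * #S' ∧ (r X < r S' ∨ b X < b S'))
    (w : ℕ) (hw : ∀ X ∈ 𝒳, r T ≤ r X → b T ≤ b X → r X < r T + w)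
    (hT : M * D ^ w.size < #T) :
    ∃ S ⊆ T, M < #S ∧ ∀ X ∈ 𝒳, r X < r S ∨ b X < b S := by
  induction w using Nat.strong_induction_on generalizing T with
  | _ w ih =>
  obtain rfl | hpos := Nat.eq_zero_or_pos w
  · exact ⟨T, Subset.rfl, by simpa using hT, fun X hX ↦ by have := hw X hX; omega⟩
  have hsize : M * D ^ w.size = D * (M * D ^ (w / 2).size) := by
    have hdiv : w.size = (w / 2).size + 1 := by
      conv_lhs => rw [← Nat.bit_bodd_div2 w]
      rw [Nat.size_bit (by rw [Nat.bit_bodd_div2]; omega), Nat.div2_val]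
    rw [hdiv, pow_succ]
    ring
  have hhalf : w / 2 < w := Nat.div_lt_self hpos one_lt_two
  suffices ∃ S ⊆ T, #T ≤ D * #S ∧
      ∀ X ∈ 𝒳, r S ≤ r X → b S ≤ b X → r X < r S + w / 2 by
    obtain ⟨S, hST, hTS, hwS⟩ := this
    obtain ⟨S', hS', hres⟩ := ih (w / 2) hhalf (T := S)
      (fun X hX S' hS' ↦ hlink X hX S' (hS'.trans hST)) hwS
      (Nat.lt_of_mul_lt_mul_left (a := D) (by omega))
    exact ⟨S', hS'.trans hST, hres⟩
  obtain hnone | hsome := {X ∈ 𝒳 | r T + w / 2 ≤ r X ∧ b T ≤ b X}.eq_empty_or_nonempty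
  · refine ⟨T, Subset.rfl, Nat.le_mul_of_pos_left _ hD, fun X hX _ hbX ↦ ?_⟩
    by_contra! hX'
    exact filter_eq_empty_iff.1 hnone hX ⟨hX', hbX⟩
  · obtain ⟨X, hX, hmax⟩ := exists_max_image _ b hsome
    obtain ⟨S, hST, hTS, hXS⟩ := hlink X (mem_filter.1 hX).1 T Subset.rfl
    have hrS := hr hST
    have hbS := hb hST
    refine ⟨S, hST, hTS, fun Y hY hrY hbY ↦ ?_⟩
    have hYw := hw Y hY (hrS.trans hrY) (hbS.trans hbY)
    have hXw := (mem_filter.1 hX).2.1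
    by_contra! hcon
    have hbYX := hmax Y (mem_filter.2 ⟨hY, by omega, hbS.trans hbY⟩)
    omega

lemma exists_card_image_prodMk_eq {r b : Finset α → ℕ} (hr : Antitone r)
    (hb : Antitone b) {D M n m : ℕ} (hD : 0 < D) (hrn : ∀ X, r X < n) {T : ℕ → Finset α}
    (hT : ∀ j < m, M * D ^ n.size < #(T j))
    (hlink : ∀ i j, i < j → ∀ X ⊆ T i, M < #X → ∀ S ⊆ T j,
      ∃ S' ⊆ S, #S ≤ D * #S' ∧ (r X < r S' ∨ b X < b S')) :
    ∃ 𝒳 : Finset (Finset α), (∀ X ∈ 𝒳, M < #X ∧ ∃ i < m, X ⊆ T i) ∧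
      #(𝒳.image fun X ↦ (r X, b X)) = m := by
  classical
  induction m with
  | zero => exact ⟨∅, by simp, by simp⟩
  | succ m ih =>
    obtain ⟨𝒳, h𝒳, hcard⟩ := ih fun j hj ↦ hT j (hj.trans m.lt_succ_self)
    have hlinkT : ∀ X ∈ 𝒳, ∀ S ⊆ T m, ∃ S' ⊆ S, #S ≤ D * #S' ∧ (r X < r S' ∨ b X < b S') :=
      fun X hX ↦ by
        obtain ⟨hMX, i, hi, hXi⟩ := h𝒳 X hX
        exact hlink i m hi X hXi hMX
    obtain ⟨S, hST, hMS, hnew⟩ := exists_subset_forall_lt_or_lt hr hb hD hlinkT n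
      (fun X _ _ _ ↦ (hrn X).trans_le (Nat.le_add_left _ _)) (hT m m.lt_succ_self)
    refine ⟨insert S 𝒳, by grind, ?_⟩
    rw [image_insert, card_insert_of_notMem, hcard]
    grind

lemma le_sq_of_forall_exists_link {r b : Finset α → ℕ} (hr : Antitone r)
    (hb : Antitone b) {D M n m : ℕ} (hD : 0 < D) (hrn : ∀ X, r X < n) (hbn : ∀ X, b X < n)
    {T : ℕ → Finset α} (hT : ∀ j < m, M * D ^ n.size < #(T j))
    (hlink : ∀ i j, i < j → ∀ X ⊆ T i, M < #X → ∀ S ⊆ T j,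
      ∃ S' ⊆ S, #S ≤ D * #S' ∧ (r X < r S' ∨ b X < b S')) :
    m ≤ n ^ 2 := by
  obtain ⟨𝒳, -, hcard⟩ := exists_card_image_prodMk_eq hr hb hD hrn hT hlink
  calc m = #(𝒳.image fun X ↦ (r X, b X)) := hcard.symm
    _ ≤ #(range n ×ˢ range n) := card_le_card (image_subset_iff.2 fun X _ ↦ by simp [hrn X, hbn X])
    _ = n ^ 2 := by rw [card_product, card_range, sq]

end Labels

section Block

variable {α : Type*} [LinearOrder α]

/-- The `i`-th interval of `b` consecutive elements of `U`, counting from `0`; it is shorter than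
`b`, or empty, once `U` is exhausted. -/
def block (U : Finset α) (b i : ℕ) : Finset α :=
  ((U.sort.drop (i * b)).take b).toFinset

lemma mem_block {U : Finset α} {b i : ℕ} {u : α} :
    u ∈ block U b i ↔
      ∃ a, ∃ h : a < U.sort.length, i * b ≤ a ∧ a < (i + 1) * b ∧ U.sort[a] = u := by
  simp only [block, List.mem_toFinset, List.mem_take_iff_getElem, List.getElem_drop,
    List.length_drop, lt_min_iff, add_one_mul]
  constructor
  · rintro ⟨c, hc, rfl⟩
    exact ⟨i * b + c, by omega, by omega, by omega, rfl⟩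
  · rintro ⟨a, ha, hia, hai, rfl⟩
    exact ⟨a - i * b, by omega, by simp only [Nat.add_sub_cancel' hia]⟩

lemma block_subset (U : Finset α) (b i : ℕ) : block U b i ⊆ U := fun u hu ↦ by
  obtain ⟨a, ha, -, -, rfl⟩ := mem_block.1 hu
  exact (mem_sort _).1 (List.getElem_mem ha)

lemma card_block {U : Finset α} {b i : ℕ} (h : (i + 1) * b ≤ #U) : #(block U b i) = b := by
  rw [block, List.toFinset_card_of_nodup, List.length_take, List.length_drop, length_sort]
  · rw [add_one_mul] at h
    omega
  · exact ((sort_nodup U _).sublist (List.drop_sublist ..)).sublist (List.take_sublist ..)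

lemma lt_of_mem_block {U : Finset α} {b i j : ℕ} (hij : i < j) :
    ∀ u ∈ block U b i, ∀ v ∈ block U b j, u < v := fun u hu v hv ↦ by
  obtain ⟨a, ha, -, hai, rfl⟩ := mem_block.1 hu
  obtain ⟨c, hc, hjc, -, rfl⟩ := mem_block.1 hv
  have : (i + 1) * b ≤ j * b := Nat.mul_le_mul_right b hij
  exact U.sortedLT_sort.getElem_lt_getElem_of_lt (by omega)

end Block

section PathPow

variable {α : Type*} [LinearOrder α] {G : SimpleGraph α} {t n : ℕ}

/-- `S`, listed increasingly, carries the `t`-th power of a monotone path in `G`: any two vertices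
of `S` with fewer than `t` vertices of `S` strictly between them are adjacent. -/
def IsPathPow (G : SimpleGraph α) (t : ℕ) (S : Finset α) : Prop :=
  ∀ u ∈ S, ∀ v ∈ S, u < v → #{w ∈ S | u < w ∧ w < v} < t → G.Adj u v

/-- `G` contains no ordered copy of the `t`-th power of the monotone path on `n` vertices. Longer
paths are excluded as well, which is the same since they contain a copy on `n` vertices. -/
def PathPowFree (G : SimpleGraph α) (t n : ℕ) : Prop :=
  ∀ S, IsPathPow G t S → #S < n

/-- The last `t` vertices of `S`, or all of them if `S` has fewer. -/
def lastVertices (t : ℕ) (S : Finset α) : Finset α :=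
  {u ∈ S | #{w ∈ S | u < w} < t}

/-- The common neighbours of `X` below all of `X`. -/
def lowerNbrs (G : SimpleGraph α) (X : Finset α) : Set α :=
  {u | ∀ w ∈ X, u < w ∧ G.Adj u w}

lemma lowerNbrs_antitone (G : SimpleGraph α) : Antitone (lowerNbrs G) :=
  fun _ _ hXY _ hu w hw ↦ hu w (hXY hw)

lemma lt_of_lastVertices_subset_lowerNbrs {S X : Finset α} (ht : 0 < t)
    (hSX : ↑(lastVertices t S) ⊆ lowerNbrs G X) : ∀ u ∈ S, ∀ v ∈ X, u < v := fun u hu v hv ↦ by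
  have hlast : S.max' ⟨u, hu⟩ ∈ lastVertices t S := by
    refine mem_filter.2 ⟨max'_mem S _, ?_⟩
    rwa [filter_false_of_mem fun w hw ↦ (le_max' S w hw).not_gt]
  exact (le_max' S u hu).trans_lt (hSX hlast v hv).1

lemma IsPathPow.union {S X : Finset α} (hS : IsPathPow G t S) (hX : G.IsClique X) (ht : 0 < t)
    (hSX : ↑(lastVertices t S) ⊆ lowerNbrs G X) : IsPathPow G t (S ∪ X) := by
  have hlt := lt_of_lastVertices_subset_lowerNbrs ht hSX
  intro u hu v hv huv hbetween
  obtain hu | hu := mem_union.1 hu <;> obtain hv | hv := mem_union.1 hv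
  · exact hS u hu v hv huv ((card_le_card (filter_subset_filter _ subset_union_left)).trans_lt
      hbetween)
  · refine (hSX (mem_filter.2 ⟨hu, lt_of_le_of_lt (card_le_card fun w hw ↦ ?_) hbetween⟩) v hv).2
    obtain ⟨hwS, huw⟩ := mem_filter.1 hw
    exact mem_filter.2 ⟨mem_union_left X hwS, huw, hlt w hwS v hv⟩
  · exact absurd huv (hlt v hv u hu).not_gt
  · exact hX hu hv huv.ne

lemma lastVertices_union_subset {S X : Finset α} (hSX : ∀ u ∈ S, ∀ v ∈ X, u < v) (htX : t ≤ #X) :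
    lastVertices t (S ∪ X) ⊆ X := fun u hu ↦ by
  obtain ⟨huSX, hcard⟩ := mem_filter.1 hu
  refine (mem_union.1 huSX).resolve_left fun huS ↦ hcard.not_ge (htX.trans (card_le_card ?_))
  exact fun w hw ↦ mem_filter.2 ⟨mem_union_right S hw, hSX u huS w hw⟩

variable {B : Set α} {X Y : Finset α}

/-- The number of vertices of a longest `t`-th power of a monotone path in `G` whose last `t`
vertices lie in `B`; it is `0` if there are arbitrarily long ones. -/
noncomputable def longestPathPowInto (G : SimpleGraph α) (t : ℕ) (B : Set α) : ℕ :=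
  sSup (card '' {S | IsPathPow G t S ∧ ↑(lastVertices t S) ⊆ B})

lemma PathPowFree.bddAbove (hG : PathPowFree G t n) (B : Set α) :
    BddAbove (card '' {S | IsPathPow G t S ∧ ↑(lastVertices t S) ⊆ B}) :=
  ⟨n, Set.forall_mem_image.2 fun S hS ↦ (hG S hS.1).le⟩

lemma PathPowFree.exists_card_eq_longestPathPowInto (hG : PathPowFree G t n) (B : Set α) :
    ∃ S, IsPathPow G t S ∧ ↑(lastVertices t S) ⊆ B ∧ #S = longestPathPowInto G t B := by
  obtain ⟨S, ⟨hS, hSB⟩, hcard⟩ := Nat.sSup_mem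
    (Set.Nonempty.image card ⟨∅, by simp [IsPathPow, lastVertices]⟩) (hG.bddAbove B)
  exact ⟨S, hS, hSB, hcard⟩

lemma PathPowFree.card_le_longestPathPowInto (hG : PathPowFree G t n) {S : Finset α}
    (hS : IsPathPow G t S) (hSB : ↑(lastVertices t S) ⊆ B) : #S ≤ longestPathPowInto G t B :=
  le_csSup (hG.bddAbove B) (Set.mem_image_of_mem card ⟨hS, hSB⟩)

lemma PathPowFree.longestPathPowInto_mono (hG : PathPowFree G t n) :
    Monotone (longestPathPowInto G t) := fun B _ hBB' ↦ by
  obtain ⟨S, hS, hSB, hcard⟩ := hG.exists_card_eq_longestPathPowInto B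
  exact hcard ▸ hG.card_le_longestPathPowInto hS (hSB.trans hBB')

lemma PathPowFree.longestPathPowInto_lt (hG : PathPowFree G t n) (B : Set α) :
    longestPathPowInto G t B < n := by
  obtain ⟨S, hS, -, hcard⟩ := hG.exists_card_eq_longestPathPowInto B
  exact hcard ▸ hG S hS

lemma PathPowFree.longestPathPowInto_add_card_le (hG : PathPowFree G t n) (hX : G.IsClique X)
    (ht : 0 < t) (htX : t ≤ #X) (hBX : B ⊆ lowerNbrs G X) :
    longestPathPowInto G t B + #X ≤ longestPathPowInto G t X := by
  obtain ⟨S, hS, hSB, hcard⟩ := hG.exists_card_eq_longestPathPowInto B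
  have hlt := lt_of_lastVertices_subset_lowerNbrs ht (hSB.trans hBX)
  have hdisj : Disjoint S X := disjoint_left.2 fun u huS huX ↦ (hlt u huS u huX).false
  rw [← hcard, ← card_union_of_disjoint hdisj]
  exact hG.card_le_longestPathPowInto (hS.union hX ht (hSB.trans hBX))
    (coe_subset.2 (lastVertices_union_subset hlt htX))

/-- The number of vertices of a longest `t`-th power of a monotone path in `G` ending in the lower
common neighbourhood of `X`. The pairs of these numbers for the two colours are the labels of the
Erdős–Szekeres argument. -/
noncomputable def reach (G : SimpleGraph α) (t : ℕ) (X : Finset α) : ℕ :=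
  longestPathPowInto G t (lowerNbrs G X)

lemma PathPowFree.reach_antitone (hG : PathPowFree G t n) : Antitone (reach G t) :=
  hG.longestPathPowInto_mono.comp_antitone (lowerNbrs_antitone G)

lemma PathPowFree.longestPathPowInto_lt_reach (hG : PathPowFree G t n) (hX : G.IsClique X)
    (ht : 0 < t) (htX : t ≤ #X) (hBX : B ⊆ lowerNbrs G X) (hXY : ↑X ⊆ lowerNbrs G Y) :
    longestPathPowInto G t B < reach G t Y := by
  have hadd := hG.longestPathPowInto_add_card_le hX ht htX hBX
  have hmono : longestPathPowInto G t X ≤ reach G t Y := hG.longestPathPowInto_mono hXY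
  omega

end PathPow

section Clique

variable {α : Type*} [LinearOrder α] {G : SimpleGraph α} {t s n k m : ℕ}

lemma block_subset_lowerNbrs_block {K : Finset α} (hK : G.IsClique K) {i j : ℕ} (hij : i < j) :
    ↑(block K m i) ⊆ lowerNbrs G (block K m j) := fun u hu w hw ↦ by
  have huw := lt_of_mem_block hij u hu w hw
  exact ⟨huw, hK (block_subset _ _ _ hu) (block_subset _ _ _ hw) huw.ne⟩

lemma PathPowFree.exists_compl_adj (hG : PathPowFree G t n) {X Y : Finset α} {B C : Set α}
    (hX : G.IsClique X) (hY : G.IsClique Y) (ht : 0 < t) (htX : t ≤ #X) (htY : t ≤ #Y)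
    (hBY : B ⊆ lowerNbrs G Y) (hYX : ∀ y ∈ Y, ∀ x ∈ X, y < x) (hXC : ↑X ⊆ C)
    (hCB : longestPathPowInto G t C ≤ longestPathPowInto G t B) :
    ∃ y ∈ Y, ∃ x ∈ X, Gᶜ.Adj y x := by
  by_contra! hcon
  have hadj : ∀ y ∈ Y, ∀ x ∈ X, G.Adj y x := fun y hy x hx ↦ by
    simpa [SimpleGraph.compl_adj, (hYX y hy x hx).ne] using hcon y hy x hx
  have hBX := hG.longestPathPowInto_lt_reach hY ht htY hBY fun y hy x hx ↦
    ⟨hYX y hy x hx, hadj y hy x hx⟩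
  refine hCB.not_gt (hBX.trans_le ?_)
  calc reach G t X ≤ reach G t X + #X := Nat.le_add_right _ _
    _ ≤ longestPathPowInto G t X := hG.longestPathPowInto_add_card_le hX ht htX le_rfl
    _ ≤ longestPathPowInto G t C := hG.longestPathPowInto_mono hXC

lemma PathPowFree.exists_compl_adj_of_subset_block (hG : PathPowFree G t n)
    {K K' X Y : Finset α} (hK : G.IsClique K) (hK' : G.IsClique K')
    (hlt : ∀ u ∈ K', ∀ v ∈ K, u < v) (ht : 0 < t) {p q : ℕ}
    (hle : longestPathPowInto G t (block K m p) ≤ longestPathPowInto G t (block K' m q))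
    (hX : X ⊆ block K m p) (hY : Y ⊆ block K' m (q + 1)) (htX : t ≤ #X) (htY : t ≤ #Y) :
    ∃ y ∈ Y, ∃ x ∈ X, Gᶜ.Adj y x := by
  have hXK := hX.trans (block_subset K m p)
  have hYK' := hY.trans (block_subset K' m (q + 1))
  have hBY : ↑(block K' m q) ⊆ lowerNbrs G Y :=
    (block_subset_lowerNbrs_block hK' q.lt_succ_self).trans (lowerNbrs_antitone G hY)
  exact hG.exists_compl_adj (hK.subset (coe_subset.2 hXK)) (hK'.subset (coe_subset.2 hYK')) ht
    htX htY hBY (fun y hy x hx ↦ hlt y (hYK' hy) x (hXK hx)) (coe_subset.2 hX) hle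

lemma PathPowFree.exists_decreasing_chain (hG : PathPowFree G t n) {K : ℕ → Finset α}
    (ht : 0 < t) (htm : t ≤ m) (hK : ∀ i ≤ k * n, G.IsClique (K i))
    (hcard : ∀ i ≤ k * n, (k + 1) * m ≤ #(K i)) :
    ∃ e : ℕ → ℕ, (∀ p ≤ k, e p ≤ k * n) ∧ ∀ p q, p ≤ q → q < k → e (q + 1) < e p ∧
      longestPathPowInto G t (block (K (e p)) m p) ≤
        longestPathPowInto G t (block (K (e (q + 1))) m q) := by
  have hmono : ∀ p < k, ∀ i ∈ range (k * n + 1),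
      longestPathPowInto G t (block (K i) m p) ≤
        longestPathPowInto G t (block (K i) m (p + 1)) := fun p hp i hi ↦ by
    have hi := Nat.lt_succ_iff.1 (mem_range.1 hi)
    have hcb : #(block (K i) m (p + 1)) = m :=
      card_block ((Nat.mul_le_mul_right m (by omega)).trans (hcard i hi))
    refine (Nat.le_add_right _ _).trans (hG.longestPathPowInto_add_card_le
      ((hK i hi).subset (coe_subset.2 (block_subset _ _ _))) ht (htm.trans hcb.ge)
      (block_subset_lowerNbrs_block (hK i hi) p.lt_succ_self))
  obtain ⟨e, heI, he⟩ := exists_decreasing_chain_of_le_succ (n := n)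
    (f := fun p i ↦ longestPathPowInto G t (block (K i) m p))
    (fun p i _ ↦ hG.longestPathPowInto_lt _) hmono (by rw [card_range]; omega)
  exact ⟨e, fun p hp ↦ Nat.lt_succ_iff.1 (mem_range.1 (heI p hp)), he⟩

lemma PathPowFree.exists_isNClique_compl_of_isClique (hG : PathPowFree G (s + 1) n)
    {K : ℕ → Finset α} (hK : ∀ i ≤ k * n, G.IsClique (K i))
    (hcard : ∀ i ≤ k * n, (k + 1) * ((s + 1) * 2 ^ (2 * s + 1) * 2 ^ (k + 1)) ≤ #(K i))
    (hlt : ∀ i j, i < j → j ≤ k * n → ∀ u ∈ K i, ∀ v ∈ K j, u < v) :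
    ∃ L, Gᶜ.IsNClique (k + 1) L ∧ ∀ u ∈ L, ∃ i ≤ k * n, u ∈ K i := by
  set m := (s + 1) * 2 ^ (2 * s + 1) * 2 ^ (k + 1) with hm
  have hsm : s + 1 ≤ m := by
    rw [hm, mul_assoc]
    exact Nat.le_mul_of_pos_right _ (by positivity)
  obtain ⟨e, hek, he⟩ := hG.exists_decreasing_chain s.succ_pos hsm hK hcard
  have hadj : ∀ p q, p < q → q ≤ k → ∀ X ⊆ block (K (e p)) m p, ∀ Y ⊆ block (K (e q)) m q,
      #X = s + 1 → #Y = s + 1 → ∃ y ∈ Y, ∃ x ∈ X, Gᶜ.Adj y x := by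
    intro p q hpq hqk X hX Y hY hXc hYc
    obtain ⟨q, rfl⟩ : ∃ r, q = r + 1 := ⟨q - 1, by omega⟩
    obtain ⟨hee, hle⟩ := he p q (by omega) hqk
    exact hG.exists_compl_adj_of_subset_block (hK _ (hek p (by omega))) (hK _ (hek _ hqk))
      (hlt _ _ hee (hek p (by omega))) s.succ_pos hle hX hY hXc.ge hYc.ge
  obtain ⟨L, hL, hLW⟩ := exists_isNClique_transversal Gᶜ (s := s) (range (k + 1))
    (fun p ↦ block (K (e p)) m p)
    (fun p hp ↦ by
      rw [card_range, card_block]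
      exact (Nat.mul_le_mul_right m (mem_range.1 hp)).trans
        (hcard _ (hek p (Nat.lt_succ_iff.1 (mem_range.1 hp)))))
    (fun p hp q hq hpq X hX Y hY hXc hYc ↦ by
      rw [mem_range, Nat.lt_succ_iff] at hp hq
      obtain hpq | hqp := hpq.lt_or_gt
      · obtain ⟨y, hy, x, hx, hyx⟩ := hadj p q hpq hq X hX Y hY hXc hYc
        exact ⟨x, hx, y, hy, hyx.symm⟩
      · exact hadj q p hqp hp Y hY X hX hYc hXc)
  rw [card_range] at hL
  refine ⟨L, hL, fun u hu ↦ ?_⟩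
  obtain ⟨p, hp, hup⟩ := hLW u hu
  exact ⟨e p, hek p (Nat.lt_succ_iff.1 (mem_range.1 hp)), block_subset _ _ _ hup⟩

/-- A number of vertices, linear in `n`, that guarantees a `(k + 1)`-clique in the complement of a
graph without the `(s + 1)`-st power of the monotone path on `n` vertices: it makes room for
`k * n + 1` intervals, each of which Ramsey's theorem treats separately. -/
def cliqueThreshold (s k n : ℕ) : ℕ :=
  (k * n + 1) * ((k + 1) * ((s + 1) * 2 ^ (2 * s + 1) * 2 ^ (k + 1))) ^ k

lemma PathPowFree.exists_isNClique_compl (hG : PathPowFree G (s + 1) n) {U : Finset α}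
    (hU : cliqueThreshold s k n ≤ #U) : ∃ K ⊆ U, Gᶜ.IsNClique (k + 1) K := by
  set m := (s + 1) * 2 ^ (2 * s + 1) * 2 ^ (k + 1)
  set I : ℕ → Finset α := block U (((k + 1) * m) ^ k)
  have hramsey : ∀ i ≤ k * n, (∃ K ⊆ I i, Gᶜ.IsNClique (k + 1) K) ∨
      ∃ K ⊆ I i, G.IsNClique ((k + 1) * m) K := fun i hi ↦ by
    have hcard : #(I i) = ((k + 1) * m) ^ k :=
      card_block ((Nat.mul_le_mul_right _ (by omega)).trans hU)
    simpa only [compl_compl] using exists_isNClique_or_isNClique_compl Gᶜ k _ hcard.ge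
  by_cases hclique : ∃ i ≤ k * n, ∃ K ⊆ I i, Gᶜ.IsNClique (k + 1) K
  · obtain ⟨i, -, K, hKI, hK⟩ := hclique
    exact ⟨K, hKI.trans (block_subset _ _ _), hK⟩
  push Not at hclique
  choose! K hKI hK using fun i hi ↦ (hramsey i hi).resolve_left (by simpa using hclique i hi)
  obtain ⟨L, hL, hLK⟩ := hG.exists_isNClique_compl_of_isClique (fun i hi ↦ (hK i hi).isClique)
    (fun i hi ↦ (hK i hi).card_eq.ge)
    (fun i j hij hj u hu v hv ↦
      lt_of_mem_block hij u (hKI i (hij.le.trans hj) hu) v (hKI j hj hv))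
  refine ⟨L, fun u hu ↦ ?_, hL⟩
  obtain ⟨i, hi, hui⟩ := hLK u hu
  exact block_subset _ _ _ (hKI i hi hui)

end Clique

section Link

variable {α : Type*} [LinearOrder α] {G : SimpleGraph α} {s n : ℕ}

lemma PathPowFree.exists_reach_lt_reach [DecidableRel G.Adj] {U X T : Finset α}
    (hG : PathPowFree G (s + 1) n) (hG' : PathPowFree Gᶜ (s + 1) n) (hUX : U ⊆ X)
    (hU : cliqueThreshold s (2 * s) n ≤ #U) (hUT : ∀ v ∈ U, ∀ w ∈ T, v < w)
    (hdense : ∀ v ∈ U, #T ≤ 2 * #{w ∈ T | G.Adj v w}) :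
    ∃ S ⊆ T, #T ≤ 2 ^ (2 * s + 1) * #S ∧ reach G (s + 1) X < reach G (s + 1) S := by
  obtain ⟨K, hKU, hK⟩ := hG'.exists_isNClique_compl hU
  rw [compl_compl] at hK
  obtain ⟨Q, hQ, hTQ⟩ := exists_powersetCard_le_card_filter_forall G.Adj hK.card_eq
    fun v hv ↦ hdense v (hKU hv)
  obtain ⟨hQK, hQc⟩ := mem_powersetCard.1 hQ
  refine ⟨_, filter_subset _ _, hTQ, hG.longestPathPowInto_lt_reach
    (hK.isClique.subset (coe_subset.2 hQK)) s.succ_pos hQc.ge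
    (lowerNbrs_antitone G ((hQK.trans hKU).trans hUX)) fun v hv w hw ↦ ?_⟩
  obtain ⟨hwT, hvw⟩ := mem_filter.1 hw
  exact ⟨hUT v (hKU (hQK hv)) w hwT, hvw v hv⟩

lemma PathPowFree.exists_reach_lt_reach_or (hG : PathPowFree G (s + 1) n)
    (hG' : PathPowFree Gᶜ (s + 1) n) {X T : Finset α}
    (hX : 2 * (cliqueThreshold s (2 * s) n - 1) < #X)
    (hXT : ∀ v ∈ X, ∀ w ∈ T, v < w) :
    ∃ S ⊆ T, #T ≤ 2 ^ (2 * s + 1) * #S ∧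
      (reach G (s + 1) X < reach G (s + 1) S ∨ reach Gᶜ (s + 1) X < reach Gᶜ (s + 1) S) := by
  classical
  have hT : ∀ v ∈ X, #{w ∈ T | G.Adj v w} + #{w ∈ T | Gᶜ.Adj v w} = #T := fun v hv ↦ by
    rw [← card_filter_add_card_filter_not (s := T) (fun w ↦ G.Adj v w)]
    congr 2
    exact filter_congr fun w hw ↦ by simp [SimpleGraph.compl_adj, (hXT v hv w hw).ne]
  have hsplit := card_filter_add_card_filter_not (s := X)
    (fun v ↦ #T ≤ 2 * #{w ∈ T | G.Adj v w})
  obtain hU | hU : cliqueThreshold s (2 * s) n ≤ #{v ∈ X | #T ≤ 2 * #{w ∈ T | G.Adj v w}} ∨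
      cliqueThreshold s (2 * s) n ≤ #{v ∈ X | ¬ #T ≤ 2 * #{w ∈ T | G.Adj v w}} := by omega
  · obtain ⟨S, hST, hTS, hreach⟩ := hG.exists_reach_lt_reach hG' (filter_subset _ X) hU
      (fun v hv ↦ hXT v (mem_filter.1 hv).1) fun v hv ↦ (mem_filter.1 hv).2
    exact ⟨S, hST, hTS, .inl hreach⟩
  · obtain ⟨S, hST, hTS, hreach⟩ := hG'.exists_reach_lt_reach (by rwa [compl_compl])
      (filter_subset _ X) hU (fun v hv ↦ hXT v (mem_filter.1 hv).1) fun v hv ↦ by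
        have hTv := hT v (mem_filter.1 hv).1
        have hsparse := (mem_filter.1 hv).2
        omega
    exact ⟨S, hST, hTS, .inr hreach⟩

/-- A number of vertices that forces, in every two-colouring of the edges, a monochromatic
`(s + 1)`-st power of the monotone path on `n` vertices. It makes room for `n ^ 2 + 1` intervals
that can be thinned out `n.size` times by a factor `2 ^ (2 * s + 1)` and still have more than
`2 * (B - 1)` elements, where `B` is the clique threshold, so that the larger of two colour classes
has at least `B`. -/
def pathPowThreshold (s n : ℕ) : ℕ :=
  (n ^ 2 + 1) * (2 * (cliqueThreshold s (2 * s) n - 1) * (2 ^ (2 * s + 1)) ^ n.size + 1)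

lemma not_pathPowFree_or_not_pathPowFree_compl (G : SimpleGraph α) {U : Finset α}
    (hU : pathPowThreshold s n ≤ #U) :
    ¬ PathPowFree G (s + 1) n ∨ ¬ PathPowFree Gᶜ (s + 1) n := by
  by_contra! hfree
  obtain ⟨hG, hG'⟩ := hfree
  set b := 2 * (cliqueThreshold s (2 * s) n - 1) * (2 ^ (2 * s + 1)) ^ n.size + 1
  have hcard : ∀ j < n ^ 2 + 1, #(block U b j) = b := fun j hj ↦
    card_block ((Nat.mul_le_mul_right b hj).trans hU)
  have hlink : ∀ i j, i < j → ∀ X ⊆ block U b i,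
      2 * (cliqueThreshold s (2 * s) n - 1) < #X → ∀ T ⊆ block U b j,
      ∃ S ⊆ T, #T ≤ 2 ^ (2 * s + 1) * #S ∧
        (reach G (s + 1) X < reach G (s + 1) S ∨ reach Gᶜ (s + 1) X < reach Gᶜ (s + 1) S) :=
    fun i j hij X hXi hX T hTj ↦ hG.exists_reach_lt_reach_or hG' hX
      fun v hv w hw ↦ lt_of_mem_block hij v (hXi hv) w (hTj hw)
  have hle : n ^ 2 + 1 ≤ n ^ 2 := le_sq_of_forall_exists_link hG.reach_antitone
    hG'.reach_antitone (by positivity) (fun X ↦ hG.longestPathPowInto_lt _)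
    (fun X ↦ hG'.longestPathPowInto_lt _)
    (fun j hj ↦ (hcard j hj).symm ▸ Nat.lt_succ_self _) hlink
  exact hle.not_gt (Nat.lt_succ_self _)

end Link

section Ramsey

variable {α : Type*} [LinearOrder α] {G : SimpleGraph α} {s t n N : ℕ}

lemma IsPathPow.exists_strictMono {S : Finset α} (hS : IsPathPow G t S) (hn : n ≤ #S) :
    ∃ f : Fin n → α, StrictMono f ∧
      ∀ i j : Fin n, i < j → (j : ℕ) ≤ (i : ℕ) + t → G.Adj (f i) (f j) := by
  let g : Fin #S ↪o α := S.orderEmbOfFin rfl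
  refine ⟨fun i ↦ g (Fin.castLE hn i), g.strictMono.comp (Fin.strictMono_castLE hn),
    fun i j hij hjt ↦ hS _ (orderEmbOfFin_mem S rfl _) _ (orderEmbOfFin_mem S rfl _)
      (g.strictMono hij) ?_⟩
  have hsub : {w ∈ S | g (Fin.castLE hn i) < w ∧ w < g (Fin.castLE hn j)} ⊆
      (Ioo (Fin.castLE hn i) (Fin.castLE hn j)).image g := fun w hw ↦ by
    obtain ⟨hwS, hiw, hwj⟩ := mem_filter.1 hw
    obtain ⟨a, rfl⟩ : w ∈ Set.range g := by rwa [range_orderEmbOfFin]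
    exact mem_image_of_mem g (mem_Ioo.2 ⟨g.lt_iff_lt.1 hiw, g.lt_iff_lt.1 hwj⟩)
  refine ((card_le_card hsub).trans card_image_le).trans_lt ?_
  rw [Fin.card_Ioo, Fin.val_castLE, Fin.val_castLE]
  have : (i : ℕ) < j := hij
  omega

lemma exists_strictMono_of_not_pathPowFree (hG : ¬ PathPowFree G t n) :
    ∃ f : Fin n → α, StrictMono f ∧
      ∀ i j : Fin n, i < j → (j : ℕ) ≤ (i : ℕ) + t → G.Adj (f i) (f j) := by
  obtain ⟨S, hS, hnS⟩ : ∃ S, IsPathPow G t S ∧ n ≤ #S := by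
    simpa [PathPowFree] using hG
  exact hS.exists_strictMono hnS

/-- The graph of red edges of a colouring; its complement consists of the blue ones. -/
def redGraph (χ : Fin N → Fin N → Bool) : SimpleGraph (Fin N) :=
  SimpleGraph.fromRel fun u v ↦ u < v ∧ χ u v = true

lemma redGraph_adj_iff {χ : Fin N → Fin N → Bool} {u v : Fin N} (huv : u < v) :
    (redGraph χ).Adj u v ↔ χ u v = true := by
  simp [redGraph, huv, huv.ne, huv.not_gt]

lemma compl_redGraph_adj_iff {χ : Fin N → Fin N → Bool} {u v : Fin N} (huv : u < v) :
    (redGraph χ)ᶜ.Adj u v ↔ χ u v = false := by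
  rw [SimpleGraph.compl_adj, redGraph_adj_iff huv, Bool.not_eq_true]
  exact and_iff_right huv.ne

theorem ordRamseyPathPowSelf_succ_le_pathPowThreshold (s n : ℕ) :
    ordRamseyPathPowSelf n (s + 1) ≤ pathPowThreshold s n := by
  refine Nat.sInf_le fun χ ↦ ?_
  obtain hred | hblue := not_pathPowFree_or_not_pathPowFree_compl (redGraph χ)
    (U := univ) (card_fin (pathPowThreshold s n)).ge
  · obtain ⟨f, hf, hadj⟩ := exists_strictMono_of_not_pathPowFree hred
    exact .inl ⟨f, hf, fun i j hij hjt ↦ (redGraph_adj_iff (hf hij)).1 (hadj i j hij hjt)⟩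
  · obtain ⟨f, hf, hadj⟩ := exists_strictMono_of_not_pathPowFree hblue
    exact .inr ⟨f, hf, fun i j hij hjt ↦ (compl_redGraph_adj_iff (hf hij)).1 (hadj i j hij hjt)⟩

end Ramsey

section Bounds

lemma two_pow_size_le {n : ℕ} (hn : 1 ≤ n) : 2 ^ n.size ≤ 2 * n := by
  have hpos : 0 < n.size := Nat.size_pos.2 hn
  calc 2 ^ n.size = 2 * 2 ^ (n.size - 1) := by rw [← pow_succ', Nat.sub_add_cancel hpos]
    _ ≤ 2 * n := by
      gcongr
      exact Nat.lt_size.1 (Nat.sub_one_lt hpos.ne')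

lemma cliqueThreshold_two_mul_le (s : ℕ) {n : ℕ} (hn : 1 ≤ n) :
    cliqueThreshold s (2 * s) n ≤ 2 * (s + 1) * n * ((s + 1) ^ 2 * 2 ^ (4 * s + 3)) ^ (2 * s) := by
  have hcard : (2 * s + 1) * ((s + 1) * 2 ^ (2 * s + 1) * 2 ^ (2 * s + 1)) ≤
      (s + 1) ^ 2 * 2 ^ (4 * s + 3) := by
    calc _ ≤ (2 * (s + 1)) * ((s + 1) * 2 ^ (2 * s + 1) * 2 ^ (2 * s + 1)) := by
          gcongr
          omega
      _ = _ := by ring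
  refine Nat.mul_le_mul ?_ (Nat.pow_le_pow_left hcard _)
  linarith

lemma pathPowThreshold_zero (n : ℕ) : pathPowThreshold 0 n = n ^ 2 + 1 := by
  simp [pathPowThreshold, cliqueThreshold]

lemma pathPowThreshold_le (s : ℕ) {n : ℕ} (hn : 1 ≤ n) :
    pathPowThreshold s n ≤
      2 ^ (8 * s ^ 2 + 8 * s + 4) * (s + 1) ^ (4 * s + 1) * n ^ (2 * s + 4) := by
  set B := cliqueThreshold s (2 * s) n with hB
  have hBpos : 1 ≤ B := by
    rw [hB, cliqueThreshold]
    exact Nat.one_le_iff_ne_zero.2 (by positivity)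
  have hsize : (2 ^ (2 * s + 1)) ^ n.size ≤ (2 * n) ^ (2 * s + 1) := by
    rw [pow_right_comm]
    exact Nat.pow_le_pow_left (two_pow_size_le hn) _
  have hsq : n ^ 2 + 1 ≤ 2 * n ^ 2 := by nlinarith
  have hone : 2 * (B - 1) * (2 ^ (2 * s + 1)) ^ n.size + 1 ≤
      2 * B * (2 ^ (2 * s + 1)) ^ n.size := by
    obtain ⟨C, hC⟩ : ∃ C, B = C + 1 := ⟨B - 1, by omega⟩
    have : 0 < (2 ^ (2 * s + 1)) ^ n.size := by positivity
    rw [hC, Nat.add_sub_cancel]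
    linarith
  calc pathPowThreshold s n ≤ 2 * n ^ 2 * (2 * B * (2 ^ (2 * s + 1)) ^ n.size) :=
        Nat.mul_le_mul hsq hone
    _ ≤ 2 * n ^ 2 * (2 * (2 * (s + 1) * n * ((s + 1) ^ 2 * 2 ^ (4 * s + 3)) ^ (2 * s)) *
          (2 * n) ^ (2 * s + 1)) := by
        gcongr
        exact cliqueThreshold_two_mul_le s hn
    _ = _ := by
        simp only [mul_pow, ← pow_mul]
        ring

theorem ordRamseyPathPowSelf_le_mul_pow {t n : ℕ} (ht : 1 ≤ t) (hn : 1 ≤ n) :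
    ordRamseyPathPowSelf n t ≤ (256 * t ^ 3) ^ (t ^ 2) * n ^ (2 * t + 2) := by
  obtain ⟨s, rfl⟩ := Nat.exists_eq_add_of_le' ht
  calc ordRamseyPathPowSelf n (s + 1) ≤ pathPowThreshold s n :=
        ordRamseyPathPowSelf_succ_le_pathPowThreshold s n
    _ ≤ 2 ^ (8 * s ^ 2 + 8 * s + 4) * (s + 1) ^ (4 * s + 1) * n ^ (2 * s + 4) :=
        pathPowThreshold_le s hn
    _ ≤ 2 ^ (8 * (s + 1) ^ 2) * (s + 1) ^ (3 * (s + 1) ^ 2) * n ^ (2 * (s + 1) + 2) := by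
        refine Nat.mul_le_mul (Nat.mul_le_mul (Nat.pow_le_pow_right two_pos ?_)
          (Nat.pow_le_pow_right s.succ_pos ?_)) (Nat.pow_le_pow_right hn ?_) <;> nlinarith
    _ = (256 * (s + 1) ^ 3) ^ ((s + 1) ^ 2) * n ^ (2 * (s + 1) + 2) := by
        rw [mul_pow, pow_mul 2 8, pow_mul (s + 1) 3, show 2 ^ 8 = 256 from rfl]

theorem ordRamseyPathPowSelf_one_le (n : ℕ) : ordRamseyPathPowSelf n 1 ≤ n ^ 2 + 1 :=
  (ordRamseyPathPowSelf_succ_le_pathPowThreshold 0 n).trans_eq (pathPowThreshold_zero n)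

end Bounds

end OrderedRamsey

theorem stmt2_general (t n : ℕ) (ht : 1 ≤ t) (hn : 1 ≤ n) :
    ordRamseyPathPowSelf n t ≤ (256 * t ^ 3) ^ (t ^ 2) * n ^ min (2 * t + 2) (4 * t - 2) := by
  obtain rfl | ht := ht.eq_or_lt
  · calc ordRamseyPathPowSelf n 1 ≤ n ^ 2 + 1 := OrderedRamsey.ordRamseyPathPowSelf_one_le n
      _ ≤ 256 * n ^ 2 := by nlinarith
  · rw [min_eq_left (by omega)]
    exact OrderedRamsey.ordRamseyPathPowSelf_le_mul_pow ht.le hn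

/-- `R_<(P_n^t, P_n^t) ≤ (400 t^3)^(t^2) · n^(4t−2)`. -/
theorem stmt2 (t n : ℕ) (ht : 1 ≤ t) (hn : 1 ≤ n) :
    ordRamseyPathPowSelf n t ≤ (400 * t ^ 3) ^ (t ^ 2) * n ^ (4 * t - 2) := by
  refine (stmt2_general t n ht hn).trans (Nat.mul_le_mul ?_ (Nat.pow_le_pow_right hn ?_))
  · gcongr; norm_num
  · exact min_le_right _ _
end

section
/- For every integer s ≥ 3, there is a constant C = C(s) such that for all n ≥ 3, the ordered Ramsey number satisfies R_<(K_s^{(3)}, P_n^{(3)}) ≤ C · n^C. -/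
/-- `χ x y z` is the color of the triple `{x, y, z}` for `x < y < z`:
`true` = red, `false` = blue. A red ordered copy of the complete 3-uniform
hypergraph `K_s^(3)`. -/
def ContainsRedClique3 (N s : ℕ) (χ : Fin N → Fin N → Fin N → Bool) : Prop :=
  ∃ f : Fin s → Fin N, StrictMono f ∧
    ∀ i j k : Fin s, i < j → j < k → χ (f i) (f j) (f k) = true

/-- A blue ordered copy of the monotone tight path `P_n^(3)`:
vertices `1, …, n` and edges `{i, i+1, i+2}` for `1 ≤ i ≤ n − 2`. -/
def ContainsBlueTightPath (N n : ℕ) (χ : Fin N → Fin N → Fin N → Bool) : Prop :=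
  ∃ f : Fin n → Fin N, StrictMono f ∧
    ∀ (i : ℕ) (h : i + 2 < n),
      χ (f ⟨i, by omega⟩) (f ⟨i + 1, by omega⟩) (f ⟨i + 2, h⟩) = false

/-- The ordered Ramsey number `R_<(K_s^(3), P_n^(3))`. -/
noncomputable def ordRamsey3 (s n : ℕ) : ℕ :=
  sInf {N | ∀ χ : Fin N → Fin N → Fin N → Bool,
    ContainsRedClique3 N s χ ∨ ContainsBlueTightPath N n χ}

/-!
Label a pair `x < y` by the length of the longest blue tight path starting with `x, y`; without a
blue path on `n` vertices the labels are below `n`. If `χ x y z` is blue, prepending `x` to the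
longest path from `y, z` shows that the label drops strictly from `{x, y}` to `{y, z}`, so a set on
which labels never drop is a red clique. It therefore suffices to find such a set of size `s` among
polynomially many points carrying arbitrary labels below `n`.

This is proved by induction on the size `p`, for pairs with finitely many colors, where only the
color `none` has to reach size `p` and every other color is stopped at size three. For `p = 3`, if
every monochromatic triangle drops, fix a vertex `u` and compare labels with the midpoints of the
ranges of the colors: inside a large star at `u` the labels of one color fill only half of their
range, so after `O(log n)` rounds no pair is left. For the step from `p` to `p + 1`, averaging gives
polynomially many cliques `{x, w} ∪ Y` that share `x`, `Y` and the label `h` of `{x, w}`. Among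
these `w`, recolor the pairs of color `none` with label at most `h` by a new color. A `p`-clique
that keeps the color `none` has all labels above `h` and can be extended by `x`; a triangle of the
new color has all labels at most `h` and can be extended by the `p - 2` vertices of `Y`.
-/

open Finset

variable {α κ : Type*}

/-- A clique of color `c` whose label weakly increases from `{x, y}` to `{y, z}` for all `x < y < z`
in it. Only the values of `col` and `ℓ` at pairs `x < y` matter. -/
structure IsMonotoneClique [LinearOrder α] (col : α → α → κ) (ℓ : α → α → ℕ) (c : κ)
    (S : Finset α) : Prop where
  color : ∀ x ∈ S, ∀ y ∈ S, x < y → col x y = c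
  label_le : ∀ x ∈ S, ∀ y ∈ S, ∀ z ∈ S, x < y → y < z → ℓ x y ≤ ℓ y z

/-- `V` contains a monotone clique of color `c` on `p` vertices. -/
def HasMonotoneClique [LinearOrder α] (col : α → α → κ) (ℓ : α → α → ℕ) (c : κ) (p : ℕ)
    (V : Finset α) : Prop :=
  ∃ S ⊆ V, #S = p ∧ IsMonotoneClique col ℓ c S

/-- The Ramsey property proved by induction on `p`: with labels below `n`, among `N` vertices there
is a monotone clique on `p` vertices in the special color `none`, or one on three vertices in some
other color. -/
def ForcesMonotoneClique (κ : Type*) (p n N : ℕ) : Prop :=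
  ∀ (α : Type) [LinearOrder α] (V : Finset α) (col : α → α → Option κ) (ℓ : α → α → ℕ),
    (∀ x y, ℓ x y < n) → N ≤ #V →
      HasMonotoneClique col ℓ none p V ∨ ∃ c, HasMonotoneClique col ℓ (some c) 3 V

section MonotoneClique

variable [LinearOrder α] {col : α → α → κ} {ℓ : α → α → ℕ} {c : κ} {p : ℕ} {A S V W Y : Finset α}

lemma IsMonotoneClique.mono (hS : IsMonotoneClique col ℓ c S) (hAS : A ⊆ S) :
    IsMonotoneClique col ℓ c A :=
  ⟨fun x hx y hy ↦ hS.color x (hAS hx) y (hAS hy),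
    fun x hx y hy z hz ↦ hS.label_le x (hAS hx) y (hAS hy) z (hAS hz)⟩

lemma IsMonotoneClique.union (hA : IsMonotoneClique col ℓ c A) (hY : IsMonotoneClique col ℓ c Y)
    (hlt : ∀ a ∈ A, ∀ y ∈ Y, a < y) (hcol : ∀ a ∈ A, ∀ y ∈ Y, col a y = c)
    (hAAY : ∀ a ∈ A, ∀ b ∈ A, ∀ y ∈ Y, a < b → ℓ a b ≤ ℓ b y)
    (hAYY : ∀ a ∈ A, ∀ y ∈ Y, ∀ z ∈ Y, y < z → ℓ a y ≤ ℓ y z) :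
    IsMonotoneClique col ℓ c (A ∪ Y) where
  color x hx y hy hxy := by
    have := hA.color
    have := hY.color
    grind
  label_le x hx y hy z hz hxy hyz := by
    have := hA.label_le
    have := hY.label_le
    grind

lemma HasMonotoneClique.mono (h : HasMonotoneClique col ℓ c p W) (hWV : W ⊆ V) :
    HasMonotoneClique col ℓ c p V :=
  let ⟨S, hSW, hS⟩ := h
  ⟨S, hSW.trans hWV, hS⟩

lemma label_lt_of_not_hasMonotoneClique (h : ¬HasMonotoneClique col ℓ c 3 V) {x y z : α}
    (hx : x ∈ V) (hy : y ∈ V) (hz : z ∈ V) (hxy : x < y) (hyz : y < z)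
    (cxy : col x y = c) (cxz : col x z = c) (cyz : col y z = c) : ℓ y z < ℓ x y := by
  by_contra! hle
  refine h ⟨{x, y, z}, by grind, card_eq_three.2 ⟨x, y, z, by grind⟩, ⟨?_, ?_⟩⟩ <;> grind

end MonotoneClique

section Halving

lemma exists_card_le_two_mul_card_filter_add_one {β : Type*} {V : Finset β} (hV : V.Nonempty)
    (r : β → β → Prop) [DecidableRel r] (hr : ∀ x ∈ V, ∀ y ∈ V, x ≠ y → r x y ∨ r y x) :
    ∃ u ∈ V, #V ≤ 2 * #{x ∈ V | r u x} + 1 := by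
  classical
  have hcover (u) (hu : u ∈ V) : #V ≤ #{x ∈ V | r u x} + #{x ∈ V | r x u} + 1 := by
    have hsub : V.erase u ⊆ {x ∈ V | r u x} ∪ {x ∈ V | r x u} := by grind
    have hcard := (card_le_card hsub).trans (card_union_le _ _)
    grind [card_erase_of_mem hu]
  have hdouble : ∑ u ∈ V, #{x ∈ V | r u x} = ∑ u ∈ V, #{x ∈ V | r x u} :=
    sum_card_bipartiteAbove_eq_sum_card_bipartiteBelow r
  refine exists_le_of_sum_le hV ?_
  calc ∑ _u ∈ V, #V ≤ ∑ u ∈ V, (#{x ∈ V | r u x} + #{x ∈ V | r x u} + 1) := sum_le_sum hcover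
    _ = ∑ u ∈ V, (2 * #{x ∈ V | r u x} + 1) := by
      simp only [sum_add_distrib, ← mul_sum, ← hdouble]
      ring

variable [LinearOrder α] {V : Finset α} {col : α → α → κ} {ℓ : α → α → ℕ}

lemma exists_card_le_card_star [Fintype κ] [DecidableEq κ] (col : α → α → κ) (ℓ : α → α → ℕ)
    (m : κ → ℕ) (hV : V.Nonempty) :
    ∃ u ∈ V, ∃ c,
      #V ≤ 4 * Fintype.card κ * #{x ∈ V | x < u ∧ col x u = c ∧ m c ≤ ℓ x u} + 1 ∨
      #V ≤ 4 * Fintype.card κ * #{x ∈ V | u < x ∧ col u x = c ∧ ℓ u x ≤ m c} + 1 := by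
  obtain ⟨u, hu, hVu⟩ := exists_card_le_two_mul_card_filter_add_one hV
    (fun u x ↦ x < u ∧ m (col x u) ≤ ℓ x u ∨ u < x ∧ ℓ u x ≤ m (col u x)) (by grind)
  set below : κ → Finset α := fun c ↦ {x ∈ V | x < u ∧ col x u = c ∧ m c ≤ ℓ x u} with hbelow
  set above : κ → Finset α := fun c ↦ {x ∈ V | u < x ∧ col u x = c ∧ ℓ u x ≤ m c} with habove
  have hsub : {x ∈ V | x < u ∧ m (col x u) ≤ ℓ x u ∨ u < x ∧ ℓ u x ≤ m (col u x)} ⊆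
      univ.biUnion fun c ↦ below c ∪ above c := fun x hx ↦ by
    simp only [hbelow, habove, mem_biUnion, mem_union, mem_filter, mem_univ, true_and] at hx ⊢
    rcases hx with ⟨hxV, h | h⟩
    · exact ⟨col x u, .inl ⟨hxV, h.1, rfl, h.2⟩⟩
    · exact ⟨col u x, .inr ⟨hxV, h.1, rfl, h.2⟩⟩
  have hcover : #V ≤ 2 * ∑ c, (#(below c) + #(above c)) + 1 :=
    calc #V ≤ 2 * #(univ.biUnion fun c ↦ below c ∪ above c) + 1 := hVu.trans (by gcongr)
      _ ≤ 2 * ∑ c, #(below c ∪ above c) + 1 := by gcongr; exact card_biUnion_le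
      _ ≤ 2 * ∑ c, (#(below c) + #(above c)) + 1 := by gcongr; exact card_union_le _ _
  obtain ⟨c, -, hc⟩ := exists_max_image univ (fun c ↦ #(below c) + #(above c)) ⟨col u u, mem_univ _⟩
  have hmax : ∑ c, (#(below c) + #(above c)) ≤ Fintype.card κ * (#(below c) + #(above c)) := by
    simpa only [smul_eq_mul, card_univ] using sum_le_card_nsmul univ _ _ hc
  refine ⟨u, hu, c, ?_⟩
  change #V ≤ 4 * Fintype.card κ * #(below c) + 1 ∨ #V ≤ 4 * Fintype.card κ * #(above c) + 1
  rcases le_total #(above c) #(below c) with hle | hle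
  · left
    nlinarith [Nat.mul_le_mul_left (Fintype.card κ) hle]
  · right
    nlinarith [Nat.mul_le_mul_left (Fintype.card κ) hle]

/-- The labels of the pairs of color `c` lie in an interval of length less than `2 ^ d c` starting
at `a c`; for `d c = 0` this forbids the color `c`. -/
def LabelsWithin (col : α → α → κ) (ℓ : α → α → ℕ) (a d : κ → ℕ) (V : Finset α) : Prop :=
  ∀ x ∈ V, ∀ y ∈ V, x < y → a (col x y) ≤ ℓ x y ∧ ℓ x y + 1 < a (col x y) + 2 ^ d (col x y)

variable {a d : κ → ℕ} {c : κ} {X : Finset α}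

lemma LabelsWithin.ne_zero (hℓ : LabelsWithin col ℓ a d V) {x y : α} (hx : x ∈ V) (hy : y ∈ V)
    (hxy : x < y) : d (col x y) ≠ 0 := fun h0 ↦ by
  have := hℓ x hx y hy hxy
  rw [h0] at this
  omega

lemma LabelsWithin.upper_half [DecidableEq κ] (hℓ : LabelsWithin col ℓ a d V) (hXV : X ⊆ V)
    (h : ∀ x ∈ X, ∀ y ∈ X, x < y → col x y = c → a c + 2 ^ (d c - 1) ≤ ℓ x y) :
    LabelsWithin col ℓ (Function.update a c (a c + 2 ^ (d c - 1)))
      (Function.update d c (d c - 1)) X := fun x hx y hy hxy ↦ by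
  have hV := hℓ x (hXV hx) y (hXV hy) hxy
  rcases eq_or_ne (col x y) c with rfl | hc
  · have hpow := Nat.two_pow_pred_add_two_pow_pred
      (Nat.pos_of_ne_zero (hℓ.ne_zero (hXV hx) (hXV hy) hxy))
    have hX := h x hx y hy hxy rfl
    simp only [Function.update_self]
    omega
  · simpa only [Function.update_of_ne hc] using hV

lemma LabelsWithin.lower_half [DecidableEq κ] (hℓ : LabelsWithin col ℓ a d V) (hXV : X ⊆ V)
    (h : ∀ x ∈ X, ∀ y ∈ X, x < y → col x y = c → ℓ x y + 1 < a c + 2 ^ (d c - 1)) :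
    LabelsWithin col ℓ a (Function.update d c (d c - 1)) X := fun x hx y hy hxy ↦ by
  have hV := hℓ x (hXV hx) y (hXV hy) hxy
  rcases eq_or_ne (col x y) c with rfl | hc
  · simpa only [Function.update_self] using ⟨hV.1, h x hx y hy hxy rfl⟩
  · simpa only [Function.update_of_ne hc] using hV

lemma sum_eq_sum_update_pred_add_one [Fintype κ] [DecidableEq κ] (hc : d c ≠ 0) :
    ∑ i, d i = ∑ i, Function.update d c (d c - 1) i + 1 := by
  rw [sum_update_of_mem (mem_univ c), sdiff_singleton_eq_erase,
    ← add_sum_erase univ d (mem_univ c)]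
  omega

lemma LabelsWithin.exists_ssubset_card_le [Fintype κ] (hℓ : LabelsWithin col ℓ a d V)
    (h : ∀ c, ¬HasMonotoneClique col ℓ c 3 V) (hV : 1 < #V) :
    ∃ X ⊂ V, ∃ a' d' : κ → ℕ, LabelsWithin col ℓ a' d' X ∧ ∑ c, d c = ∑ c, d' c + 1 ∧
      #V ≤ (4 * Fintype.card κ + 1) * #X := by
  classical
  have hne : V.Nonempty := card_pos.1 (by omega)
  have hbound {X : Finset α} (hX : #V ≤ 4 * Fintype.card κ * #X + 1) :
      X.Nonempty ∧ #V ≤ (4 * Fintype.card κ + 1) * #X := by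
    have hpos : 0 < #X := Nat.pos_of_ne_zero fun h0 ↦ by
      rw [h0] at hX
      omega
    exact ⟨card_pos.1 hpos, by rw [add_one_mul]; omega⟩
  obtain ⟨u, hu, c, hX | hX⟩ :=
    exists_card_le_card_star col ℓ (fun c ↦ a c + 2 ^ (d c - 1) - 1) hne <;>
  obtain ⟨⟨x₀, hx₀⟩, hcard⟩ := hbound hX
  · obtain ⟨hx₀V, hx₀u, rfl, -⟩ := mem_filter.1 hx₀
    refine ⟨_, filter_ssubset.2 ⟨u, hu, by simp⟩, _, _,
      hℓ.upper_half (c := col x₀ u) (filter_subset _ _) fun x hx y hy hxy hc ↦ ?_,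
      sum_eq_sum_update_pred_add_one (hℓ.ne_zero hx₀V hu hx₀u), hcard⟩
    obtain ⟨hxV, -, hcx, -⟩ := mem_filter.1 hx
    obtain ⟨hyV, hyu, hcy, hmy⟩ := mem_filter.1 hy
    have := label_lt_of_not_hasMonotoneClique (h _) hxV hyV hu hxy hyu hc hcx hcy
    omega
  · obtain ⟨hx₀V, hux₀, rfl, -⟩ := mem_filter.1 hx₀
    refine ⟨_, filter_ssubset.2 ⟨u, hu, by simp⟩, _, _,
      hℓ.lower_half (c := col u x₀) (filter_subset _ _) fun x hx y hy hxy hc ↦ ?_,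
      sum_eq_sum_update_pred_add_one (hℓ.ne_zero hu hx₀V hux₀), hcard⟩
    obtain ⟨hxV, hux, hcx, hmx⟩ := mem_filter.1 hx
    obtain ⟨hyV, -, hcy, -⟩ := mem_filter.1 hy
    have := label_lt_of_not_hasMonotoneClique (h _) hu hxV hyV hux hxy hcx hcy hc
    omega

lemma LabelsWithin.card_le_pow [Fintype κ] (hℓ : LabelsWithin col ℓ a d V)
    (h : ∀ c, ¬HasMonotoneClique col ℓ c 3 V) :
    #V ≤ (4 * Fintype.card κ + 1) ^ ∑ c, d c := by
  induction V using Finset.strongInduction generalizing a d with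
  | H V ih =>
    rcases le_or_gt #V 1 with hV | hV
    · exact hV.trans (Nat.one_le_pow _ _ (by omega))
    obtain ⟨X, hXV, a', d', hX, hd, hcard⟩ := hℓ.exists_ssubset_card_le h hV
    calc #V ≤ (4 * Fintype.card κ + 1) * #X := hcard
      _ ≤ (4 * Fintype.card κ + 1) * (4 * Fintype.card κ + 1) ^ ∑ c, d' c := by
        gcongr
        exact ih X hXV hX fun c hc ↦ h c (hc.mono hXV.subset)
      _ = (4 * Fintype.card κ + 1) ^ ∑ c, d c := by rw [hd, pow_succ']

lemma exists_forall_hasMonotoneClique_three (κ : Type*) [Finite κ] :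
    ∃ C, ∀ n ≥ 2, ∀ {α : Type*} [LinearOrder α] (V : Finset α) (col : α → α → κ)
      (ℓ : α → α → ℕ), (∀ x y, ℓ x y < n) → n ^ C ≤ #V → ∃ c, HasMonotoneClique col ℓ c 3 V := by
  cases nonempty_fintype κ
  set B := 4 * Fintype.card κ + 1
  refine ⟨2 * (B * Fintype.card κ) + 1, fun n hn α _ V col ℓ hℓ hV ↦ ?_⟩
  by_contra! h
  have hlog : 2 ^ (Nat.log 2 n + 1) ≤ n ^ 2 := by
    have := Nat.pow_log_le_self 2 (x := n) (by omega)
    rw [pow_succ]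
    nlinarith
  have hwithin : LabelsWithin col ℓ (fun _ ↦ 0) (fun _ ↦ Nat.log 2 n + 1) V := fun x _ y _ _ ↦ by
    have := Nat.lt_pow_succ_log_self one_lt_two n
    have := hℓ x y
    grind
  have hcard : #V ≤ n ^ (2 * (B * Fintype.card κ)) :=
    calc #V ≤ B ^ ∑ _c : κ, (Nat.log 2 n + 1) := hwithin.card_le_pow h
      _ ≤ (2 ^ B) ^ (Fintype.card κ * (Nat.log 2 n + 1)) := by
        rw [sum_const, card_univ, smul_eq_mul]
        gcongr
        exact Nat.lt_two_pow_self.le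
      _ = (2 ^ (Nat.log 2 n + 1)) ^ (B * Fintype.card κ) := by
        rw [← pow_mul, ← pow_mul]
        ring
      _ ≤ (n ^ 2) ^ (B * Fintype.card κ) := by gcongr
      _ = n ^ (2 * (B * Fintype.card κ)) := (pow_mul ..).symm
  exact (hV.trans hcard).not_gt (Nat.pow_lt_pow_succ (by omega))

end Halving

section Supersaturation

lemma choose_le_card_mul_choose {β : Type*} {p M : ℕ} {V : Finset β} {𝒯 : Finset (Finset β)}
    (h𝒯 : ∀ T ∈ 𝒯, T ⊆ V ∧ #T = p) (hMV : M ≤ #V) (h : ∀ A ⊆ V, #A = M → ∃ T ∈ 𝒯, T ⊆ A) :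
    (#V).choose p ≤ #𝒯 * M.choose p := by
  classical
  have hpM : p ≤ M := by
    obtain ⟨A, hAV, hA⟩ := exists_subset_card_eq hMV
    obtain ⟨T, hT, hTA⟩ := h A hAV hA
    exact (h𝒯 T hT).2 ▸ hA ▸ card_le_card hTA
  have hcover : (#V).choose M ≤ #𝒯 * (#V - p).choose (M - p) := by
    rw [← card_powersetCard]
    calc #(powersetCard M V) ≤ #(𝒯.biUnion fun T ↦ {A ∈ powersetCard M V | T ⊆ A}) :=
          card_le_card (by grind)
      _ ≤ #𝒯 * (#V - p).choose (M - p) := by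
        refine card_biUnion_le_card_mul _ _ _ fun T hT ↦ ?_
        obtain ⟨hTV, rfl⟩ := h𝒯 T hT
        rw [card_filter_powersetCard_subset T V M hTV hpM]
  refine Nat.le_of_mul_le_mul_right ?_ (Nat.choose_pos (n := #V - p) (k := M - p) (by omega))
  calc (#V).choose p * (#V - p).choose (M - p) = (#V).choose M * M.choose p :=
        (Nat.choose_mul hpM).symm
    _ ≤ #𝒯 * (#V - p).choose (M - p) * M.choose p := by gcongr
    _ = #𝒯 * M.choose p * (#V - p).choose (M - p) := by ring

lemma pow_le_sq_pow_mul_choose {p n : ℕ} (hp : 0 < p) (hpn : p ≤ n) :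
    n ^ p ≤ (p ^ 2) ^ p * n.choose p := by
  have hn : n ≤ p * (n + 1 - p) := by
    obtain ⟨k, rfl⟩ := Nat.exists_eq_add_of_le hpn
    rw [show p + k + 1 - p = k + 1 by omega]
    nlinarith
  calc n ^ p ≤ (p * (n + 1 - p)) ^ p := by gcongr
    _ = p ^ p * (n + 1 - p) ^ p := mul_pow ..
    _ ≤ p ^ p * (p.factorial * n.choose p) := by
      rw [← Nat.descFactorial_eq_factorial_mul_choose]
      gcongr
      exact n.pow_sub_le_descFactorial p
    _ ≤ p ^ p * (p ^ p * n.choose p) := by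
      gcongr
      exact p.factorial_le_pow
    _ = (p ^ 2) ^ p * n.choose p := by ring

lemma pow_card_le_mul_card {β : Type*} {p M : ℕ} {V : Finset β} {𝒯 : Finset (Finset β)}
    (hp : 0 < p) (hpV : p ≤ #V) (h𝒯 : ∀ T ∈ 𝒯, T ⊆ V ∧ #T = p) (hMV : M ≤ #V)
    (h : ∀ A ⊆ V, #A = M → ∃ T ∈ 𝒯, T ⊆ A) : #V ^ p ≤ (p ^ 2 * M) ^ p * #𝒯 :=
  calc #V ^ p ≤ (p ^ 2) ^ p * (#V).choose p := pow_le_sq_pow_mul_choose hp hpV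
    _ ≤ (p ^ 2) ^ p * (#𝒯 * M ^ p) := by
      gcongr
      exact (choose_le_card_mul_choose h𝒯 hMV h).trans (by gcongr; exact M.choose_le_pow p)
    _ = (p ^ 2 * M) ^ p * #𝒯 := by ring

end Supersaturation

section Link

variable [LinearOrder α]

lemma exists_eq_insert_min {q : ℕ} {S : Finset α} (hS : #S = q + 1) :
    ∃ x Y, S = insert x Y ∧ (∀ y ∈ Y, x < y) ∧ #Y = q := by
  have hne : S.Nonempty := card_pos.1 (by omega)
  refine ⟨S.min' hne, S.erase (S.min' hne), (insert_erase (S.min'_mem hne)).symm,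
    fun y hy ↦ S.min'_lt_of_mem_erase_min' hne hy, ?_⟩
  rw [card_erase_of_mem (S.min'_mem hne), hS, Nat.add_sub_cancel]

lemma exists_eq_insert_insert_min {q : ℕ} {S : Finset α} (hS : #S = q + 2) :
    ∃ x w Y, S = insert x (insert w Y) ∧ x < w ∧ (∀ y ∈ Y, w < y) ∧ #Y = q := by
  obtain ⟨x, S', rfl, hx, hS'⟩ := exists_eq_insert_min hS
  obtain ⟨w, Y, rfl, hw, hY⟩ := exists_eq_insert_min hS'
  exact ⟨x, w, Y, rfl, hx w (mem_insert_self w Y), hw, hY⟩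

lemma exists_large_link {q n R : ℕ} {V : Finset α} {𝒯 : Finset (Finset α)} {ℓ : α → α → ℕ}
    (hℓ : ∀ x y, ℓ x y < n) (h𝒯 : ∀ T ∈ 𝒯, T ⊆ V ∧ #T = q + 2)
    (hcard : #V ^ (q + 1) * n * R < #𝒯) :
    ∃ x ∈ V, ∃ Y ⊆ V, ∃ h, ∃ W ⊆ V, #Y = q ∧ R < #W ∧
      ∀ w ∈ W, x < w ∧ (∀ y ∈ Y, w < y) ∧ ℓ x w = h ∧ insert x (insert w Y) ∈ 𝒯 := by
  set W : α × Finset α × ℕ → Finset α := fun ⟨x, Y, h⟩ ↦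
    {w ∈ V | x < w ∧ (∀ y ∈ Y, w < y) ∧ ℓ x w = h ∧ insert x (insert w Y) ∈ 𝒯} with hW
  set keys := V ×ˢ powersetCard q V ×ˢ range n
  have hcover : 𝒯 ⊆ keys.biUnion fun k ↦ (W k).image fun w ↦ insert k.1 (insert w k.2.1) :=
    fun T hT ↦ by
      obtain ⟨hTV, hTq⟩ := h𝒯 T hT
      obtain ⟨x, w, Y, rfl, hxw, hwY, hY⟩ := exists_eq_insert_insert_min hTq
      obtain ⟨hx, hw, hYV⟩ : x ∈ V ∧ w ∈ V ∧ Y ⊆ V := by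
        simpa only [insert_subset_iff] using hTV
      simp only [keys, hW, mem_biUnion, mem_image, mem_product, mem_powersetCard, mem_range,
        mem_filter]
      exact ⟨(x, Y, ℓ x w), ⟨hx, ⟨hYV, hY⟩, hℓ x w⟩, w, ⟨hw, hxw, hwY, rfl, hT⟩, rfl⟩
  obtain ⟨⟨x, Y, h⟩, hk, hR⟩ : ∃ k ∈ keys, R < #(W k) := by
    by_contra! hsmall
    refine hcard.not_ge ?_
    calc #𝒯 ≤ #keys * R := (card_le_card hcover).trans
          (card_biUnion_le_card_mul _ _ _ fun k hk ↦ card_image_le.trans (hsmall k hk))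
      _ = #V * ((#V).choose q * n) * R := by
        rw [card_product, card_product, card_powersetCard, card_range]
      _ ≤ #V * (#V ^ q * n) * R := by
        gcongr
        exact Nat.choose_le_pow _ _
      _ = #V ^ (q + 1) * n * R := by ring
  simp only [keys, mem_product, mem_powersetCard] at hk
  obtain ⟨hx, ⟨hYV, hY⟩, -⟩ := hk
  exact ⟨x, hx, Y, hYV, h, W (x, Y, h), filter_subset _ _, hY, hR, fun w hw ↦ (mem_filter.1 hw).2⟩

end Link

section Extension

variable {col : α → α → Option κ} {ℓ : α → α → ℕ} {h : ℕ}

/-- The coloring in which the pairs of color `none` and label at most `h` get a new color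
`some none`. -/
def splitNone (col : α → α → Option κ) (ℓ : α → α → ℕ) (h : ℕ) (x y : α) : Option (Option κ) :=
  match col x y with
  | none => if ℓ x y ≤ h then some none else none
  | some c => some (some c)

lemma splitNone_eq_none {x y : α} :
    splitNone col ℓ h x y = none ↔ col x y = none ∧ h < ℓ x y := by
  unfold splitNone
  split <;> simp_all

lemma splitNone_eq_some_none {x y : α} :
    splitNone col ℓ h x y = some none ↔ col x y = none ∧ ℓ x y ≤ h := by
  unfold splitNone
  split <;> simp_all

lemma splitNone_eq_some_some {x y : α} {c : κ} :
    splitNone col ℓ h x y = some (some c) ↔ col x y = some c := by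
  unfold splitNone
  split <;> simp_all

variable [LinearOrder α] {S V W Y : Finset α} {p q : ℕ} {x : α}

lemma IsMonotoneClique.insert_of_splitNone (hS : IsMonotoneClique (splitNone col ℓ h) ℓ none S)
    (hlt : ∀ w ∈ S, x < w) (hcol : ∀ w ∈ S, col x w = none) (hℓ : ∀ w ∈ S, ℓ x w = h) :
    IsMonotoneClique col ℓ none (insert x S) := by
  have hnone (a b) (ha : a ∈ S) (hb : b ∈ S) (hab : a < b) :=
    splitNone_eq_none.1 (hS.color a ha b hb hab)
  have hSnone : IsMonotoneClique col ℓ none S :=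
    ⟨fun a ha b hb hab ↦ (hnone a b ha hb hab).1, hS.label_le⟩
  refine insert_eq x S ▸ IsMonotoneClique.union ⟨by simp, by simp⟩ hSnone ?_ ?_ ?_ ?_ <;> grind

lemma IsMonotoneClique.union_of_splitNone
    (hS : IsMonotoneClique (splitNone col ℓ h) ℓ (some none) S) (hne : S.Nonempty)
    (hlt : ∀ w ∈ S, x < w ∧ ∀ y ∈ Y, w < y) (hℓ : ∀ w ∈ S, ℓ x w = h)
    (hclique : ∀ w ∈ S, IsMonotoneClique col ℓ none (insert x (insert w Y))) :
    IsMonotoneClique col ℓ none (S ∪ Y) := by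
  have hsome (a b) (ha : a ∈ S) (hb : b ∈ S) (hab : a < b) :=
    splitNone_eq_some_none.1 (hS.color a ha b hb hab)
  have hSnone : IsMonotoneClique col ℓ none S :=
    ⟨fun a ha b hb hab ↦ (hsome a b ha hb hab).1, hS.label_le⟩
  obtain ⟨w, hw⟩ := hne
  refine hSnone.union ((hclique w hw).mono (by grind)) (fun a ha ↦ (hlt a ha).2) ?_ ?_ ?_
  · exact fun a ha y hy ↦ (hclique a ha).color a (by simp) y (by simp [hy]) ((hlt a ha).2 y hy)
  · intro a ha b hb y hy hab
    calc ℓ a b ≤ h := (hsome a b ha hb hab).2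
      _ = ℓ x b := (hℓ b hb).symm
      _ ≤ ℓ b y := (hclique b hb).label_le x (by simp) b (by simp) y (by simp [hy])
        (hlt b hb).1 ((hlt b hb).2 y hy)
  · exact fun a ha y hy z hz ↦ (hclique a ha).label_le a (by simp) y (by simp [hy]) z (by simp [hz])
      ((hlt a ha).2 y hy)

lemma hasMonotoneClique_succ_of_link (hxV : x ∈ V) (hYV : Y ⊆ V) (hWV : W ⊆ V) (hp : #Y + 2 = p)
    (hlt : ∀ w ∈ W, x < w ∧ ∀ y ∈ Y, w < y) (hℓ : ∀ w ∈ W, ℓ x w = h)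
    (hclique : ∀ w ∈ W, IsMonotoneClique col ℓ none (insert x (insert w Y)))
    (hW : HasMonotoneClique (splitNone col ℓ h) ℓ none p W ∨
      ∃ c, HasMonotoneClique (splitNone col ℓ h) ℓ (some c) 3 W) :
    HasMonotoneClique col ℓ none (p + 1) V ∨ ∃ c, HasMonotoneClique col ℓ (some c) 3 V := by
  obtain ⟨S, hSW, hSp, hS⟩ | ⟨_ | c, S, hSW, hS3, hS⟩ := hW
  · have hxS : x ∉ S := fun hx ↦ (hlt x (hSW hx)).1.false
    have hcol (w) (hw : w ∈ W) : col x w = none :=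
      (hclique w hw).color x (by simp) w (by simp) (hlt w hw).1
    refine .inl ⟨insert x S, insert_subset hxV (hSW.trans hWV), ?_,
      hS.insert_of_splitNone (fun w hw ↦ (hlt w (hSW hw)).1) (fun w hw ↦ hcol w (hSW hw))
        fun w hw ↦ hℓ w (hSW hw)⟩
    rw [card_insert_of_notMem hxS, hSp]
  · have hdisj : Disjoint S Y := disjoint_left.2 fun w hw hwY ↦ ((hlt w (hSW hw)).2 w hwY).false
    refine .inl ⟨S ∪ Y, union_subset (hSW.trans hWV) hYV, ?_,
      hS.union_of_splitNone (card_pos.1 (by omega)) (fun w hw ↦ hlt w (hSW hw))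
        (fun w hw ↦ hℓ w (hSW hw)) fun w hw ↦ hclique w (hSW hw)⟩
    rw [card_union_of_disjoint hdisj]
    omega
  · exact .inr ⟨c, S, hSW.trans hWV, hS3,
      fun a ha b hb hab ↦ splitNone_eq_some_some.1 (hS.color a ha b hb hab), hS.label_le⟩

end Extension

section Induction

variable {p n M R N : ℕ}

lemma ForcesMonotoneClique.succ (hM : ForcesMonotoneClique κ p n M)
    (hR : ForcesMonotoneClique (Option κ) p n R) (hp : 2 ≤ p) (hpN : p ≤ N) (hMN : M ≤ N)
    (hN : (p ^ 2 * M) ^ p * n * R < N) : ForcesMonotoneClique κ (p + 1) n N := by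
  classical
  intro α _ V col ℓ hℓ hV
  by_cases hsome : ∃ c, HasMonotoneClique col ℓ (some c) 3 V
  · exact .inr hsome
  obtain ⟨q, rfl⟩ := Nat.exists_eq_add_of_le' hp
  set 𝒯 : Finset (Finset α) := {T ∈ powersetCard (q + 2) V | IsMonotoneClique col ℓ none T} with h𝒯
  have hmem {T} : T ∈ 𝒯 ↔ (T ⊆ V ∧ #T = q + 2) ∧ IsMonotoneClique col ℓ none T := by
    rw [h𝒯, mem_filter, mem_powersetCard]
  have hmany : #V ^ (q + 2) ≤ ((q + 2) ^ 2 * M) ^ (q + 2) * #𝒯 := by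
    refine pow_card_le_mul_card (by omega) (hpN.trans hV) (fun T hT ↦ (hmem.1 hT).1)
      (hMN.trans hV) fun A hAV hA ↦ ?_
    obtain ⟨T, hTA, hT⟩ | ⟨c, hc⟩ := hM α A col ℓ hℓ hA.ge
    · exact ⟨T, hmem.2 ⟨⟨hTA.trans hAV, hT.1⟩, hT.2⟩, hTA⟩
    · exact (hsome ⟨c, hc.mono hAV⟩).elim
  have hcard : #V ^ (q + 1) * n * R < #𝒯 := by
    set K := ((q + 2) ^ 2 * M) ^ (q + 2)
    refine Nat.lt_of_mul_lt_mul_left (a := K) ?_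
    calc K * (#V ^ (q + 1) * n * R) = #V ^ (q + 1) * (K * n * R) := by ring
      _ < #V ^ (q + 1) * #V := by
        have : 0 < #V := by omega
        gcongr
        exact hN.trans_le hV
      _ = #V ^ (q + 2) := (pow_succ ..).symm
      _ ≤ K * #𝒯 := hmany
  obtain ⟨x, hx, Y, hYV, h, W, hWV, rfl, hRW, hW⟩ :=
    exists_large_link hℓ (fun T hT ↦ (hmem.1 hT).1) hcard
  exact hasMonotoneClique_succ_of_link hx hYV hWV rfl (fun w hw ↦ ⟨(hW w hw).1, (hW w hw).2.1⟩)
    (fun w hw ↦ (hW w hw).2.2.1) (fun w hw ↦ (hmem.1 (hW w hw).2.2.2).2)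
    (hR α W (splitNone col ℓ h) ℓ hℓ hRW.le)

lemma sq_mul_pow_mul_lt_pow {a b : ℕ} (hn : 2 ≤ n) :
    (p ^ 2 * n ^ a) ^ p * n * n ^ b < n ^ ((2 * p + a) * p + b + 2) :=
  calc (p ^ 2 * n ^ a) ^ p * n * n ^ b ≤ ((n ^ p) ^ 2 * n ^ a) ^ p * n * n ^ b := by
        gcongr
        exact Nat.lt_two_pow_self.le.trans (by gcongr)
    _ = n ^ ((2 * p + a) * p + b + 1) := by ring
    _ < n ^ ((2 * p + a) * p + b + 2) := Nat.pow_lt_pow_succ (by omega)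

theorem exists_forall_forcesMonotoneClique (hp : 3 ≤ p) (κ : Type*) [Finite κ] :
    ∃ C, ∀ n ≥ 2, ForcesMonotoneClique κ p n (n ^ C) := by
  induction p, hp using Nat.le_induction generalizing κ with
  | base =>
    obtain ⟨C, hC⟩ := exists_forall_hasMonotoneClique_three (Option κ)
    refine ⟨C, fun n hn α _ V col ℓ hℓ hV ↦ ?_⟩
    obtain ⟨_ | c, hc⟩ := hC n hn V col ℓ hℓ hV
    exacts [.inl hc, .inr ⟨c, hc⟩]
  | succ p hp ih =>
    obtain ⟨a, ha⟩ := ih κ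
    obtain ⟨b, hb⟩ := ih (Option κ)
    refine ⟨(2 * p + a) * p + b + 2 + p + a, fun n hn ↦
      (ha n hn).succ (hb n hn) (by omega) ?_ (Nat.pow_le_pow_right (by omega) (by omega)) ?_⟩
    · calc p ≤ 2 ^ p := Nat.lt_two_pow_self.le
        _ ≤ n ^ p := by gcongr
        _ ≤ n ^ ((2 * p + a) * p + b + 2 + p + a) := Nat.pow_le_pow_right (by omega) (by omega)
    · exact (sq_mul_pow_mul_lt_pow hn).trans_le (Nat.pow_le_pow_right (by omega) (by omega))

end Induction

section TightPath

variable {N n m : ℕ} {χ : Fin N → Fin N → Fin N → Bool} {x y z : Fin N}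

/-- There is a blue monotone tight path on `m + 2` vertices whose first two are `x` and `y`. -/
def HasBlueTightPathFrom (χ : Fin N → Fin N → Fin N → Bool) (m : ℕ) (x y : Fin N) : Prop :=
  ∃ f : Fin (m + 2) → Fin N, StrictMono f ∧ f 0 = x ∧ f 1 = y ∧
    ∀ (i : ℕ) (h : i + 2 < m + 2),
      χ (f ⟨i, by omega⟩) (f ⟨i + 1, by omega⟩) (f ⟨i + 2, h⟩) = false

lemma hasBlueTightPathFrom_zero (hxy : x < y) : HasBlueTightPathFrom χ 0 x y :=
  ⟨![x, y], by simp [hxy], rfl, rfl, fun i h ↦ by omega⟩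

lemma HasBlueTightPathFrom.cons (h : HasBlueTightPathFrom χ m y z) (hxy : x < y)
    (hχ : χ x y z = false) : HasBlueTightPathFrom χ (m + 1) x y := by
  obtain ⟨f, hf, rfl, rfl, hblue⟩ := h
  refine ⟨Matrix.vecCons x f, hf.vecCons hxy, rfl, rfl, fun i hi ↦ ?_⟩
  cases i with
  | zero => exact hχ
  | succ i => exact hblue i (by omega)

lemma HasBlueTightPathFrom.containsBlueTightPath (h : HasBlueTightPathFrom χ m x y)
    (hn : n ≤ m + 2) : ContainsBlueTightPath N n χ :=
  let ⟨f, hf, _, _, hblue⟩ := h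
  ⟨f ∘ Fin.castLE hn, hf.comp (Fin.strictMono_castLE hn), fun i _ ↦ hblue i (by omega)⟩

lemma exists_label_of_not_containsBlueTightPath (hn : 0 < n) (h : ¬ContainsBlueTightPath N n χ) :
    ∃ ℓ : Fin N → Fin N → ℕ, (∀ x y, ℓ x y < n) ∧
      ∀ x y z, x < y → y < z → χ x y z = false → ℓ y z < ℓ x y := by
  classical
  refine ⟨fun x y ↦ Nat.findGreatest (HasBlueTightPathFrom χ · x y) (n - 1), fun x y ↦ ?_,
    fun x y z hxy hyz hχ ↦ ?_⟩
  · exact (Nat.findGreatest_le _).trans_lt (by omega)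
  · have hpath := Nat.findGreatest_spec (P := (HasBlueTightPathFrom χ · y z)) (Nat.zero_le (n - 1))
      (hasBlueTightPathFrom_zero hyz)
    refine Nat.le_findGreatest ?_ (hpath.cons hxy hχ)
    by_contra! hlt
    exact h (hpath.containsBlueTightPath (by omega))

lemma IsMonotoneClique.containsRedClique3 {κ : Type*} {col : Fin N → Fin N → κ}
    {ℓ : Fin N → Fin N → ℕ} {c : κ} {S : Finset (Fin N)} {s : ℕ}
    (hS : IsMonotoneClique col ℓ c S) (hcard : #S = s)
    (hℓ : ∀ x y z, x < y → y < z → χ x y z = false → ℓ y z < ℓ x y) :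
    ContainsRedClique3 N s χ := by
  set f := S.orderEmbOfFin hcard
  have hfS (i) : f i ∈ S := S.orderEmbOfFin_mem hcard i
  refine ⟨f, f.strictMono, fun i j k hij hjk ↦ Bool.eq_true_of_not_eq_false fun hblue ↦ ?_⟩
  have hfij := f.strictMono hij
  have hfjk := f.strictMono hjk
  exact (hℓ _ _ _ hfij hfjk hblue).not_ge
    (hS.label_le _ (hfS i) _ (hfS j) _ (hfS k) hfij hfjk)

end TightPath

/-- for every `s ≥ 3` there is `C = C(s)` such that
`R_<(K_s^(3), P_n^(3)) ≤ C · n^C` for all `n ≥ 3`. -/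
theorem stmt3 (s : ℕ) (hs : 3 ≤ s) :
    ∃ C : ℕ, ∀ n : ℕ, 3 ≤ n → ordRamsey3 s n ≤ C * n ^ C := by
  obtain ⟨C, hC⟩ := exists_forall_forcesMonotoneClique hs Empty
  refine ⟨C + 1, fun n hn ↦ ?_⟩
  have hramsey : ordRamsey3 s n ≤ n ^ C := Nat.sInf_le fun χ ↦ by
    by_contra! ⟨hred, hblue⟩
    obtain ⟨ℓ, hℓ, hlt⟩ := exists_label_of_not_containsBlueTightPath (by omega) hblue
    obtain ⟨S, -, hS, hclique⟩ | ⟨⟨⟩, -⟩ :=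
      hC n (by omega) _ univ (fun _ _ ↦ none) ℓ hℓ (card_fin _).ge
    exact hred (hclique.containsRedClique3 hS hlt)
  calc ordRamsey3 s n ≤ 1 * n ^ C := by rwa [one_mul]
    _ ≤ (C + 1) * n ^ (C + 1) := by gcongr <;> omega
end

section
/- For every integer s ≥ 2, there is a constant C = C(s) such that for every n ≥ 1 and every coloring χ of the pairs of {1,…,N} with colors from {1,…,n}, where N ≥ C·n^C, there exists a lexicographic set of size s whose associated colors satisfy c_1 ≥ c_2 ≥ … ≥ c_{s−1} (a non-increasing lexicographic set). -/
/-!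
Suppose that no set of more than `M` vertices avoids the colors of `K`, and that `S` contains
neither a forward chain of length `a` nor a backward chain of length `b` with first, respectively
last, color in `K`. We bound `#S` by a power of `2nM`, by induction on `a` and `b`.

For a threshold `t`, call `T` *low* if it has no forward chain of length `a - 1` in the colors of
`K` below `t`, and *high* if it has no backward chain of length `b - 1` in those from `t` on. By
induction, a set that is both low and high has boundedly many elements. A color-`c` forward
neighborhood in `S` is low for `t = c + 1` and a backward one is high for `t = c`, since otherwise
a chain could be extended; hence few `K`-colored pairs go from a low set to a high one, and by
Turán's theorem only few vertices lie both in a packing of low sets and in a packing of high sets.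
All other vertices avoid one of the two packings. Every set is low for `t = 0` and high for `t = n`,
so most vertices change sides at some step from `t` to `t + 1`; the vertices which do so for the
most popular `t` contain neither a large high set for `t` nor a large low set for `t + 1`, so
their neighborhoods in every color of `K` are small on one side. By Turán's theorem again there are
few of them.
-/

open Finset
open Rel (interedges)

section General

variable {α β : Type*}

theorem card_interedges_le_of_card_fiber_right_le {r : α → β → Prop} [∀ x, DecidablePred (r x)]
    {Q : Finset α} {P : Finset β} {D : ℕ} (h : ∀ y ∈ P, #{x ∈ Q | r x y} ≤ D) :
    #(interedges r Q P) ≤ D * #P := by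
  simp only [interedges, card_filter, sum_product_right] at h ⊢
  exact (sum_le_card_nsmul P _ D h).trans_eq (mul_comm _ _)

theorem card_interedges_le_of_card_fiber_left_le {r : α → β → Prop} [∀ x, DecidablePred (r x)]
    {Q : Finset α} {P : Finset β} {D : ℕ} (h : ∀ x ∈ Q, #{y ∈ P | r x y} ≤ D) :
    #(interedges r Q P) ≤ D * #Q := by
  simp only [interedges, card_filter, sum_product] at h ⊢
  exact (sum_le_card_nsmul Q _ D h).trans_eq (mul_comm _ _)

theorem card_interedges_biUnion_le [DecidableEq α] [DecidableEq β] {r : α → β → Prop}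
    [∀ x, DecidablePred (r x)] {F : Finset (Finset α)} {G : Finset (Finset β)} {D : ℕ}
    (h : ∀ Q ∈ F, ∀ P ∈ G, #(interedges r Q P) ≤ D) :
    #(interedges r (F.biUnion id) (G.biUnion id)) ≤ #F * #G * D := by
  rw [Rel.interedges_biUnion, ← card_product]
  refine card_biUnion_le_card_mul _ _ _ fun q hq => ?_
  obtain ⟨hQ, hP⟩ := mem_product.1 hq
  exact h _ hQ _ hP

/-- Turán's theorem for the complement of `G`. -/
theorem sq_card_le_of_indepSetFree [Fintype α] {G : SimpleGraph α}
    [DecidableRel G.Adj] {m : ℕ} (h : G.IndepSetFree (m + 1)) :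
    Fintype.card α ^ 2 ≤ m * (2 * #G.edgeFinset + Fintype.card α) := by
  classical
  set v := Fintype.card α with hv
  have hfree : Gᶜ.CliqueFree (m + 1) := (SimpleGraph.cliqueFree_compl G).2 h
  rcases m.eq_zero_or_pos with rfl | hm
  · have : v = 0 := by
      rw [hv, Fintype.card_eq_zero_iff]
      exact SimpleGraph.cliqueFree_one.1 hfree
    simp [this]
  have hturan : 2 * m * #Gᶜ.edgeFinset ≤ (m - 1) * v ^ 2 := by
    refine le_trans (Nat.mul_le_mul_left _ ?_) SimpleGraph.mul_card_edgeFinset_turanGraph_le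
    rw [SimpleGraph.card_edgeFinset_turanGraph]
    exact hfree.card_edgeFinset_le
  have hsum : 2 * (#G.edgeFinset + #Gᶜ.edgeFinset) + v = v ^ 2 := by
    have : #G.edgeFinset + #Gᶜ.edgeFinset = v.choose 2 := by
      rw [← SimpleGraph.card_edgeFinset_top_eq_card_choose_two, ← card_union_of_disjoint
        (SimpleGraph.disjoint_edgeFinset.2 disjoint_compl_right), ← SimpleGraph.edgeFinset_sup]
      congr!
      exact sup_compl_eq_top
    rw [this, Nat.choose_two_right, Nat.mul_div_cancel' (Nat.even_mul_pred_self v).two_dvd]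
    cases v <;> simp; ring
  obtain ⟨m, rfl⟩ := Nat.exists_eq_succ_of_ne_zero hm.ne'
  simp only [Nat.succ_eq_add_one, Nat.add_sub_cancel] at hturan ⊢
  nlinarith

theorem sq_card_le_of_pairwise_not_card_le {r : α → α → Prop} [DecidableRel r] {W : Finset α}
    {m : ℕ} (h : ∀ I ⊆ W, (I : Set α).Pairwise (fun x y => ¬ r x y) → #I ≤ m) :
    #W ^ 2 ≤ m * (2 * #(interedges r W W) + #W) := by
  classical
  let G : SimpleGraph W := SimpleGraph.fromRel fun x y => r x y
  have hedges : #G.edgeFinset ≤ #(interedges r W W) := by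
    rw [← card_image_of_injective _ (Sym2.map.injective Subtype.val_injective)]
    refine (card_le_card ?_).trans (card_image_le (f := fun p => s(p.1, p.2)))
    simp only [subset_iff, mem_image, SimpleGraph.mem_edgeFinset, forall_exists_index, and_imp]
    rintro _ ⟨x, y⟩ ⟨-, hxy | hyx⟩ rfl
    · exact ⟨(x, y), Rel.mk_mem_interedges_iff.2 ⟨x.2, y.2, hxy⟩, rfl⟩
    · exact ⟨(y, x), Rel.mk_mem_interedges_iff.2 ⟨y.2, x.2, hyx⟩, Sym2.eq_swap⟩
  have hfree : G.IndepSetFree (m + 1) := by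
    intro t ht
    have hle := h (t.map (Function.Embedding.subtype _)) (map_subtype_subset t) ?_
    · rw [card_map, ht.card_eq] at hle
      omega
    · simp only [coe_map, Function.Embedding.subtype_apply]
      rintro _ ⟨x, hx, rfl⟩ _ ⟨y, hy, rfl⟩ hxy hr
      have hne : x ≠ y := fun h => hxy (congrArg _ h)
      exact ht.isIndepSet hx hy hne ⟨hne, Or.inl hr⟩
  have hturan := sq_card_le_of_indepSetFree hfree
  rw [Fintype.card_coe] at hturan
  exact hturan.trans (by gcongr)

theorem exists_packing [DecidableEq α] {p : Finset α → Prop} (hp : Antitone p) {L : ℕ}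
    (hL : 0 < L) (S : Finset α) :
    ∃ F : Finset (Finset α), (∀ Q ∈ F, Q ⊆ S ∧ #Q = L ∧ p Q) ∧ #F * L ≤ #S ∧
      ∀ T ⊆ S \ F.biUnion id, p T → #T < L := by
  induction S using Finset.strongInduction with
  | H S ih =>
    by_cases h : ∃ Q ⊆ S, #Q = L ∧ p Q
    · obtain ⟨Q, hQS, hQL, hQ⟩ := h
      have hcard : #(S \ Q) + #Q = #S := card_sdiff_add_card_eq_card hQS
      obtain ⟨F, hF, hFL, hrest⟩ := ih (S \ Q) <|
        sdiff_ssubset hQS (card_pos.1 (hQL ▸ hL))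
      refine ⟨insert Q F, ?_, ?_, ?_⟩
      · simp only [mem_insert, forall_eq_or_imp]
        exact ⟨⟨hQS, hQL, hQ⟩, fun P hP => ⟨(hF P hP).1.trans sdiff_subset, (hF P hP).2⟩⟩
      · calc #(insert Q F) * L ≤ (#F + 1) * L := Nat.mul_le_mul_right _ (card_insert_le _ _)
          _ ≤ #S := by linarith
      · rwa [biUnion_insert, id, ← sup_eq_union, ← sdiff_sdiff_left]
    · refine ⟨∅, by simp, by simp, fun T hT hpT => ?_⟩
      by_contra! hLT
      obtain ⟨Q, hQT, hQL⟩ := exists_subset_card_eq hLT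
      exact h ⟨Q, hQT.trans (hT.trans sdiff_subset), hQL, hp hQT hpT⟩

/-- A point of `S` outside `R 0`, `R' m` and all `W t` must cross over from `R'` to `R` at some
step. -/
theorem card_le_of_forall_subset_union [DecidableEq α] {S : Finset α} {R R' W : ℕ → Finset α}
    {x w z : ℕ} (hcover : ∀ t, S ⊆ R t ∪ R' t ∪ W t) (hR : #(R 0) ≤ x) (hW : ∀ t, #(W t) ≤ w)
    (hcross : ∀ t, #(R' t ∩ R (t + 1)) ≤ z) (m : ℕ) :
    #(S \ R' m) ≤ x + m * z + (m + 1) * w := by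
  induction m with
  | zero =>
    have hsub : S \ R' 0 ⊆ R 0 ∪ W 0 := by grind
    have := (card_le_card hsub).trans (card_union_le _ _)
    have := hW 0
    omega
  | succ m ih =>
    have hsub : S \ R' (m + 1) ⊆ S \ R' m ∪ R' m ∩ R (m + 1) ∪ W (m + 1) := by
      intro v
      have := @hcover (m + 1) v
      grind
    calc #(S \ R' (m + 1)) ≤ #(S \ R' m) + #(R' m ∩ R (m + 1)) + #(W (m + 1)) :=
          (card_le_card hsub).trans <| (card_union_le _ _).trans <|
            Nat.add_le_add_right (card_union_le _ _) _
      _ ≤ (x + m * z + (m + 1) * w) + z + w :=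
          Nat.add_le_add (Nat.add_le_add ih (hcross m)) (hW (m + 1))
      _ = x + (m + 1) * z + (m + 1 + 1) * w := by ring

end General

section Avoiding

variable {α κ : Type*} [LinearOrder α] {χ : α → α → κ} {S T : Finset α} {K A B : Finset κ}

/-- The relation joining `x` to a later vertex `y` when the pair has a color in `K`. -/
def ColoredIn (χ : α → α → κ) (K : Finset κ) (x y : α) : Prop := x < y ∧ χ x y ∈ K

instance [DecidableEq κ] : DecidableRel (ColoredIn χ K) :=
  fun x y => inferInstanceAs (Decidable (x < y ∧ χ x y ∈ K))

/-- No pair of elements of `T` has a color in `K`. -/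
def Avoids (χ : α → α → κ) (K : Finset κ) (T : Finset α) : Prop :=
  (T : Set α).Pairwise fun x y => ¬ ColoredIn χ K x y

theorem Avoids.subset (hST : S ⊆ T) (h : Avoids χ K T) : Avoids χ K S :=
  Set.Pairwise.mono (coe_subset.2 hST) h

theorem avoids_empty : Avoids χ ∅ S := fun _ _ _ _ _ h => notMem_empty _ h.2

theorem Avoids.of_subset_union [DecidableEq κ] (hK : K ⊆ A ∪ B) (hA : Avoids χ A S)
    (hB : Avoids χ B S) : Avoids χ K S := by
  rintro x hx y hy hne ⟨hxy, hc⟩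
  rcases mem_union.1 (hK hc) with hcA | hcB
  exacts [hA hx hy hne ⟨hxy, hcA⟩, hB hx hy hne ⟨hxy, hcB⟩]

end Avoiding

section Chains

variable {α κ : Type*} [LinearOrder α] [LinearOrder κ] {χ : α → α → κ} {S T : Finset α}
  {K A : Finset κ} {k : ℕ} {c d : κ} {v : α}

/-- `S` contains a lexicographic set of size `k` of the first kind, with non-increasing colors at
most `c`. The chain is a list of pairs of a vertex and the common color of its pairs with the later
vertices; the color paired with the last vertex only has to keep the sequence monotone. -/
def HasForwardChain (χ : α → α → κ) (k : ℕ) (c : κ) (S : Finset α) : Prop :=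
  ∃ l : List (α × κ), l.length = k ∧ (∀ p ∈ l, p.1 ∈ S ∧ p.2 ≤ c) ∧
    l.Pairwise fun p q => p.1 < q.1 ∧ χ p.1 q.1 = p.2 ∧ q.2 ≤ p.2

/-- `S` contains a lexicographic set of size `k` of the second kind, with non-increasing colors at
least `c`. Each vertex is listed with the common color of its pairs with the earlier vertices; the
color paired with the first vertex only has to keep the sequence monotone. -/
def HasBackwardChain (χ : α → α → κ) (k : ℕ) (c : κ) (S : Finset α) : Prop :=
  ∃ l : List (α × κ), l.length = k ∧ (∀ p ∈ l, p.1 ∈ S ∧ c ≤ p.2) ∧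
    l.Pairwise fun p q => p.1 < q.1 ∧ χ p.1 q.1 = q.2 ∧ q.2 ≤ p.2

theorem HasForwardChain.mono (hcd : c ≤ d) (hST : S ⊆ T) :
    HasForwardChain χ k c S → HasForwardChain χ k d T := by
  rintro ⟨l, hlen, hl, hchain⟩
  exact ⟨l, hlen, fun p hp => ⟨hST (hl p hp).1, (hl p hp).2.trans hcd⟩, hchain⟩

theorem HasBackwardChain.mono (hcd : c ≤ d) (hST : S ⊆ T) :
    HasBackwardChain χ k d S → HasBackwardChain χ k c T := by
  rintro ⟨l, hlen, hl, hchain⟩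
  exact ⟨l, hlen, fun p hp => ⟨hST (hl p hp).1, hcd.trans (hl p hp).2⟩, hchain⟩

theorem HasForwardChain.cons (hv : v ∈ S)
    (h : HasForwardChain χ k c {w ∈ S | ColoredIn χ {c} v w}) : HasForwardChain χ (k + 1) c S := by
  obtain ⟨l, hlen, hl, hchain⟩ := h
  simp only [mem_filter, ColoredIn, mem_singleton] at hl
  refine ⟨(v, c) :: l, by simp [hlen], ?_, List.pairwise_cons.2 ⟨?_, hchain⟩⟩
  · simpa [hv] using fun x e hx => ⟨(hl _ hx).1.1, (hl _ hx).2⟩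
  · exact fun p hp => ⟨(hl p hp).1.2.1, (hl p hp).1.2.2, (hl p hp).2⟩

theorem HasBackwardChain.concat (hv : v ∈ S)
    (h : HasBackwardChain χ k c {w ∈ S | ColoredIn χ {c} w v}) :
    HasBackwardChain χ (k + 1) c S := by
  obtain ⟨l, hlen, hl, hchain⟩ := h
  simp only [mem_filter, ColoredIn, mem_singleton] at hl
  refine ⟨l ++ [(v, c)], by simp [hlen], ?_,
    List.pairwise_append.2 ⟨hchain, List.pairwise_singleton _ _, ?_⟩⟩
  · simp only [List.mem_append, List.mem_singleton]
    rintro p (hp | rfl)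
    exacts [⟨(hl p hp).1.1, (hl p hp).2⟩, ⟨hv, le_rfl⟩]
  · simp only [List.mem_singleton]
    rintro p hp _ rfl
    exact ⟨(hl p hp).1.2.1, (hl p hp).1.2.2, (hl p hp).2⟩

theorem HasForwardChain.exists_strictMono (h : HasForwardChain χ k c S) :
    ∃ f : Fin k → α, StrictMono f ∧ ∃ d : Fin k → κ, Antitone d ∧
      ∀ i j, i < j → χ (f i) (f j) = d i := by
  obtain ⟨l, rfl, -, hchain⟩ := h
  rw [List.pairwise_iff_get] at hchain
  exact ⟨fun i => (l.get i).1, fun i j hij => (hchain i j hij).1,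
    fun i => (l.get i).2, antitone_iff_forall_lt.2 fun i j hij => (hchain i j hij).2.2,
    fun i j hij => (hchain i j hij).2.1⟩

theorem HasBackwardChain.exists_strictMono (h : HasBackwardChain χ k c S) :
    ∃ f : Fin k → α, StrictMono f ∧ ∃ d : Fin k → κ, Antitone d ∧
      ∀ i j, i < j → χ (f i) (f j) = d j := by
  obtain ⟨l, rfl, -, hchain⟩ := h
  rw [List.pairwise_iff_get] at hchain
  exact ⟨fun i => (l.get i).1, fun i j hij => (hchain i j hij).1,
    fun i => (l.get i).2, antitone_iff_forall_lt.2 fun i j hij => (hchain i j hij).2.2,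
    fun i j hij => (hchain i j hij).2.1⟩

/-- `S` has no forward chain of length `k` whose colors are bounded by a color of `K`. -/
def ForwardFree (χ : α → α → κ) (k : ℕ) (K : Finset κ) (S : Finset α) : Prop :=
  ∀ c ∈ K, ¬ HasForwardChain χ k c S

/-- `S` has no backward chain of length `k` whose colors are bounded below by a color of `K`. -/
def BackwardFree (χ : α → α → κ) (k : ℕ) (K : Finset κ) (S : Finset α) : Prop :=
  ∀ c ∈ K, ¬ HasBackwardChain χ k c S

theorem ForwardFree.mono (hAK : A ⊆ K) (hTS : T ⊆ S) (h : ForwardFree χ k K S) :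
    ForwardFree χ k A T :=
  fun c hc hchain => h c (hAK hc) (hchain.mono le_rfl hTS)

theorem BackwardFree.mono (hAK : A ⊆ K) (hTS : T ⊆ S) (h : BackwardFree χ k K S) :
    BackwardFree χ k A T :=
  fun c hc hchain => h c (hAK hc) (hchain.mono le_rfl hTS)

theorem antitone_forwardFree : Antitone (ForwardFree χ k K) :=
  fun _ _ hTS => ForwardFree.mono Subset.rfl hTS

theorem antitone_backwardFree : Antitone (BackwardFree χ k K) :=
  fun _ _ hTS => BackwardFree.mono Subset.rfl hTS

theorem forwardFree_zero_iff : ForwardFree χ 0 K S ↔ K = ∅ := by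
  simp [ForwardFree, HasForwardChain, eq_empty_iff_forall_notMem]

theorem backwardFree_zero_iff : BackwardFree χ 0 K S ↔ K = ∅ := by
  simp [BackwardFree, HasBackwardChain, eq_empty_iff_forall_notMem]

theorem ForwardFree.filter_coloredIn (h : ForwardFree χ (k + 1) K S) (hv : v ∈ S) (hc : c ∈ K)
    (hA : ∀ e ∈ A, e ≤ c) : ForwardFree χ k A {w ∈ S | ColoredIn χ {c} v w} :=
  fun e he hchain => h c hc ((hchain.mono (hA e he) Subset.rfl).cons hv)

theorem BackwardFree.filter_coloredIn (h : BackwardFree χ (k + 1) K S) (hv : v ∈ S) (hc : c ∈ K)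
    (hA : ∀ e ∈ A, c ≤ e) : BackwardFree χ k A {w ∈ S | ColoredIn χ {c} w v} :=
  fun e he hchain => h c hc ((hchain.mono (hA e he) Subset.rfl).concat hv)

end Chains

section Recursion

variable {α : Type*} [LinearOrder α] {n : ℕ} {χ : α → α → Fin n} {K : Finset (Fin n)}
  {S Q P : Finset α} {F G : Finset (Finset α)} {a b t D L M : ℕ}

/-- `T` has no forward chain of length `a` in the colors of `K` below the threshold `t`. -/
abbrev IsLow (χ : α → α → Fin n) (a : ℕ) (K : Finset (Fin n)) (t : ℕ) (T : Finset α) : Prop :=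
  ForwardFree χ a {c ∈ K | (c : ℕ) < t} T

/-- `T` has no backward chain of length `b` in the colors of `K` from the threshold `t` on. -/
abbrev IsHigh (χ : α → α → Fin n) (b : ℕ) (K : Finset (Fin n)) (t : ℕ) (T : Finset α) : Prop :=
  BackwardFree χ b {c ∈ K | t ≤ (c : ℕ)} T

theorem isLow_zero : IsLow χ a K 0 S := by simp [ForwardFree]

theorem isHigh_card : IsHigh χ b K n S := by simp [BackwardFree]

theorem IsLow.of_succ (h : IsLow χ a K (t + 1) S) : IsLow χ a K t S :=
  h.mono (monotone_filter_right _ fun _ _ => Nat.lt_succ_of_lt) Subset.rfl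

theorem card_interedges_coloredIn_le (hf : ForwardFree χ (a + 1) K S)
    (hb : BackwardFree χ (b + 1) K S) (hQS : Q ⊆ S) (hPS : P ⊆ S)
    (hQ : ∀ T ⊆ Q, IsHigh χ b K t T → #T ≤ D)
    (hP : ∀ T ⊆ P, IsLow χ a K (t + 1) T → #T ≤ D) :
    #(interedges (ColoredIn χ K) Q P) ≤ n * (D * (#Q + #P)) := by
  have hcolor : ∀ c ∈ K, #(interedges (ColoredIn χ {c}) Q P) ≤ D * (#Q + #P) := by
    intro c hc
    rcases lt_or_ge (c : ℕ) t with hct | htc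
    · refine (card_interedges_le_of_card_fiber_right_le fun y hy =>
        hQ _ (filter_subset _ _) ?_).trans (Nat.mul_le_mul_left _ (Nat.le_add_left _ _))
      refine (hb.filter_coloredIn (hPS hy) hc fun e he => ?_).mono Subset.rfl
        (filter_subset_filter _ hQS)
      exact Fin.le_def.2 (hct.le.trans (mem_filter.1 he).2)
    · refine (card_interedges_le_of_card_fiber_left_le fun x hx =>
        hP _ (filter_subset _ _) ?_).trans (Nat.mul_le_mul_left _ (Nat.le_add_right _ _))
      refine (hf.filter_coloredIn (hQS hx) hc fun e he => ?_).mono Subset.rfl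
        (filter_subset_filter _ hPS)
      exact Fin.le_def.2 ((Nat.lt_succ_iff.1 (mem_filter.1 he).2).trans htc)
  have hcover : interedges (ColoredIn χ K) Q P ⊆
      K.biUnion fun c => interedges (ColoredIn χ {c}) Q P := by
    rintro ⟨x, y⟩ hxy
    simpa [Rel.mk_mem_interedges_iff, ColoredIn, and_assoc, and_left_comm] using hxy
  calc #(interedges (ColoredIn χ K) Q P)
      ≤ #K * (D * (#Q + #P)) :=
        (card_le_card hcover).trans (card_biUnion_le_card_mul _ _ _ hcolor)
    _ ≤ n * (D * (#Q + #P)) := Nat.mul_le_mul_right _ (card_finset_fin_le K)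

theorem mul_card_interedges_biUnion_le (hf : ForwardFree χ (a + 1) K S)
    (hb : BackwardFree χ (b + 1) K S)
    (hcut : ∀ T ⊆ S, IsLow χ a K t T → IsHigh χ b K t T → #T ≤ M)
    (hF : ∀ Q ∈ F, Q ⊆ S ∧ #Q = L ∧ IsLow χ a K t Q)
    (hG : ∀ P ∈ G, P ⊆ S ∧ #P = L ∧ IsHigh χ b K t P)
    (hFL : #F * L ≤ #S) (hGL : #G * L ≤ #S) :
    L * #(interedges (ColoredIn χ K) (F.biUnion id) (G.biUnion id)) ≤ 2 * n * M * #S ^ 2 := by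
  have hpair : ∀ Q ∈ F, ∀ P ∈ G,
      #(interedges (ColoredIn χ K) Q P) ≤ n * (M * (L + L)) := by
    intro Q hQ P hP
    obtain ⟨hQS, hQL, hQlow⟩ := hF Q hQ
    obtain ⟨hPS, hPL, hPhigh⟩ := hG P hP
    have := card_interedges_coloredIn_le (D := M) hf hb hQS hPS
      (fun T hT => hcut T (hT.trans hQS) (antitone_forwardFree hT hQlow))
      (fun T hT hlow => hcut T (hT.trans hPS) hlow.of_succ
        (antitone_backwardFree hT hPhigh))
    rwa [hQL, hPL] at this
  calc L * #(interedges (ColoredIn χ K) (F.biUnion id) (G.biUnion id))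
      ≤ L * (#F * #G * (n * (M * (L + L)))) :=
        Nat.mul_le_mul_left _ (card_interedges_biUnion_le hpair)
    _ = 2 * n * M * (#F * L * (#G * L)) := by ring
    _ ≤ 2 * n * M * (#S * #S) := by gcongr
    _ = 2 * n * M * #S ^ 2 := by ring

theorem four_mul_le_of_sparse {s w e : ℕ} (hn : 0 < n) (hM : 0 < M) (hs : 8 * n * M ≤ s)
    (he : 128 * n ^ 3 * M ^ 2 * e ≤ 2 * n * M * s ^ 2) (hw : w ^ 2 ≤ M * (2 * e + w)) :
    4 * n * w ≤ s := by
  by_contra! hsw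
  have hMw : 2 * M < w := by
    have : 4 * n * (2 * M) < 4 * n * w := by linarith
    exact Nat.lt_of_mul_lt_mul_left this
  have he_le : 4 * M * e ≤ w ^ 2 := by
    have : 32 * n ^ 3 * M * (4 * M * e) ≤ 32 * n ^ 3 * M * w ^ 2 := by
      calc 32 * n ^ 3 * M * (4 * M * e) = 128 * n ^ 3 * M ^ 2 * e := by ring
        _ ≤ 2 * n * M * s ^ 2 := he
        _ ≤ 2 * n * M * (4 * n * w) ^ 2 := by gcongr
        _ = 32 * n ^ 3 * M * w ^ 2 := by ring
    exact Nat.le_of_mul_le_mul_left this (by positivity)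
  nlinarith

/-- `R` is what remains of `S` after packing low sets, `W` the part of that packing covered by a
packing of high sets, and `R'` the part left uncovered. -/
theorem exists_threshold_cover (hn : 0 < n) (hM : 0 < M) (hS : 8 * n * M ≤ #S)
    (hL : L = 128 * n ^ 3 * M ^ 2)
    (hf : ForwardFree χ (a + 1) K S) (hb : BackwardFree χ (b + 1) K S)
    (hcut : ∀ T ⊆ S, IsLow χ a K t T → IsHigh χ b K t T → #T ≤ M)
    (havoid : ∀ T ⊆ S, Avoids χ K T → #T ≤ M) :
    ∃ R R' W : Finset α, S ⊆ R ∪ R' ∪ W ∧ R ⊆ S ∧ 4 * n * #W ≤ #S ∧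
      (∀ T ⊆ R, IsLow χ a K t T → #T < L) ∧
      (∀ T ⊆ R', IsHigh χ b K t T → #T < L) := by
  have hLpos : 0 < L := hL ▸ by positivity
  obtain ⟨F, hF, hFL, hRlow⟩ := exists_packing
    (p := IsLow χ a K t) antitone_forwardFree hLpos S
  set X := F.biUnion id
  have hXS : X ⊆ S := biUnion_subset.2 fun Q hQ => (hF Q hQ).1
  obtain ⟨G, hG, hGL, hRhigh⟩ := exists_packing
    (p := IsHigh χ b K t) antitone_backwardFree hLpos X
  set W := G.biUnion id
  have hWX : W ⊆ X := biUnion_subset.2 fun P hP => (hG P hP).1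
  refine ⟨S \ X, X \ W, W, fun v hv => by grind, sdiff_subset, ?_, hRlow, hRhigh⟩
  have hsparse : L * #(interedges (ColoredIn χ K) W W) ≤ 2 * n * M * #S ^ 2 :=
    (Nat.mul_le_mul_left _ (card_le_card (Rel.interedges_mono hWX Subset.rfl))).trans <|
      mul_card_interedges_biUnion_le hf hb hcut hF
        (fun P hP => ⟨(hG P hP).1.trans hXS, (hG P hP).2⟩) hFL (hGL.trans (card_le_card hXS))
  exact four_mul_le_of_sparse hn hM hS (hL ▸ hsparse) <|
    sq_card_le_of_pairwise_not_card_le fun I hI => havoid I (hI.trans (hWX.trans hXS))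

theorem card_le_of_consecutive_thresholds (hn : 0 < n) (hL : 0 < L)
    (hf : ForwardFree χ (a + 1) K S) (hb : BackwardFree χ (b + 1) K S)
    (havoid : ∀ T ⊆ S, Avoids χ K T → #T ≤ M) {Z : Finset α} (hZS : Z ⊆ S)
    (hlow : ∀ T ⊆ Z, IsLow χ a K (t + 1) T → #T < L)
    (hhigh : ∀ T ⊆ Z, IsHigh χ b K t T → #T < L) :
    #Z ≤ 5 * n * L * M := by
  rcases Nat.eq_zero_or_pos #Z with hZ | hZ
  · simp [hZ]
  have hsparse : #(interedges (ColoredIn χ K) Z Z) ≤ n * (L * (#Z + #Z)) :=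
    card_interedges_coloredIn_le hf hb hZS hZS
      (fun T hT h => (hhigh T hT h).le) (fun T hT h => (hlow T hT h).le)
  have hturan : #Z ^ 2 ≤ M * (2 * #(interedges (ColoredIn χ K) Z Z) + #Z) :=
    sq_card_le_of_pairwise_not_card_le fun I hI => havoid I (hI.trans hZS)
  have hnL : 1 ≤ n * L := Nat.mul_pos hn hL
  refine Nat.le_of_mul_le_mul_right ?_ hZ
  calc #Z * #Z = #Z ^ 2 := (sq _).symm
    _ ≤ M * (2 * (n * (L * (#Z + #Z))) + 1 * #Z) := by rw [one_mul]; grw [hturan, hsparse]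
    _ ≤ M * (2 * (n * (L * (#Z + #Z))) + n * L * #Z) := by gcongr
    _ = 5 * n * L * M * #Z := by ring

theorem card_le_of_forall_threshold (hn : 0 < n) (hM : 0 < M)
    (hf : ForwardFree χ (a + 1) K S) (hb : BackwardFree χ (b + 1) K S)
    (hcut : ∀ t, ∀ T ⊆ S, IsLow χ a K t T → IsHigh χ b K t T → #T ≤ M)
    (havoid : ∀ T ⊆ S, Avoids χ K T → #T ≤ M) :
    #S ≤ 2 ^ 11 * n ^ 5 * M ^ 3 := by
  rcases lt_or_ge #S (8 * n * M) with hS | hS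
  · have h₁ : n ≤ n ^ 5 := Nat.le_self_pow (by norm_num) n
    have h₂ : M ≤ M ^ 3 := Nat.le_self_pow (by norm_num) M
    calc #S ≤ 8 * n * M := hS.le
      _ ≤ 2 ^ 11 * n ^ 5 * M ^ 3 := by gcongr; norm_num
  obtain ⟨L, hL⟩ : ∃ L, L = 128 * n ^ 3 * M ^ 2 := ⟨_, rfl⟩
  have hLpos : 0 < L := hL ▸ by positivity
  choose R R' W hcover hRS hW hlow hhigh using fun t =>
    exists_threshold_cover hn hM hS hL hf hb (hcut t) havoid
  have hcross : ∀ t, #(R' t ∩ R (t + 1)) ≤ 5 * n * L * M := fun t =>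
    card_le_of_consecutive_thresholds hn hLpos hf hb havoid
      (inter_subset_right.trans (hRS (t + 1)))
      (fun T hT => hlow (t + 1) T (hT.trans inter_subset_right))
      (fun T hT => hhigh t T (hT.trans inter_subset_left))
  have hfirst : #(R 0) ≤ L := (hlow 0 _ Subset.rfl isLow_zero).le
  have hlast : #(R' n) ≤ L := (hhigh n _ Subset.rfl isHigh_card).le
  have hWdiv : ∀ t, #(W t) ≤ #S / (4 * n) := fun t =>
    (Nat.le_div_iff_mul_le (by positivity)).2 (by rw [mul_comm]; exact hW t)
  have hcard := card_le_of_forall_subset_union hcover hfirst hWdiv hcross n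
  have hdiff : #S ≤ #(S \ R' n) + #(R' n) := card_le_card_sdiff_add_card
  have hsmall : 2 * ((n + 1) * (#S / (4 * n))) ≤ #S := by
    calc 2 * ((n + 1) * (#S / (4 * n))) ≤ 2 * ((n + n) * (#S / (4 * n))) := by gcongr; exact hn
      _ = 4 * n * (#S / (4 * n)) := by ring
      _ ≤ #S := Nat.mul_div_le _ _
  have hLle : L ≤ n ^ 2 * L * M := by
    calc L = 1 * L * 1 := by ring
      _ ≤ n ^ 2 * L * M := by gcongr; exacts [Nat.pow_pos hn, hM]
  calc #S ≤ 14 * (n ^ 2 * L * M) := by linarith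
    _ = 1792 * n ^ 5 * M ^ 3 := by rw [hL]; ring
    _ ≤ 2 ^ 11 * n ^ 5 * M ^ 3 := by gcongr; norm_num

/-- Sets without forward chains of length `a` and backward chains of length `b` in the colors of `K`
are at most polynomially larger than their subsets avoiding `K`. The base `2 * n * M` makes the
bounds closed under composition, without multiplicative constants to keep track of. -/
def PowerBound (α : Type*) [LinearOrder α] (a b C : ℕ) : Prop :=
  ∀ ⦃n M : ℕ⦄, 0 < n → 0 < M → ∀ ⦃χ : α → α → Fin n⦄ ⦃K : Finset (Fin n)⦄ ⦃S : Finset α⦄,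
    ForwardFree χ a K S → BackwardFree χ b K S → (∀ T ⊆ S, Avoids χ K T → #T ≤ M) →
      #S ≤ (2 * n * M) ^ C

theorem powerBound_zero_left : PowerBound α 0 b 1 := by
  intro n M hn _ χ K S hf _ havoid
  obtain rfl := forwardFree_zero_iff.1 hf
  rw [pow_one]
  exact (havoid S Subset.rfl avoids_empty).trans (Nat.le_mul_of_pos_left _ (by omega))

theorem powerBound_zero_right : PowerBound α a 0 1 := by
  intro n M hn _ χ K S _ hb havoid
  obtain rfl := backwardFree_zero_iff.1 hb
  rw [pow_one]
  exact (havoid S Subset.rfl avoids_empty).trans (Nat.le_mul_of_pos_left _ (by omega))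

/-- Bound first the subsets avoiding the lower half of `K` in terms of those avoiding all of `K`,
then `S` in terms of the former. -/
theorem PowerBound.card_le_of_isLow_of_isHigh {C₁ C₂ : ℕ} (h₁ : PowerBound α a (b + 1) C₁)
    (h₂ : PowerBound α (a + 1) b C₂) (hn : 0 < n) (hM : 0 < M) (hf : ForwardFree χ (a + 1) K S)
    (hb : BackwardFree χ (b + 1) K S) (havoid : ∀ T ⊆ S, Avoids χ K T → #T ≤ M)
    (hlow : IsLow χ a K t S) (hhigh : IsHigh χ b K t S) :
    #S ≤ (2 * n * M) ^ ((C₂ + 1) * C₁) := by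
  have havoid_low : ∀ T ⊆ S, Avoids χ {c ∈ K | (c : ℕ) < t} T → #T ≤ (2 * n * M) ^ C₂ := by
    intro T hT hTlow
    refine h₂ hn hM (hf.mono (filter_subset _ _) hT) (antitone_backwardFree hT hhigh) ?_
    refine fun U hU hUhigh => havoid U (hU.trans hT) ?_
    refine (hTlow.subset hU).of_subset_union (fun c hc => ?_) hUhigh
    simpa [hc] using lt_or_ge (c : ℕ) t
  calc #S ≤ (2 * n * (2 * n * M) ^ C₂) ^ C₁ :=
        h₁ hn (by positivity) hlow (hb.mono (filter_subset _ _) Subset.rfl) havoid_low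
    _ ≤ ((2 * n * M) * (2 * n * M) ^ C₂) ^ C₁ :=
        Nat.pow_le_pow_left (Nat.mul_le_mul_right _ (Nat.le_mul_of_pos_right _ hM)) _
    _ = (2 * n * M) ^ ((C₂ + 1) * C₁) := by rw [← pow_succ', pow_mul]

theorem PowerBound.succ {C₁ C₂ : ℕ} (h₁ : PowerBound α a (b + 1) C₁)
    (h₂ : PowerBound α (a + 1) b C₂) :
    PowerBound α (a + 1) (b + 1) (11 + ((C₂ + 1) * C₁ + 1) * 3) := by
  intro n M hn hM χ K S hf hb havoid
  set q := 2 * n * M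
  have hqpos : 0 < q := by positivity
  have hMq : M ≤ q := Nat.le_mul_of_pos_left _ (by omega)
  have hnq : 2 * n ≤ q := Nat.le_mul_of_pos_right _ hM
  set B := q ^ ((C₂ + 1) * C₁ + 1) with hB
  have hcard : #S ≤ 2 ^ 11 * n ^ 5 * B ^ 3 := by
    refine card_le_of_forall_threshold hn (by positivity) hf hb ?_ ?_
    · intro t T hT hlow hhigh
      calc #T ≤ q ^ ((C₂ + 1) * C₁) :=
            h₁.card_le_of_isLow_of_isHigh h₂ hn hM (hf.mono Subset.rfl hT) (hb.mono Subset.rfl hT)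
              (fun U hU => havoid U (hU.trans hT)) hlow hhigh
        _ ≤ B := Nat.pow_le_pow_right hqpos (Nat.le_succ _)
    · exact fun T hT hTK => ((havoid T hT hTK).trans hMq).trans (Nat.le_self_pow (by omega) q)
  calc #S ≤ 2 ^ 11 * n ^ 5 * B ^ 3 := hcard
    _ ≤ 2 ^ 11 * n ^ 11 * B ^ 3 := by gcongr; omega
    _ = (2 * n) ^ 11 * B ^ 3 := by rw [mul_pow]
    _ ≤ q ^ 11 * B ^ 3 := by gcongr
    _ = q ^ (11 + ((C₂ + 1) * C₁ + 1) * 3) := by rw [hB, ← pow_mul, ← pow_add]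

theorem exists_powerBound (a b : ℕ) :
    ∃ C, ∀ (α : Type*) [LinearOrder α], PowerBound α a b C := by
  induction a generalizing b with
  | zero => exact ⟨1, fun _ _ => powerBound_zero_left⟩
  | succ a iha =>
    induction b with
    | zero => exact ⟨1, fun _ _ => powerBound_zero_right⟩
    | succ b ihb =>
      obtain ⟨C₁, h₁⟩ := iha (b + 1)
      obtain ⟨C₂, h₂⟩ := ihb
      exact ⟨_, fun α _ => (h₁ α).succ (h₂ α)⟩

theorem PowerBound.exists_hasForwardChain_or_hasBackwardChain [Fintype α] {C : ℕ}
    (hC : PowerBound α a b C) (hn : 0 < n) (hcard : (2 * n) ^ C < Fintype.card α)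
    (χ : α → α → Fin n) :
    ∃ c, HasForwardChain χ a c univ ∨ HasBackwardChain χ b c univ := by
  by_contra! hno
  have havoid : ∀ T ⊆ univ, Avoids χ univ T → #T ≤ 1 := by
    intro T _ hT
    refine card_le_one.2 fun x hx y hy => by_contra fun hne => ?_
    rcases lt_or_gt_of_ne hne with hxy | hyx
    exacts [hT hx hy hne ⟨hxy, mem_univ _⟩, hT hy hx (Ne.symm hne) ⟨hyx, mem_univ _⟩]
  have hle := hC hn one_pos (fun c _ => (hno c).1) (fun c _ => (hno c).2) havoid
  rw [card_univ, mul_one] at hle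
  exact hcard.not_ge hle

end Recursion

theorem two_mul_pow_lt {n : ℕ} (hn : 0 < n) (C : ℕ) :
    (2 * n) ^ C < (2 ^ C + 1) * n ^ (2 ^ C + 1) := by
  have hC : C ≤ 2 ^ C + 1 := Nat.lt_two_pow_self.le.trans (Nat.le_succ _)
  calc (2 * n) ^ C = 2 ^ C * n ^ C := mul_pow _ _ _
    _ < (2 ^ C + 1) * n ^ C := Nat.mul_lt_mul_of_pos_right (Nat.lt_succ_self _) (Nat.pow_pos hn)
    _ ≤ (2 ^ C + 1) * n ^ (2 ^ C + 1) := Nat.mul_le_mul_left _ (Nat.pow_le_pow_right hn hC)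

theorem exists_antitone_pred {κ : Type*} [Preorder κ] {s : ℕ} {d : Fin s → κ}
    (hd : Antitone d) :
    ∃ c : Fin s → κ, Antitone c ∧ ∀ j : Fin s, 0 < (j : ℕ) → c ⟨j - 1, by omega⟩ = d j := by
  refine ⟨fun i => d ⟨min (i + 1) (s - 1), by omega⟩, fun i j hij => hd ?_, fun j hj => ?_⟩
  · have := Fin.le_def.1 hij
    exact Fin.le_def.2 (by simp only; omega)
  · exact congrArg d (Fin.ext (by simp only; omega))

/-- ordered canonical Ramsey theorem: for every `s ≥ 2` there is a
constant `C = C(s)` such that for every `n ≥ 1` and every coloring `χ` of the pairs of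
`{1, …, N}` (given as `χ x y` for `x < y`) by colors in `{1, …, n}` (modeled as `Fin n`),
with `N ≥ C · n^C`, there is a lexicographic set `x_1 < … < x_s` (given by a strictly
monotone `f`) with colors `c_1 ≥ c_2 ≥ … ≥ c_{s−1}`: either `χ(x_i, x_j) = c_i` for all
`i < j` (forward) or `χ(x_i, x_j) = c_{j−1}` for all `i < j` (backward).
Here the colors are modeled as a non-increasing `c : Fin s → Fin n`, where in 0-indexed
form the forward condition reads `χ (f i) (f j) = c i` and the backward condition reads
`χ (f i) (f j) = c (j − 1)`; the value of `c` at the last index is unconstrained. -/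
theorem stmt4 (s : ℕ) (hs : 2 ≤ s) :
    ∃ C : ℕ, ∀ n N : ℕ, 1 ≤ n → C * n ^ C ≤ N →
      ∀ χ : Fin N → Fin N → Fin n,
        ∃ f : Fin s → Fin N, StrictMono f ∧
          ∃ c : Fin s → Fin n,
            (∀ i j : Fin s, i ≤ j → c j ≤ c i) ∧
            ((∀ i j : Fin s, i < j → χ (f i) (f j) = c i) ∨
             (∀ i j : Fin s, i < j →
                χ (f i) (f j) = c ⟨(j : ℕ) - 1, lt_of_le_of_lt (Nat.sub_le _ _) j.isLt⟩)) := by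
  obtain ⟨C, hC⟩ := exists_powerBound s s
  refine ⟨2 ^ C + 1, fun n N hn hN χ => ?_⟩
  have hcard : (2 * n) ^ C < Fintype.card (Fin N) := by
    simpa only [Fintype.card_fin] using (two_mul_pow_lt hn C).trans_le hN
  obtain ⟨_, hforward | hbackward⟩ :=
    (hC (Fin N)).exists_hasForwardChain_or_hasBackwardChain hn hcard χ
  · obtain ⟨f, hf, c, hc, hcolor⟩ := hforward.exists_strictMono
    exact ⟨f, hf, c, fun _ _ hij => hc hij, Or.inl hcolor⟩
  · obtain ⟨f, hf, d, hd, hcolor⟩ := hbackward.exists_strictMono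
    obtain ⟨c, hc, hcd⟩ := exists_antitone_pred hd
    refine ⟨f, hf, c, fun _ _ hij => hc hij, Or.inr fun i j hij => ?_⟩
    rw [hcolor i j hij, hcd j (Nat.zero_lt_of_lt hij)]
end

section
/- For all integers s ≥ 2 and n ≥ 3, the ordered Ramsey number satisfies R_<(K_s^{(3)}, P_n^{(3)}) ≤ g(n−2, s). -/
/-- A triple `x < y < z` is non-increasing (w.r.t. a pair-coloring `χ`, queried as
`χ x y` for `x < y`) if `χ(x,y) ≥ χ(y,z)` and moreover `χ(x,z) = χ(x,y)` or
`χ(x,z) = χ(y,z)`. -/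
def NonIncTriple {N n : ℕ} (χ : Fin N → Fin N → Fin n) (x y z : Fin N) : Prop :=
  χ y z ≤ χ x y ∧ (χ x z = χ x y ∨ χ x z = χ y z)

/-- Every coloring of the pairs of `{1, …, N}` by `n` colors admits a non-increasing
set of size `s`. -/
def HasNonIncSet (n N s : ℕ) : Prop :=
  ∀ χ : Fin N → Fin N → Fin n,
    ∃ f : Fin s → Fin N, StrictMono f ∧
      ∀ i j k : Fin s, i < j → j < k → NonIncTriple χ (f i) (f j) (f k)

/-- `g(n, s)`: the minimum `N` such that every coloring of the pairs of `{1, …, N}` by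
`n` colors admits a non-increasing set of size `s`. -/
noncomputable def gFun (n s : ℕ) : ℕ := sInf {N | HasNonIncSet n N s}

/-!
Color a pair `x < y` by the length of a longest blue tight path ending in `x, y`. If `x < y < z`
and the triple `x, y, z` is blue, then such a path can be prolonged by `z`, so the color of `(y, z)`
exceeds that of `(x, y)`. Hence every triple of a non-increasing set is red. Without a blue
`P_n^(3)` only the lengths `0, …, n - 3` occur, which is `n - 2` colors.

As `g(n, s)` is an infimum in `ℕ`, which is `0` on the empty set, it must also be shown that
non-increasing sets of size `s` exist for large `N`: monochromatic sets are non-increasing, so this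
follows from the finite Ramsey theorem for graphs.
-/

section Ramsey

open Finset

variable {α κ : Type*} [LinearOrder α] [Fintype κ]

theorem exists_subset_color_eq_of_pow_le_card (c : α → α → κ) (r : ℕ) {S : Finset α}
    (hS : (Fintype.card κ + 1) ^ r ≤ #S) :
    ∃ T ⊆ S, #T = r ∧ ∃ a : α → κ, ∀ x ∈ T, ∀ y ∈ T, x < y → c x y = a x := by
  classical
  induction r generalizing S with
  | zero => exact ⟨∅, empty_subset S, card_empty, fun x => c x x, by simp⟩
  | succ r ih =>
    have hpow : 0 < (Fintype.card κ + 1) ^ r := by positivity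
    rw [pow_succ'] at hS
    have hne : S.Nonempty := card_pos.mp (by nlinarith)
    set m := S.min' hne
    have herase : #(S.erase m) + 1 = #S := card_erase_add_one (S.min'_mem hne)
    obtain ⟨b, -, hb⟩ := exists_le_card_fiber_of_mul_le_card_of_maps_to
      (fun x _ => mem_univ (c m x)) ⟨c m m, mem_univ _⟩
      (show #(univ : Finset κ) * (Fintype.card κ + 1) ^ r ≤ #(S.erase m) by
        rw [card_univ]; linarith)
    obtain ⟨T, hT, hTcard, a, ha⟩ := ih hb
    have hTerase : T ⊆ S.erase m := hT.trans (filter_subset _ _)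
    have hm_lt : ∀ y ∈ T, m < y := fun y hy => S.min'_lt_of_mem_erase_min' hne (hTerase hy)
    have hmT : m ∉ T := fun h => (hm_lt m h).false
    refine ⟨insert m T, insert_subset (S.min'_mem hne) (hTerase.trans (erase_subset m S)),
      by rw [card_insert_of_notMem hmT, hTcard], Function.update a m b, fun x hx y hy hxy => ?_⟩
    have hy' : y ∈ T := (mem_insert.mp hy).resolve_left fun hym => by
      rcases mem_insert.mp hx with rfl | hx
      · exact hxy.ne' hym
      · exact (hm_lt x hx).asymm (hym ▸ hxy)
    rcases mem_insert.mp hx with rfl | hx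
    · rw [Function.update_self]
      exact (mem_filter.mp (hT hy')).2
    · rw [Function.update_of_ne (hm_lt x hx).ne']
      exact ha x hx y hy' hxy

theorem exists_subset_monochromatic_of_pow_le_card (c : α → α → κ) (s : ℕ) {S : Finset α}
    (hS : (Fintype.card κ + 1) ^ (Fintype.card κ * s) ≤ #S) :
    ∃ T ⊆ S, s ≤ #T ∧ ∃ b : κ, ∀ x ∈ T, ∀ y ∈ T, x < y → c x y = b := by
  classical
  obtain ⟨x, -⟩ : S.Nonempty := card_pos.mp (lt_of_lt_of_le (by positivity) hS)
  obtain ⟨T, hTS, hT, a, ha⟩ := exists_subset_color_eq_of_pow_le_card c _ hS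
  obtain ⟨b, -, hb⟩ := exists_le_card_fiber_of_mul_le_card_of_maps_to
    (fun x _ => mem_univ (a x)) ⟨c x x, mem_univ _⟩ hT.ge
  refine ⟨{x ∈ T | a x = b}, (filter_subset _ T).trans hTS, hb, b, fun x hx y hy hxy => ?_⟩
  rw [mem_filter] at hx hy
  rw [ha x hx.1 y hy.1 hxy, hx.2]

end Ramsey

theorem hasNonIncSet_of_pow_le {m N s : ℕ} (hN : (m + 1) ^ (m * s) ≤ N) :
    HasNonIncSet m N s := by
  intro χ
  obtain ⟨T, -, hT, b, hb⟩ := exists_subset_monochromatic_of_pow_le_card χ s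
    (S := Finset.univ) (by simpa only [Fintype.card_fin, Finset.card_univ] using hN)
  let f := T.orderEmbOfCardLe hT
  have hf : ∀ i j, i < j → χ (f i) (f j) = b := fun i j hij =>
    hb _ (T.orderEmbOfCardLe_mem hT i) _ (T.orderEmbOfCardLe_mem hT j) (f.strictMono hij)
  refine ⟨f, f.strictMono, fun i j k hij hjk => ?_⟩
  rw [NonIncTriple, hf i j hij, hf j k hjk, hf i k (hij.trans hjk)]
  exact ⟨le_rfl, .inl rfl⟩

theorem hasNonIncSet_gFun (m s : ℕ) : HasNonIncSet m (gFun m s) s :=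
  Nat.sInf_mem (s := {N | HasNonIncSet m N s}) ⟨_, hasNonIncSet_of_pow_le le_rfl⟩

section TightPath

variable {α : Type*} [LT α] {B : α → α → α → Prop} {x y z : α} {k L : ℕ}

/-- `TightPathTo B x y k`: there is a monotone tight path with `k` edges, all of them in the
ternary relation `B`, whose last two vertices are `x < y`. A single pair counts as a path with
no edges. -/
inductive TightPathTo (B : α → α → α → Prop) : α → α → ℕ → Prop
  | pair {x y : α} : x < y → TightPathTo B x y 0
  | snoc {x y z : α} {k : ℕ} :
      TightPathTo B x y k → y < z → B x y z → TightPathTo B y z (k + 1)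

theorem TightPathTo.exists_seq (h : TightPathTo B x y k) :
    ∃ f : ℕ → α, (∀ i ≤ k, f i < f (i + 1)) ∧ (∀ i < k, B (f i) (f (i + 1)) (f (i + 2))) ∧
      f k = x ∧ f (k + 1) = y := by
  induction h with
  | @pair x y hxy =>
    refine ⟨fun i => if i = 0 then x else y, fun i hi => ?_, by simp, by simp, by simp⟩
    simpa [Nat.le_zero.mp hi] using hxy
  | @snoc x y z k _ hyz hB ih =>
    obtain ⟨f, hlt, hf, rfl, rfl⟩ := ih
    let g := Function.update f (k + 2) z
    have hg : ∀ i ≤ k + 1, g i = f i := fun i hi => Function.update_of_ne (by omega) _ _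
    have hg_last : g (k + 2) = z := Function.update_self _ _ _
    refine ⟨g, fun i hi => ?_, fun i hi => ?_, hg _ le_rfl, hg_last⟩
    · rcases hi.lt_or_eq with hi | rfl
      · rw [hg i hi.le, hg (i + 1) hi]
        exact hlt i (Nat.lt_succ_iff.mp hi)
      · rwa [hg _ le_rfl, hg_last]
    · rw [hg i hi.le, hg (i + 1) hi]
      rcases (Nat.lt_succ_iff.mp hi).lt_or_eq with hi | rfl
      · rw [hg (i + 2) (Nat.succ_le_succ hi)]
        exact hf i hi
      · rwa [hg_last]

open Classical in
/-- The pair coloring of the proof: the number of edges of a longest tight path in `B` ending in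
`x, y`, truncated at `L` so as to have values in `Fin (L + 1)`. -/
noncomputable def tightPathColor (B : α → α → α → Prop) (L : ℕ) (x y : α) : Fin (L + 1) :=
  ⟨Nat.findGreatest (TightPathTo B x y) L, Nat.lt_succ_of_le (Nat.findGreatest_le L)⟩

theorem tightPathTo_tightPathColor (B : α → α → α → Prop) (L : ℕ) (hxy : x < y) :
    TightPathTo B x y (tightPathColor B L x y) := by
  classical
  exact Nat.findGreatest_spec (Nat.zero_le L) (.pair hxy)

theorem TightPathTo.le_tightPathColor (h : TightPathTo B x y k) (hk : k ≤ L) :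
    k ≤ (tightPathColor B L x y : ℕ) := by
  classical
  exact Nat.le_findGreatest hk h

theorem tightPathColor_lt_tightPathColor (hL : ∀ x y, ¬ TightPathTo B x y (L + 1))
    (hxy : x < y) (hyz : y < z) (hB : B x y z) :
    tightPathColor B L x y < tightPathColor B L y z := by
  have hsnoc : TightPathTo B y z (tightPathColor B L x y + 1) :=
    (tightPathTo_tightPathColor B L hxy).snoc hyz hB
  have hne : (tightPathColor B L x y : ℕ) ≠ L := fun h => hL y z (h ▸ hsnoc)
  exact hsnoc.le_tightPathColor (by omega)

end TightPath

theorem TightPathTo.containsBlueTightPath {N L : ℕ} {χ : Fin N → Fin N → Fin N → Bool}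
    {x y : Fin N} (h : TightPathTo (χ · · · = false) x y L) :
    ContainsBlueTightPath N (L + 2) χ := by
  obtain ⟨f, hlt, hblue, -, -⟩ := h.exists_seq
  exact ⟨fun i => f i, Fin.strictMono_iff_lt_succ.mpr fun i => hlt i (Nat.lt_succ_iff.mp i.isLt),
    fun i hi => hblue i (by omega)⟩

theorem HasNonIncSet.containsRedClique3_or_containsBlueTightPath {L N s : ℕ}
    (h : HasNonIncSet (L + 1) N s) (χ : Fin N → Fin N → Fin N → Bool) :
    ContainsRedClique3 N s χ ∨ ContainsBlueTightPath N (L + 3) χ := by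
  refine or_iff_not_imp_right.mpr fun hpath => ?_
  have hL : ∀ x y, ¬ TightPathTo (χ · · · = false) x y (L + 1) :=
    fun x y hxy => hpath hxy.containsBlueTightPath
  obtain ⟨f, hf, hnoninc⟩ := h (tightPathColor (χ · · · = false) L)
  refine ⟨f, hf, fun i j k hij hjk => Bool.eq_true_of_not_eq_false fun hblue => ?_⟩
  exact (tightPathColor_lt_tightPathColor hL (hf hij) (hf hjk) hblue).not_ge
    (hnoninc i j k hij hjk).1

/-- `R_<(K_s^(3), P_n^(3)) ≤ g(n − 2, s)` for `s ≥ 2`, `n ≥ 3`. -/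
theorem stmt5 (s n : ℕ) (hs : 2 ≤ s) (hn : 3 ≤ n) :
    ordRamsey3 s n ≤ gFun (n - 2) s := by
  obtain ⟨L, rfl⟩ := Nat.exists_eq_add_of_le' hn
  have hg : HasNonIncSet (L + 1) (gFun (L + 1) s) s := hasNonIncSet_gFun (L + 1) s
  exact Nat.sInf_le hg.containsRedClique3_or_containsBlueTightPath
end

section
/- For every integer s ≥ 2, there is a constant C = C(s) such that g(n, s) ≤ C · n^C for every n ≥ 1. -/
/-!
A set is built by repeatedly choosing points `x < z` and a large set `T` between them such that all
pairs `(x, y)` with `y ∈ T` have one color `a` and all pairs `(y, z)` have one color `b ≤ a`. A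
non-increasing subset of `T` whose colors are at most `a` can then be extended by `x`, and one whose
colors exceed `a` can be extended by `z`. Which of the two cases occurs is not under control, so the
colors are partitioned into classes, each with its own target size: if `a` and `b` lie in the same
class, that class is split at `a` and the target size of both parts is one less than before.
Splitting decreases `∑ 3 ^ (target size)`, so the process ends after a number of rounds independent
of the number of colors. Each round costs only a polynomial factor: vertices are sorted by the
threshold, in each color class, above which they have many neighbors of smaller or equal color, and
there are only `(n + 1) ^ (number of classes)` possible threshold vectors.
-/

open Finset Function

universe u v w

section NonIncOn

variable {α : Type u} {κ : Type v} [Preorder α] [Preorder κ] {χ : α → α → κ} {A B : Set κ}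
  {W : Set α}

/-- `W` is a non-increasing set for the pair-coloring `χ`, and all its pairs have colors in `A`.
This is the notion of the theorem for arbitrary orders on the vertices and colors; as there,
`χ x y` is only relevant for `x < y`. -/
structure NonIncOn (χ : α → α → κ) (A : Set κ) (W : Set α) : Prop where
  color_mem : ∀ ⦃x⦄, x ∈ W → ∀ ⦃y⦄, y ∈ W → x < y → χ x y ∈ A
  color_le : ∀ ⦃x⦄, x ∈ W → ∀ ⦃y⦄, y ∈ W → ∀ ⦃z⦄, z ∈ W → x < y → y < z → χ y z ≤ χ x y
  color_eq_or_eq : ∀ ⦃x⦄, x ∈ W → ∀ ⦃y⦄, y ∈ W → ∀ ⦃z⦄, z ∈ W → x < y → y < z →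
    χ x z = χ x y ∨ χ x z = χ y z

namespace NonIncOn

theorem empty : NonIncOn χ A ∅ where
  color_mem := by simp
  color_le := by simp
  color_eq_or_eq := by simp

theorem mono (h : NonIncOn χ A W) (hAB : A ⊆ B) : NonIncOn χ B W :=
  { h with color_mem := fun _ hx _ hy hxy ↦ hAB (h.color_mem hx hy hxy) }

theorem insert_left {x : α} {a : κ} (h : NonIncOn χ A W) (hlt : ∀ y ∈ W, x < y)
    (hcolor : ∀ y ∈ W, χ x y = a) (ha : a ∈ upperBounds A) :
    NonIncOn χ (insert a A) (insert x W) := by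
  obtain ⟨hmem, hle, heq⟩ := h
  simp only [mem_upperBounds] at ha
  -- In a triple starting at `x`, both pairs containing `x` have the largest color `a`.
  constructor <;> grind

theorem insert_right {z : α} {b : κ} (h : NonIncOn χ A W) (hlt : ∀ y ∈ W, y < z)
    (hcolor : ∀ y ∈ W, χ y z = b) (hb : b ∈ lowerBounds A) :
    NonIncOn χ (insert b A) (insert z W) := by
  obtain ⟨hmem, hle, heq⟩ := h
  simp only [mem_lowerBounds] at hb
  constructor <;> grind

end NonIncOn

theorem gFun_le_of_forall_exists_nonIncOn {n N s : ℕ}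
    (h : ∀ χ : Fin N → Fin N → Fin n, ∃ W : Finset (Fin N), #W = s ∧ NonIncOn χ Set.univ W) :
    gFun n s ≤ N := by
  refine Nat.sInf_le fun χ ↦ ?_
  obtain ⟨W, hWs, hW⟩ := h χ
  have hf (i : Fin s) : W.orderEmbOfFin hWs i ∈ (W : Set (Fin N)) := W.orderEmbOfFin_mem hWs i
  have hmono := (W.orderEmbOfFin hWs).strictMono
  exact ⟨_, hmono, fun i j k hij hjk ↦
    ⟨hW.color_le (hf i) (hf j) (hf k) (hmono hij) (hmono hjk),
      hW.color_eq_or_eq (hf i) (hf j) (hf k) (hmono hij) (hmono hjk)⟩⟩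

end NonIncOn

section Threshold

variable {α : Type u} {κ : Type v} {ι : Type w} [LinearOrder α] [LinearOrder κ] [DecidableEq ι]
  {χ : α → α → κ} {cls : κ → ι} {Y : Finset α} {x y : α} {c d : κ} {E : ℕ}

/-- The right neighbors of `y` in `Y` along pairs whose color is at most `c` and lies in the same
class as `c`. If there are many of them for `c = χ x y`, then `y` can be the middle point of many
paths from `x` whose second color is at most the first. -/
def lowNbrs (χ : α → α → κ) (cls : κ → ι) (Y : Finset α) (y : α) (c : κ) : Finset α :=
  {z ∈ Y | y < z ∧ cls (χ y z) = cls c ∧ χ y z ≤ c}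

theorem lowNbrs_subset : lowNbrs χ cls Y y c ⊆ Y :=
  filter_subset _ _

theorem lowNbrs_subset_lowNbrs (hcls : cls c = cls d) (hcd : c ≤ d) :
    lowNbrs χ cls Y y c ⊆ lowNbrs χ cls Y y d := by
  intro z
  simp only [lowNbrs, mem_filter, hcls]
  exact fun ⟨hz, hyz, hcls, hle⟩ ↦ ⟨hz, hyz, hcls, hle.trans hcd⟩

variable [Fintype κ]

/-- The least color `c` of class `i` for which `y` has at least `E` neighbors in
`lowNbrs χ cls Y y c`, or `⊤` if there is none. The threshold vectors `threshold χ cls Y E y`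
are what the first pigeonhole argument is applied to. -/
def threshold (χ : α → α → κ) (cls : κ → ι) (Y : Finset α) (E : ℕ) (y : α) (i : ι) : WithTop κ :=
  Finset.min {c | cls c = i ∧ E ≤ #(lowNbrs χ cls Y y c)}

theorem threshold_le_iff :
    threshold χ cls Y E y (cls c) ≤ c ↔ E ≤ #(lowNbrs χ cls Y y c) := by
  refine ⟨fun h ↦ ?_, fun h ↦ min_le (by simpa using h)⟩
  obtain ⟨d, hd, hdc⟩ := WithTop.le_coe_iff.1 h
  obtain ⟨hcls, hE⟩ : cls d = cls c ∧ E ≤ #(lowNbrs χ cls Y y d) := by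
    simpa using mem_of_min hd
  exact hE.trans (card_le_card (lowNbrs_subset_lowNbrs hcls hdc))

theorem card_filter_card_lowNbrs_lt_le :
    #{y ∈ Y | x < y ∧ #(lowNbrs χ cls Y x (χ x y)) < E} ≤ (E - 1) * Fintype.card κ := by
  refine card_le_mul_card_image_of_maps_to (f := χ x) (fun _ _ ↦ mem_univ _) _ fun c _ ↦ ?_
  by_cases hc : #(lowNbrs χ cls Y x c) < E
  · refine (card_le_card fun y hy ↦ ?_).trans (Nat.le_sub_one_of_lt hc)
    simp only [mem_filter] at hy
    simp [lowNbrs, hy]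
  · refine (Finset.card_eq_zero.2 ?_).trans_le (Nat.zero_le _)
    simp only [filter_filter, filter_eq_empty_iff]
    rintro y - ⟨⟨-, hy⟩, rfl⟩
    exact hc hy

theorem exists_forall_le_card_lowNbrs [Fintype ι] (hE : 0 < E)
    (hY : (Fintype.card κ + 1) ^ Fintype.card ι * ((Fintype.card κ + 1) * E) ≤ #Y) :
    ∃ x ∈ Y, ∃ S ⊆ Y, E ≤ #S ∧ ∀ y ∈ S, x < y ∧ E ≤ #(lowNbrs χ cls Y y (χ x y)) := by
  have hcard : Fintype.card (WithTop κ) = Fintype.card κ + 1 := Fintype.card_option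
  obtain ⟨v, -, hv⟩ := exists_le_card_fiber_of_mul_le_card_of_maps_to
    (f := threshold χ cls Y E) (fun _ _ ↦ mem_univ _) univ_nonempty
    (by rwa [card_univ, Fintype.card_fun, hcard])
  set V := {y ∈ Y | threshold χ cls Y E y = v}
  have hV : V.Nonempty := card_pos.1 (lt_of_lt_of_le (by positivity) hv)
  set x := V.min' hV
  have hx : x ∈ V := V.min'_mem hV
  have hκ : 0 < Fintype.card κ := Fintype.card_pos_iff.2 ⟨χ x x⟩
  set light := {y ∈ Y | x < y ∧ #(lowNbrs χ cls Y x (χ x y)) < E}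
  have hlight : #light ≤ (E - 1) * Fintype.card κ := card_filter_card_lowNbrs_lt_le
  refine ⟨x, mem_of_mem_filter x hx, V.erase x \ light, ?_, ?_, fun y hy ↦ ?_⟩
  · exact sdiff_subset.trans ((erase_subset _ _).trans (filter_subset _ _))
  · have hsdiff := le_card_sdiff light (V.erase x)
    rw [card_erase_of_mem hx] at hsdiff
    obtain ⟨e, rfl⟩ := Nat.exists_eq_succ_of_ne_zero hE.ne'
    simp only [Nat.succ_eq_add_one, Nat.add_sub_cancel] at hlight hv ⊢
    linarith [tsub_le_iff_right.1 (tsub_le_iff_right.1 hsdiff)]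
  · obtain ⟨⟨hyx, hyV⟩, hyl⟩ : (y ≠ x ∧ y ∈ V) ∧ y ∉ light := by simpa using hy
    have hxy : x < y := (V.min'_le y hyV).lt_of_ne' hyx
    have hthreshold : threshold χ cls Y E y = threshold χ cls Y E x :=
      (mem_filter.1 hyV).2.trans (mem_filter.1 hx).2.symm
    have hheavy : E ≤ #(lowNbrs χ cls Y x (χ x y)) :=
      not_lt.1 fun h ↦ hyl (mem_filter.2 ⟨mem_of_mem_filter y hyV, hxy, h⟩)
    rw [← threshold_le_iff, ← hthreshold, threshold_le_iff] at hheavy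
    exact ⟨hxy, hheavy⟩

end Threshold

section Sandwich

variable {α : Type u} {κ : Type v} {ι : Type w} [LinearOrder α] {χ : α → α → κ} {cls : κ → ι}
  {S T W Y : Finset α} {x z : α} {a b : κ}

/-- All points of `T` lie strictly between `x` and `z`, see `x` in color `a`, and see `z` in
color `b`. For suitable color classes, a non-increasing subset of `T` then extends by `x` or by
`z`. -/
structure IsSandwich (χ : α → α → κ) (x z : α) (a b : κ) (T : Finset α) : Prop where
  left_lt : ∀ y ∈ T, x < y
  lt_right : ∀ y ∈ T, y < z
  color_left : ∀ y ∈ T, χ x y = a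
  color_right : ∀ y ∈ T, χ y z = b

theorem IsSandwich.mono (h : IsSandwich χ x z a b T) (hWT : W ⊆ T) : IsSandwich χ x z a b W where
  left_lt y hy := h.left_lt y (hWT hy)
  lt_right y hy := h.lt_right y (hWT hy)
  color_left y hy := h.color_left y (hWT hy)
  color_right y hy := h.color_right y (hWT hy)

variable [LinearOrder κ] [Fintype κ]

theorem exists_isSandwich_of_forall_le_card_lowNbrs [DecidableEq ι] {E t : ℕ}
    (ht : 0 < t) (hY : Y.Nonempty)
    (hcard : #Y * (Fintype.card κ * Fintype.card κ * t) ≤ #S * E)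
    (hS : ∀ y ∈ S, x < y ∧ E ≤ #(lowNbrs χ cls Y y (χ x y))) :
    ∃ z ∈ Y, ∃ a b, cls a = cls b ∧ b ≤ a ∧ ∃ T ⊆ S, t ≤ #T ∧ IsSandwich χ x z a b T := by
  obtain ⟨z, hz, hzcard⟩ : ∃ z ∈ Y, Fintype.card κ * Fintype.card κ * t ≤
      #{y ∈ S | z ∈ lowNbrs χ cls Y y (χ x y)} := by
    by_contra! hlt
    refine hcard.not_gt (card_nsmul_lt_card_nsmul_of_le_of_lt
      (fun y z ↦ z ∈ lowNbrs χ cls Y y (χ x y)) hY (fun y hy ↦ ?_) hlt)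
    rw [bipartiteAbove, filter_mem_eq_inter, inter_eq_right.2 lowNbrs_subset]
    exact (hS y hy).2
  obtain ⟨⟨a, b⟩, -, hT⟩ := exists_le_card_fiber_of_mul_le_card_of_maps_to
    (f := fun y ↦ (χ x y, χ y z)) (fun _ _ ↦ mem_univ _) ⟨(χ x z, χ x z), mem_univ _⟩
    (by rwa [card_univ, Fintype.card_prod])
  set T := {y ∈ {y ∈ S | z ∈ lowNbrs χ cls Y y (χ x y)} | (χ x y, χ y z) = (a, b)}
  have hmem : ∀ y ∈ T, y ∈ S ∧ y < z ∧ cls a = cls b ∧ b ≤ a ∧ χ x y = a ∧ χ y z = b := by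
    intro y hy
    simp only [T, lowNbrs, mem_filter, Prod.mk.injEq] at hy
    grind
  obtain ⟨y, hy⟩ : T.Nonempty := card_pos.1 (ht.trans_le hT)
  obtain ⟨-, -, hcls, hba, -⟩ := hmem y hy
  refine ⟨z, hz, a, b, hcls, hba, T, fun y hy ↦ (hmem y hy).1, hT, ?_⟩
  constructor <;> grind

theorem exists_isSandwich [Fintype ι] {t : ℕ} (χ : α → α → κ) (cls : κ → ι) (ht : 0 < t)
    (hY : (Fintype.card κ + 1) ^ (2 * Fintype.card ι + 4) * t ≤ #Y) :
    ∃ x ∈ Y, ∃ z ∈ Y, ∃ a b, cls a = cls b ∧ b ≤ a ∧ ∃ T ⊆ Y, t ≤ #T ∧ IsSandwich χ x z a b T := by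
  classical
  obtain ⟨Z, hZY, hZ⟩ := exists_subset_card_eq hY
  set n := Fintype.card κ
  set k := Fintype.card ι
  set E := (n + 1) ^ (k + 3) * t
  obtain ⟨x, hx, S, hSZ, hScard, hS⟩ := exists_forall_le_card_lowNbrs (χ := χ) (cls := cls) (Y := Z)
    (E := E) (by positivity) (le_of_eq (by rw [hZ]; ring))
  have hcount : #Z * (n * n * t) ≤ #S * E := calc
    #Z * (n * n * t) ≤ #Z * ((n + 1) * (n + 1) * t) := by gcongr <;> exact n.le_succ
    _ = E * E := by rw [hZ]; ring
    _ ≤ #S * E := by gcongr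
  obtain ⟨z, hz, a, b, hcls, hba, T, hTS, hT, hsandwich⟩ :=
    exists_isSandwich_of_forall_le_card_lowNbrs ht ⟨x, hx⟩ hcount hS
  exact ⟨x, hZY hx, z, hZY hz, a, b, hcls, hba, T, hTS.trans (hSZ.trans hZY), hT, hsandwich⟩

end Sandwich

section Split

variable {κ : Type v} {ι : Type w} [LinearOrder κ] [DecidableEq ι] {cls : κ → ι} {a c : κ}

/-- The partition of the colors obtained from `cls` by splitting the class of `a`: its colors
greater than `a` form the new class `none`, and the rest of each class `i` becomes
class `some i`. -/
def splitClass (cls : κ → ι) (a c : κ) : Option ι :=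
  if cls c = cls a ∧ a < c then none else some (cls c)

/-- The target sizes after splitting class `i`: both parts get one less than `sz i`, which is
meant for `sz i ≠ 0`. -/
def splitSize (sz : ι → ℕ) (i : ι) (o : Option ι) : ℕ :=
  o.elim (sz i - 1) (update sz i (sz i - 1))

theorem splitClass_eq_none_iff : splitClass cls a c = none ↔ cls c = cls a ∧ a < c := by
  simp [splitClass]

theorem splitClass_eq_some_iff {j : ι} :
    splitClass cls a c = some j ↔ cls c = j ∧ (j = cls a → c ≤ a) := by
  grind [splitClass]

theorem sum_three_pow_splitSize_lt [Fintype ι] {sz : ι → ℕ} {i : ι} (hi : sz i ≠ 0) :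
    ∑ o, 3 ^ splitSize sz i o < ∑ j, 3 ^ sz j := by
  obtain ⟨m, hm⟩ := Nat.exists_eq_succ_of_ne_zero hi
  have hupdate : ∑ j, 3 ^ update sz i m j = 3 ^ m + ∑ j ∈ univ \ {i}, 3 ^ sz j := by
    simp only [apply_update (fun _ e ↦ 3 ^ e)]
    exact sum_update_of_mem (mem_univ i) _ _
  have hsum : ∑ j, 3 ^ sz j = 3 ^ (m + 1) + ∑ j ∈ univ \ {i}, 3 ^ sz j := by
    rw [← Nat.succ_eq_add_one, ← hm]
    exact sum_eq_add_sum_sdiff_singleton_of_mem (mem_univ i) _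
  have hpos : 0 < 3 ^ m := by positivity
  simp only [Fintype.sum_option, splitSize, Option.elim, hm, Nat.succ_sub_one]
  rw [hupdate, hsum, pow_succ]
  omega

variable {α : Type u} [LinearOrder α] {χ : α → α → κ} {W : Finset α} {x z : α} {b : κ}

theorem IsSandwich.exists_nonIncOn_of_splitClass {sz : ι → ℕ} {o : Option ι}
    (h : IsSandwich χ x z a b W) (hcls : cls a = cls b) (hba : b ≤ a) (hsz : sz (cls a) ≠ 0)
    (hcard : #W = splitSize sz (cls a) o) (hW : NonIncOn χ (splitClass cls a ⁻¹' {o}) W) :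
    ∃ i, ∃ W' ⊆ insert x (insert z W), #W' = sz i ∧ NonIncOn χ (cls ⁻¹' {i}) W' := by
  rcases o with _ | j
  · have hzW : z ∉ W := fun hz ↦ (h.lt_right z hz).false
    refine ⟨cls a, insert z W, subset_insert _ _, ?_, ?_⟩
    · rw [card_insert_of_notMem hzW, hcard]
      exact Nat.sub_one_add_one hsz
    · have hinsert := hW.insert_right h.lt_right h.color_right
        fun c hc ↦ hba.trans (splitClass_eq_none_iff.1 hc).2.le
      rw [coe_insert]
      exact hinsert.mono (Set.insert_subset hcls.symm fun c hc ↦ (splitClass_eq_none_iff.1 hc).1)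
  · have hsome (c) (hc : c ∈ splitClass cls a ⁻¹' {some j}) := splitClass_eq_some_iff.1 hc
    obtain rfl | hj := eq_or_ne j (cls a)
    · have hxW : x ∉ W := fun hx ↦ (h.left_lt x hx).false
      refine ⟨cls a, insert x W, insert_subset_insert _ (subset_insert _ _), ?_, ?_⟩
      · rw [card_insert_of_notMem hxW, hcard, splitSize, Option.elim, update_self]
        exact Nat.sub_one_add_one hsz
      · have hinsert := hW.insert_left h.left_lt h.color_left fun c hc ↦ (hsome c hc).2 rfl
        rw [coe_insert]
        exact hinsert.mono (Set.insert_subset rfl fun c hc ↦ (hsome c hc).1)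
    · refine ⟨j, W, (subset_insert _ _).trans (subset_insert _ _), ?_, ?_⟩
      · rw [hcard, splitSize, Option.elim, update_of_ne hj]
      · exact hW.mono fun c hc ↦ (hsome c hc).1

end Split

theorem exists_nonIncOn_class_of_pow_le_card {ι : Type w} [Finite ι] (sz : ι → ℕ) :
    ∃ D : ℕ, ∀ {α : Type u} {κ : Type v} [LinearOrder α] [LinearOrder κ] [Fintype κ]
      (χ : α → α → κ) (cls : κ → ι) (Y : Finset α), (Fintype.card κ + 1) ^ D ≤ #Y →
        ∃ i, ∃ W ⊆ Y, #W = sz i ∧ NonIncOn χ (cls ⁻¹' {i}) W := by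
  classical
  cases nonempty_fintype ι
  induction hM : ∑ i, 3 ^ sz i using Nat.strong_induction_on generalizing ι with | _ M ih
  by_cases hsz : ∃ i, sz i = 0
  · obtain ⟨i, hi⟩ := hsz
    exact ⟨0, fun _ _ _ _ ↦ ⟨i, ∅, empty_subset _, hi.symm, by simpa using NonIncOn.empty⟩⟩
  push Not at hsz
  choose D hD using fun i ↦
    ih _ (hM ▸ sum_three_pow_splitSize_lt (hsz i)) (splitSize sz i) inferInstance rfl
  refine ⟨2 * Fintype.card ι + 4 + ∑ i, D i, fun {α κ} _ _ _ χ cls Y hY ↦ ?_⟩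
  rw [pow_add] at hY
  obtain ⟨x, hx, z, hz, a, b, hcls, hba, T, hTY, hT, hsandwich⟩ :=
    exists_isSandwich χ cls (by positivity) hY
  have hDT : (Fintype.card κ + 1) ^ D (cls a) ≤ #T :=
    (Nat.pow_le_pow_right (Nat.succ_pos _) (single_le_sum_of_canonicallyOrdered (mem_univ _))).trans
      hT
  obtain ⟨o, W, hWT, hcard, hW⟩ := hD (cls a) χ (splitClass cls a) T hDT
  obtain ⟨i, W', hW', hcard', hnonInc⟩ :=
    (hsandwich.mono hWT).exists_nonIncOn_of_splitClass hcls hba (hsz _) hcard hW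
  exact ⟨i, W', hW'.trans (insert_subset hx (insert_subset hz (hWT.trans hTY))), hcard', hnonInc⟩

theorem stmt6_general (s : ℕ) :
    ∃ C : ℕ, ∀ {α : Type u} {κ : Type v} [LinearOrder α] [LinearOrder κ] [Fintype κ] [Nonempty κ]
      (χ : α → α → κ) (Y : Finset α), C * Fintype.card κ ^ C ≤ #Y →
        ∃ W ⊆ Y, #W = s ∧ NonIncOn χ Set.univ W := by
  obtain ⟨D, hD⟩ := exists_nonIncOn_class_of_pow_le_card.{u, v} fun _ : Unit ↦ s
  refine ⟨2 ^ D, fun {α κ} _ _ _ _ χ Y hY ↦ ?_⟩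
  have hn : 1 ≤ Fintype.card κ := Fintype.card_pos
  have hDY : (Fintype.card κ + 1) ^ D ≤ #Y := calc
    (Fintype.card κ + 1) ^ D ≤ (2 * Fintype.card κ) ^ D := by gcongr; omega
    _ = 2 ^ D * Fintype.card κ ^ D := mul_pow ..
    _ ≤ 2 ^ D * Fintype.card κ ^ 2 ^ D := by gcongr; exact Nat.lt_two_pow_self.le
    _ ≤ #Y := hY
  obtain ⟨_, W, hWY, hWs, hW⟩ := hD χ (fun _ ↦ ()) Y hDY
  exact ⟨W, hWY, hWs, hW.mono (Set.subset_univ _)⟩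

/-- for every `s ≥ 2` there is a constant `C = C(s)` such that
`g(n, s) ≤ C · n^C` for every `n ≥ 1`. -/
theorem stmt6 (s : ℕ) (hs : 2 ≤ s) :
    ∃ C : ℕ, ∀ n : ℕ, 1 ≤ n → gFun n s ≤ C * n ^ C := by
  obtain ⟨C, hC⟩ := stmt6_general s
  refine ⟨C, fun n hn ↦ gFun_le_of_forall_exists_nonIncOn fun χ ↦ ?_⟩
  have : Nonempty (Fin n) := ⟨⟨0, hn⟩⟩
  obtain ⟨W, -, hW⟩ := hC χ univ (by simp)
  exact ⟨W, hW⟩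
end
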